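/- arXiv:1106.3098 — 5 statements merged into one kernel-verified Lean document; each statement's English description precedes it below -/
import Mathlib

section
/- For every integer r ≥ 2 there exists a constant c > 0 such that every r-graph H on n ≥ 2 vertices with independent neighborhoods satisfies α(H) ≥ c·(n·log n)^{1/r}. -/
open Finset
open scoped Classical

/-- `Z` is an independent set of the hypergraph `H`: it contains no edge. -/
def IsIndep {V : Type*} [DecidableEq V] (H : Finset (Finset V)) (Z : Finset V) : Prop :=
  ∀ e ∈ H, ¬ e ⊆ Z

/-- The independence number of a hypergraph on a finite vertex type. -/
noncomputable def indepNum {V : Type*} [Fintype V] [DecidableEq V]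
    (H : Finset (Finset V)) : ℕ :=
  ((Finset.univ : Finset V).powerset.filter (fun Z => IsIndep H Z)).sup Finset.card

/-- `H` has maximum `r`-degree at most `d`: every `r`-element vertex set is
contained in at most `d` edges. -/
def maxDegLe {V : Type*} [DecidableEq V] (r : ℕ) (H : Finset (Finset V)) (d : ℕ) : Prop :=
  ∀ S : Finset V, S.card = r → (H.filter (fun e => S ⊆ e)).card ≤ d

/-- `H` (an `r`-graph) has independent neighborhoods: for every `(r−1)`-element set `S`
of vertices, the set `{v : S ∪ {v} ∈ H}` is independent. -/
def HasIndepNbhds {V : Type*} [Fintype V] [DecidableEq V] (r : ℕ)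
    (H : Finset (Finset V)) : Prop :=
  ∀ S : Finset V, S.card = r - 1 →
    IsIndep H ((Finset.univ : Finset V).filter (fun v => insert v S ∈ H))


section Local
variable {V : Type*} [DecidableEq V]

/-- truncated-degree counting: edges at `v` whose remaining vertices lie in `W` -/
noncomputable def dg (H : Finset (Finset V)) (W : Finset V) (v : V) : ℕ :=
  (H.filter (fun e => v ∈ e ∧ e.erase v ⊆ W)).card

/-- neighbourhood of `v` inside `U` -/
noncomputable def nb (H : Finset (Finset V)) (U : Finset V) (v : V) : Finset V :=
  U.filter (fun a => a ≠ v ∧ ∃ e ∈ H, e ⊆ U ∧ v ∈ e ∧ a ∈ e)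

/-- `v` is good in `U` -/
def IsGood (H : Finset (Finset V)) (U : Finset V) (v : V) : Prop :=
  ∀ g ∈ H, g ⊆ U → v ∉ g → ∀ a ∈ g, ∀ b ∈ g, a ∈ nb H U v → b ∈ nb H U v → a = b

theorem local_fiber (r ℓ : ℕ) (hr : 2 ≤ r) (H : Finset (Finset V)) (hH : ∀ e ∈ H, e.card = r)
    (U : Finset V) (v : V) (hv : v ∈ U) (hgood : IsGood H U v)
    (W0 : Finset V) (hW0U : W0 ⊆ U) (hW0 : IsIndep H W0) (hvW0 : v ∉ W0)
    (hNW0 : ∀ x ∈ nb H U v, x ∉ W0) :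
    ℓ * ((U.powerset.filter (fun Z => IsIndep H Z)).filter
        (fun W => W \ insert v (nb H U v) = W0)).card ≤
      2 ^ r * ∑ W ∈ (U.powerset.filter (fun Z => IsIndep H Z)).filter
        (fun W => W \ insert v (nb H U v) = W0),
        (4 ^ ℓ * (if v ∈ W then 1 else 0) + min ℓ (dg H W v)) := by
  set N := nb H U v with hN
  set F := (U.powerset.filter (fun Z => IsIndep H Z)).filter
        (fun W => W \ insert v N = W0) with hF
  have memF : ∀ W, W ∈ F ↔ W ⊆ U ∧ IsIndep H W ∧ W \ insert v N = W0 := by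
    intro W; simp [hF, and_assoc]
  have hNU : N ⊆ U := Finset.filter_subset _ _
  have hvN : v ∉ N := by simp [hN, nb]
  set A := N.filter (fun x => IsIndep H (insert x W0)) with hA
  have hAN : A ⊆ N := Finset.filter_subset _ _
  have hvA : v ∉ A := fun h => hvN (hAN h)
  set J := H.filter (fun e => v ∈ e ∧ e ⊆ U ∧ e.erase v ⊆ A) with hJ
  have hind : ∀ B ⊆ A, IsIndep H (W0 ∪ B) := by
    intro B hB g hg hgs
    have hBN : B ⊆ N := hB.trans hAN
    have hvg : v ∉ g := by
      intro h
      rcases Finset.mem_union.1 (hgs h) with h | h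
      · exact hvW0 h
      · exact hvA (hB h)
    have hgU : g ⊆ U := hgs.trans (Finset.union_subset hW0U (hBN.trans hNU))
    by_cases hx : ∃ x ∈ g, x ∈ B
    · obtain ⟨x, hxg, hxB⟩ := hx
      have := (Finset.mem_filter.1 (hB hxB)).2
      apply this g hg
      intro y hy
      rcases Finset.mem_union.1 (hgs hy) with h | h
      · exact Finset.mem_insert_of_mem h
      · rw [hgood g hg hgU hvg y hy x hxg (hBN h) (hBN hxB)]
        exact Finset.mem_insert_self _ _
    · push Not at hx
      apply hW0 g hg
      intro y hy
      rcases Finset.mem_union.1 (hgs hy) with h | h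
      · exact h
      · exact absurd h (hx y hy)
  have hsd : ∀ B ⊆ N, (W0 ∪ B) \ insert v N = W0 := by
    intro B hB
    ext y
    simp only [Finset.mem_sdiff, Finset.mem_union, Finset.mem_insert, not_or]
    constructor
    · rintro ⟨h | h, h1, h2⟩
      · exact h
      · exact absurd (hB h) h2
    · intro h
      exact ⟨Or.inl h, fun e => hvW0 (e ▸ h), fun e => hNW0 y e h⟩
  have hsd' : ∀ B ⊆ N, (insert v (W0 ∪ B)) \ insert v N = W0 := by
    intro B hB
    rw [Finset.insert_sdiff_of_mem _ (Finset.mem_insert_self _ _), hsd B hB]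
  -- the fiber without v
  have hinj : Set.InjOn (fun B => W0 ∪ B) (A.powerset : Set (Finset V)) := by
    intro B hB C hC h
    simp only [Finset.coe_powerset, Set.mem_preimage, Set.mem_powerset_iff, Finset.coe_subset] at hB hC
    have key : ∀ B ⊆ A, (W0 ∪ B) ∩ N = B := by
      intro B hB
      ext y
      simp only [Finset.mem_inter, Finset.mem_union]
      constructor
      · rintro ⟨h | h, h2⟩
        · exact absurd h (hNW0 y h2)
        · exact h
      · intro h; exact ⟨Or.inr h, hAN (hB h)⟩
    rw [← key B hB, ← key C hC]
    simp only at h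
    rw [h]
  have hF0 : F.filter (fun W => v ∉ W) = A.powerset.image (fun B => W0 ∪ B) := by
    ext W
    simp only [Finset.mem_filter, Finset.mem_image, Finset.mem_powerset, memF]
    constructor
    · rintro ⟨⟨hWU, hWi, hWs⟩, hvW⟩
      refine ⟨W ∩ N, ?_, ?_⟩
      · intro x hx
        rw [Finset.mem_inter] at hx
        refine Finset.mem_filter.2 ⟨hx.2, ?_⟩
        intro g hg hgs
        refine hWi g hg (hgs.trans ?_)
        rw [← hWs]
        exact Finset.insert_subset hx.1 Finset.sdiff_subset
      · rw [← hWs]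
        ext y
        simp only [Finset.mem_union, Finset.mem_sdiff, Finset.mem_insert, Finset.mem_inter]
        constructor
        · rintro (h | h) <;> exact h.1
        · intro h
          by_cases hy : y ∈ N
          · exact Or.inr ⟨h, hy⟩
          · refine Or.inl ⟨h, ?_⟩
            rintro (e | e)
            · exact hvW (e ▸ h)
            · exact hy e
    · rintro ⟨B, hB, rfl⟩
      refine ⟨⟨Finset.union_subset hW0U (hB.trans (hAN.trans hNU)), hind B hB, hsd B (hB.trans hAN)⟩, ?_⟩
      rw [Finset.mem_union]
      rintro (h | h)
      · exact hvW0 h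
      · exact hvA (hB h)
  have hc0 : (F.filter (fun W => v ∉ W)).card = 2 ^ A.card := by
    rw [hF0, Finset.card_image_of_injOn hinj, Finset.card_powerset]
  have hc1 : (F.filter (fun W => v ∈ W)).card ≤ 2 ^ A.card := by
    rw [← hc0]
    apply Finset.card_le_card_of_injOn (fun W => W.erase v)
    · intro W hW
      simp only [Finset.coe_filter, Set.mem_ofPred_eq, memF] at hW ⊢
      obtain ⟨⟨h1, h2, h3⟩, h4⟩ := hW
      refine ⟨⟨(Finset.erase_subset _ _).trans h1, fun g hg h => h2 g hg (h.trans (Finset.erase_subset _ _)), ?_⟩, Finset.notMem_erase _ _⟩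
      rw [← h3]
      ext y
      simp only [Finset.mem_sdiff, Finset.mem_erase, Finset.mem_insert]
      tauto
    · intro W hW W' hW' h
      simp only [Finset.coe_filter, Set.mem_ofPred_eq] at hW hW' h
      rw [← Finset.insert_erase hW.2, ← Finset.insert_erase hW'.2, h]
  have hcF : F.card ≤ 2 * 2 ^ A.card := by
    have := Finset.card_filter_add_card_filter_not (s := F) (fun W => v ∈ W)
    omega
  have hsum1 : 4 ^ ℓ * (F.filter (fun W => v ∈ W)).card ≤ 
      ∑ W ∈ F, (4 ^ ℓ * (if v ∈ W then 1 else 0) + min ℓ (dg H W v)) := by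
    rw [Finset.card_filter, Finset.mul_sum]
    exact Finset.sum_le_sum (fun W _ => Nat.le_add_right _ _)
  have hr2 : 2 ≤ 2 ^ r := by
    calc 2 = 2 ^ 1 := by norm_num
      _ ≤ 2 ^ r := Nat.pow_le_pow_right (by norm_num) (by omega)
  rcases le_or_gt J.card ℓ with hJl | hJl
  · -- few full edges
    have hrep : ∀ e ∈ J, ∃ x, x ∈ e.erase v := by
      intro e he
      have he' := Finset.mem_filter.1 he
      have : 0 < (e.erase v).card := by
        rw [Finset.card_erase_of_mem he'.2.1, hH e he'.1]; omega
      exact Finset.card_pos.1 this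
    have : Nonempty V := ⟨v⟩
    choose! rep hrep using hrep
    set R := J.image rep with hR
    have hRc : R.card ≤ ℓ := Finset.card_image_le.trans hJl
    have hRA : R ⊆ A := by
      intro x hx
      obtain ⟨e, he, rfl⟩ := Finset.mem_image.1 hx
      exact (Finset.mem_filter.1 he).2.2.2 (hrep e he)
    have hlow : 2 ^ (A.card - R.card) ≤ (F.filter (fun W => v ∈ W)).card := by
      rw [← Finset.card_sdiff_of_subset hRA, ← Finset.card_powerset]
      apply Finset.card_le_card_of_injOn (fun B => insert v (W0 ∪ B))
      · intro B hB
        simp only [Finset.coe_powerset, Set.mem_preimage, Set.mem_powerset_iff, Finset.coe_subset] at hB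
        have hBA : B ⊆ A := hB.trans Finset.sdiff_subset
        simp only [Finset.coe_filter, Set.mem_ofPred_eq, memF]
        have hUU : insert v (W0 ∪ B) ⊆ U :=
          Finset.insert_subset hv (Finset.union_subset hW0U (hBA.trans (hAN.trans hNU)))
        refine ⟨⟨hUU, ?_, hsd' B (hBA.trans hAN)⟩, Finset.mem_insert_self _ _⟩
        intro g hg hgs
        by_cases hvg : v ∈ g
        · have hgU := hgs.trans hUU
          have h1 : g.erase v ⊆ B := by
            intro y hy
            have hy' := Finset.mem_erase.1 hy
            have hyN : y ∈ N := by
              simp only [hN, nb, Finset.mem_filter]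
              exact ⟨hgU hy'.2, hy'.1, g, hg, hgU, hvg, hy'.2⟩
            rcases Finset.mem_insert.1 (hgs hy'.2) with h | h
            · exact absurd h hy'.1
            · rcases Finset.mem_union.1 h with h | h
              · exact absurd h (hNW0 y hyN)
              · exact h
          have hgJ : g ∈ J := Finset.mem_filter.2 ⟨hg, hvg, hgU, h1.trans hBA⟩
          have h2 := hB (h1 (hrep g hgJ))
          rw [Finset.mem_sdiff] at h2
          exact h2.2 (Finset.mem_image_of_mem _ hgJ)
        · refine hind B hBA g hg ?_
          exact (Finset.subset_insert_iff_of_notMem hvg).1 hgs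
      · intro B hB C hC h
        simp only [Finset.coe_powerset, Set.mem_preimage, Set.mem_powerset_iff, Finset.coe_subset] at hB hC
        have hBA : B ⊆ A := hB.trans Finset.sdiff_subset
        have hCA : C ⊆ A := hC.trans Finset.sdiff_subset
        apply hinj (by simpa using hBA) (by simpa using hCA)
        have hnot : ∀ B ⊆ A, v ∉ W0 ∪ B := by
          intro B hB h
          rcases Finset.mem_union.1 h with h | h
          · exact hvW0 h
          · exact hvA (hB h)
        simp only at h ⊢
        rw [← Finset.erase_insert (hnot B hBA), ← Finset.erase_insert (hnot C hCA), h]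
    have hpow : ℓ * 2 ^ A.card ≤ 4 ^ ℓ * 2 ^ (A.card - R.card) := by
      have h1 : (4:ℕ) ^ ℓ = 2 ^ ℓ * 2 ^ ℓ := by rw [← mul_pow]; norm_num
      have h2 : (2:ℕ) ^ A.card ≤ 2 ^ ℓ * 2 ^ (A.card - R.card) := by
        rw [← pow_add]; exact Nat.pow_le_pow_right (by norm_num) (by omega)
      have h3 : ℓ ≤ 2 ^ ℓ := Nat.lt_two_pow_self.le
      calc ℓ * 2 ^ A.card ≤ 2 ^ ℓ * (2 ^ ℓ * 2 ^ (A.card - R.card)) := Nat.mul_le_mul h3 h2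
        _ = _ := by rw [h1]; ring
    calc ℓ * F.card ≤ ℓ * (2 * 2 ^ A.card) := Nat.mul_le_mul_left _ hcF
      _ = 2 * (ℓ * 2 ^ A.card) := by ring
      _ ≤ 2 ^ r * (4 ^ ℓ * (F.filter (fun W => v ∈ W)).card) :=
        Nat.mul_le_mul hr2 (hpow.trans (Nat.mul_le_mul_left _ hlow))
      _ ≤ _ := Nat.mul_le_mul_left _ hsum1
  · obtain ⟨J', hJ'J, hJ'c⟩ := Finset.exists_subset_card_eq hJl.le
    have h1 : ∑ W ∈ F.filter (fun W => v ∉ W), (J'.filter (fun e => e.erase v ⊆ W)).card ≤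
        ∑ W ∈ F, (4 ^ ℓ * (if v ∈ W then 1 else 0) + min ℓ (dg H W v)) := by
      calc _ ≤ ∑ W ∈ F.filter (fun W => v ∉ W),
            (4 ^ ℓ * (if v ∈ W then 1 else 0) + min ℓ (dg H W v)) := by
            apply Finset.sum_le_sum
            intro W _
            refine le_trans (le_min ?_ ?_) (Nat.le_add_left _ _)
            · rw [← hJ'c]; exact Finset.card_filter_le _ _
            · apply Finset.card_le_card
              intro e he
              have he' := Finset.mem_filter.1 he
              have heJ := Finset.mem_filter.1 (hJ'J he'.1)
              exact Finset.mem_filter.2 ⟨heJ.1, heJ.2.1, he'.2⟩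
        _ ≤ _ := Finset.sum_le_sum_of_subset (Finset.filter_subset _ _)
    have h2 : ∑ W ∈ F.filter (fun W => v ∉ W), (J'.filter (fun e => e.erase v ⊆ W)).card
        = ∑ e ∈ J', ((F.filter (fun W => v ∉ W)).filter (fun W => e.erase v ⊆ W)).card := by
      simp only [Finset.card_filter]
      exact Finset.sum_comm
    have h3 : ∀ e ∈ J', 2 ^ (A.card - (r - 1)) ≤
        ((F.filter (fun W => v ∉ W)).filter (fun W => e.erase v ⊆ W)).card := by
      intro e he
      have heJ := Finset.mem_filter.1 (hJ'J he)
      have hec : (e.erase v).card = r - 1 := by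
        rw [Finset.card_erase_of_mem heJ.2.1, hH e heJ.1]
      rw [← hec, ← Finset.card_Icc_finset heJ.2.2.2, hF0]
      apply Finset.card_le_card_of_injOn (fun B => W0 ∪ B)
      · intro B hB
        have hB' := Finset.mem_Icc.1 (Finset.mem_coe.1 hB)
        apply Finset.mem_coe.2
        exact Finset.mem_filter.2 ⟨Finset.mem_image_of_mem _ (Finset.mem_powerset.2 hB'.2),
          hB'.1.trans Finset.subset_union_right⟩
      · apply hinj.mono
        intro B hB
        have hB' := Finset.mem_Icc.1 (Finset.mem_coe.1 hB)
        exact Finset.mem_coe.2 (Finset.mem_powerset.2 hB'.2)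
    have h4 : ℓ * 2 ^ (A.card - (r - 1)) ≤ ∑ e ∈ J', ((F.filter (fun W => v ∉ W)).filter (fun W => e.erase v ⊆ W)).card := by
      rw [← hJ'c]
      have := Finset.card_nsmul_le_sum J' _ _ h3
      simpa using this
    have h5 : 2 * 2 ^ A.card ≤ 2 ^ r * 2 ^ (A.card - (r - 1)) := by
      rw [← pow_add, ← pow_succ']
      exact Nat.pow_le_pow_right (by norm_num) (by omega)
    calc ℓ * F.card ≤ ℓ * (2 * 2 ^ A.card) := Nat.mul_le_mul_left _ hcF
      _ ≤ ℓ * (2 ^ r * 2 ^ (A.card - (r - 1))) := Nat.mul_le_mul_left _ h5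
      _ = 2 ^ r * (ℓ * 2 ^ (A.card - (r - 1))) := by ring
      _ ≤ _ := Nat.mul_le_mul_left _ (h4.trans (h2 ▸ h1))

theorem local_good (r ℓ : ℕ) (hr : 2 ≤ r) (H : Finset (Finset V)) (hH : ∀ e ∈ H, e.card = r)
    (U : Finset V) (v : V) (hv : v ∈ U) (hgood : IsGood H U v) :
    ℓ * (U.powerset.filter (fun Z => IsIndep H Z)).card ≤
      2 ^ r * ∑ W ∈ U.powerset.filter (fun Z => IsIndep H Z),
        (4 ^ ℓ * (if v ∈ W then 1 else 0) + min ℓ (dg H W v)) := by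
  set I := U.powerset.filter (fun Z => IsIndep H Z) with hI
  set φ : Finset V → Finset V := fun W => W \ insert v (nb H U v) with hφ
  have hmaps : ∀ W ∈ I, φ W ∈ I.image φ := fun W hW => Finset.mem_image_of_mem _ hW
  rw [Finset.card_eq_sum_card_fiberwise hmaps, ← Finset.sum_fiberwise_of_maps_to hmaps,
    Finset.mul_sum, Finset.mul_sum]
  apply Finset.sum_le_sum
  intro W0 hW0
  obtain ⟨W, hW, rfl⟩ := Finset.mem_image.1 hW0
  have hW' := Finset.mem_filter.1 hW
  have hs : φ W ⊆ W := Finset.sdiff_subset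
  apply local_fiber r ℓ hr H hH U v hv hgood
  · exact hs.trans (Finset.mem_powerset.1 hW'.1)
  · exact fun g hg h => hW'.2 g hg (h.trans hs)
  · simp [hφ]
  · intro x hx
    simp [hφ, hx]

end Local

section Weights
variable {V : Type*} [Fintype V] [DecidableEq V]

/-- weight of the set `U` in the binomial random subset model -/
noncomputable def wt (p : ℝ) (U : Finset V) : ℝ :=
  (∏ _v ∈ U, p) * ∏ _v ∈ Finset.univ \ U, (1 - p)

theorem wt_nonneg {p : ℝ} (h0 : 0 ≤ p) (h1 : p ≤ 1) (U : Finset V) : 0 ≤ wt p U := by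
  unfold wt
  apply mul_nonneg
  · exact Finset.prod_nonneg (fun _ _ => h0)
  · exact Finset.prod_nonneg (fun _ _ => by linarith)

theorem wt_prod (p : ℝ) (g : V → ℝ) :
    ∑ U ∈ (Finset.univ : Finset V).powerset, wt p U * ∏ v ∈ U, g v = ∏ v, (p * g v + (1 - p)) := by
  rw [Finset.prod_add]
  apply Finset.sum_congr rfl
  intro U _
  rw [wt, Finset.prod_mul_distrib]
  ring

theorem wt_sum (p : ℝ) : ∑ U ∈ (Finset.univ : Finset V).powerset, wt p U = 1 := by
  have := wt_prod (V := V) p (fun _ => 1)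
  simpa using this

theorem wt_subset (p : ℝ) (A : Finset V) :
    ∑ U ∈ (Finset.univ : Finset V).powerset, wt p U * (if A ⊆ U then 1 else 0) = p ^ A.card := by
  have h := Finset.prod_add (fun _ : V => p) (fun v => if v ∈ A then 0 else 1 - p) Finset.univ
  have h2 : ∏ v : V, (p + if v ∈ A then 0 else 1 - p) = p ^ A.card := by
    have : ∀ v : V, (p + if v ∈ A then 0 else 1 - p) = if v ∈ A then p else 1 := by
      intro v; split_ifs <;> ring
    simp only [this]
    rw [Finset.prod_ite]
    simp
  rw [← h2, h]
  apply Finset.sum_congr rfl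
  intro U _
  rw [wt, mul_assoc]
  congr 1
  split_ifs with hAU
  · rw [mul_one]
    apply Finset.prod_congr rfl
    intro v hv
    rw [if_neg]
    intro hvA
    exact (Finset.mem_sdiff.1 hv).2 (hAU hvA)
  · rw [mul_zero]
    obtain ⟨a, ha, haU⟩ := Finset.not_subset.1 hAU
    symm
    apply Finset.prod_eq_zero (i := a)
    · simp [haU]
    · simp [ha]

theorem wt_card (p : ℝ) :
    ∑ U ∈ (Finset.univ : Finset V).powerset, wt p U * (U.card : ℝ) = p * Fintype.card V := by
  have h : ∀ U : Finset V, (U.card : ℝ) = ∑ v : V, if ({v} : Finset V) ⊆ U then (1:ℝ) else 0 := by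
    intro U
    simp [Finset.singleton_subset_iff]
  simp only [h, Finset.mul_sum]
  rw [Finset.sum_comm]
  simp only [wt_subset]
  simp [mul_comm]

theorem deg_bound (r d : ℕ) (H : Finset (Finset V)) (hH : ∀ e ∈ H, e.card = r)
    (hd : ∀ S : Finset V, S.card = r - 1 → (H.filter (fun e => S ⊆ e)).card ≤ d)
    (J : Finset V) (hJ : J.card ≤ r - 1) :
    (H.filter (fun e => J ⊆ e)).card ≤ Fintype.card V ^ (r - 1 - J.card) * d := by
  set 𝒮 := ((Finset.univ : Finset V).powersetCard (r - 1 - J.card)).image (fun T => J ∪ T) with h𝒮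
  have hsub : H.filter (fun e => J ⊆ e) ⊆
      (𝒮.filter (fun S => S.card = r - 1)).biUnion (fun S => H.filter (fun e => S ⊆ e)) := by
    intro e he
    have he' := Finset.mem_filter.1 he
    obtain ⟨S, hJS, hSe, hSc⟩ := Finset.exists_subsuperset_card_eq he'.2 hJ
      (by rw [hH e he'.1]; omega)
    refine Finset.mem_biUnion.2 ⟨S, Finset.mem_filter.2 ⟨?_, hSc⟩, Finset.mem_filter.2 ⟨he'.1, hSe⟩⟩
    refine Finset.mem_image.2 ⟨S \ J, ?_, ?_⟩
    · rw [Finset.mem_powersetCard]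
      exact ⟨Finset.subset_univ _, by rw [Finset.card_sdiff_of_subset hJS, hSc]⟩
    · exact Finset.union_sdiff_of_subset hJS
  calc _ ≤ _ := Finset.card_le_card hsub
    _ ≤ (𝒮.filter (fun S => S.card = r - 1)).card * d :=
      Finset.card_biUnion_le_card_mul _ _ _ (fun S hS => hd S (Finset.mem_filter.1 hS).2)
    _ ≤ _ := by
      apply Nat.mul_le_mul_right
      calc _ ≤ 𝒮.card := Finset.card_filter_le _ _
        _ ≤ _ := Finset.card_image_le
        _ = (Fintype.card V).choose (r - 1 - J.card) := by
          rw [Finset.card_powersetCard, Finset.card_univ]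
        _ ≤ _ := Nat.choose_le_pow _ _

/-- sum of the truncated degrees -/
theorem dg_sum (r d : ℕ) (hr : 1 ≤ r) (H : Finset (Finset V)) (hH : ∀ e ∈ H, e.card = r)
    (hd : ∀ S : Finset V, S.card = r - 1 → (H.filter (fun e => S ⊆ e)).card ≤ d)
    (W : Finset V) (hW : W.card ≤ d) : ∑ v, dg H W v ≤ d ^ r := by
  have h1 : ∑ v, dg H W v = ((Finset.univ : Finset V).sigma
      (fun v => H.filter (fun e => v ∈ e ∧ e.erase v ⊆ W))).card := by
    rw [Finset.card_sigma]; rfl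
  have h2 : ((Finset.univ : Finset V).sigma
      (fun v => H.filter (fun e => v ∈ e ∧ e.erase v ⊆ W))).card ≤
      ((W.powersetCard (r - 1)).sigma (fun S => H.filter (fun e => S ⊆ e))).card := by
    apply Finset.card_le_card_of_injOn (fun x => ⟨x.2.erase x.1, x.2⟩)
    · rintro ⟨v, e⟩ hx
      simp only [Finset.mem_coe, Finset.mem_sigma, Finset.mem_filter, Finset.mem_powersetCard] at hx ⊢
      refine ⟨⟨hx.2.2.2, ?_⟩, hx.2.1, Finset.erase_subset _ _⟩
      rw [Finset.card_erase_of_mem hx.2.2.1, hH e hx.2.1]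
    · rintro ⟨v, e⟩ hx ⟨v', e'⟩ hx' h
      simp only [Finset.mem_coe, Finset.mem_sigma, Finset.mem_filter] at hx hx'
      simp only [Sigma.mk.injEq, heq_eq_eq] at h
      obtain ⟨h1, rfl⟩ := h
      have : v = v' := by
        by_contra hne
        have : v ∈ e.erase v' := Finset.mem_erase.2 ⟨hne, hx.2.2.1⟩
        rw [← h1] at this
        exact Finset.notMem_erase _ _ this
      subst this
      rfl
  rw [h1]
  refine h2.trans ?_
  rw [Finset.card_sigma]
  calc _ ≤ ∑ S ∈ W.powersetCard (r - 1), d :=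
        Finset.sum_le_sum (fun S hS => hd S (Finset.mem_powersetCard.1 hS).2)
    _ = W.card.choose (r - 1) * d := by rw [Finset.sum_const, Finset.card_powersetCard, smul_eq_mul]
    _ ≤ d ^ (r - 1) * d := Nat.mul_le_mul_right _ ((Nat.choose_le_pow _ _).trans (Nat.pow_le_pow_left hW _))
    _ = d ^ r := by rw [← pow_succ]; congr 1; omega

/-- exponential-moment bound for one set `W` -/
theorem tail_one {p : ℝ} (h0 : 0 ≤ p) (h1 : p ≤ 1) (ℓ : ℕ) (hℓ : 1 ≤ ℓ) (f : V → ℕ)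
    (hf : ∀ v, f v ≤ ℓ) (K : ℝ) (hK : (∑ v, (f v : ℝ)) * p ≤ K * ℓ) :
    ∑ U ∈ (Finset.univ : Finset V).powerset,
      wt p U * (if 3 * K * ℓ < ∑ v ∈ U, (f v : ℝ) then 1 else 0) ≤ Real.exp (-K) := by
  have hℓ' : (0:ℝ) < ℓ := by exact_mod_cast hℓ
  have hb : ∀ U : Finset V, (if 3 * K * ℓ < ∑ v ∈ U, (f v : ℝ) then (1:ℝ) else 0) ≤
      Real.exp (-(3 * K)) * ∏ v ∈ U, Real.exp ((f v : ℝ) / ℓ) := by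
    intro U
    rw [← Real.exp_sum, ← Real.exp_add, ← Finset.sum_div]
    split_ifs with h
    · apply Real.one_le_exp
      have : 3 * K ≤ (∑ v ∈ U, (f v : ℝ)) / ℓ := by
        rw [le_div_iff₀ hℓ']; exact h.le
      linarith
    · exact (Real.exp_pos _).le
  calc _ ≤ ∑ U ∈ (Finset.univ : Finset V).powerset,
        Real.exp (-(3 * K)) * (wt p U * ∏ v ∈ U, Real.exp ((f v : ℝ) / ℓ)) := by
        apply Finset.sum_le_sum
        intro U _
        have := mul_le_mul_of_nonneg_left (hb U) (wt_nonneg h0 h1 U)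
        linarith
    _ = Real.exp (-(3 * K)) * ∏ v, (p * Real.exp ((f v : ℝ) / ℓ) + (1 - p)) := by
        rw [← Finset.mul_sum, wt_prod]
    _ ≤ Real.exp (-(3 * K)) * ∏ v, Real.exp (2 * p * ((f v : ℝ) / ℓ)) := by
        apply mul_le_mul_of_nonneg_left _ (Real.exp_pos _).le
        apply Finset.prod_le_prod
        · intro v _
          have := Real.exp_pos ((f v : ℝ) / ℓ)
          have := mul_nonneg h0 this.le
          linarith
        · intro v _
          have hy0 : 0 ≤ (f v : ℝ) / ℓ := by positivity
          have hy1 : (f v : ℝ) / ℓ ≤ 1 := by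
            rw [div_le_one hℓ']; exact_mod_cast hf v
          have habs := Real.abs_exp_sub_one_sub_id_le (x := (f v : ℝ) / ℓ) (by rw [abs_of_nonneg hy0]; exact hy1)
          have h3 := (abs_le.1 habs).2
          have h4 : Real.exp ((f v : ℝ) / ℓ) ≤ 1 + 2 * ((f v : ℝ) / ℓ) := by nlinarith
          have h5 := Real.add_one_le_exp (2 * p * ((f v : ℝ) / ℓ))
          nlinarith
    _ = Real.exp (-(3 * K) + 2 * ((∑ v, (f v : ℝ)) * p / ℓ)) := by
        rw [← Real.exp_sum, ← Real.exp_add, ← Finset.mul_sum, ← Finset.sum_div]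
        congr 1; ring
    _ ≤ Real.exp (-K) := by
        apply Real.exp_le_exp.2
        have : (∑ v, (f v : ℝ)) * p / ℓ ≤ K := by
          rw [div_le_iff₀ hℓ']; exact hK
        linarith

end Weights

section Bad
variable {V : Type*} [Fintype V] [DecidableEq V]

noncomputable def PA (H : Finset (Finset V)) : Finset (Finset V × Finset V) :=
  (H ×ˢ H).filter (fun x => x.1 ≠ x.2 ∧ 2 ≤ (x.1 ∩ x.2).card)

noncomputable def TB (r : ℕ) (H : Finset (Finset V)) : Finset (Finset V × Finset V × Finset V) :=
  (H ×ˢ H ×ˢ H).filter (fun x => 3 * r - 3 ≤ (x.1 ∪ x.2.1 ∪ x.2.2).card ∧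
    (∃ v ∈ x.1, v ∈ x.2.1) ∧ ∃ a ∈ x.1, ∃ b ∈ x.2.1, a ≠ b ∧ a ∈ x.2.2 ∧ b ∈ x.2.2)

theorem bad_pointwise (r : ℕ) (H : Finset (Finset V)) (hH : ∀ e ∈ H, e.card = r)
    (U : Finset V) :
    ((U.filter (fun v => ¬ IsGood H U v)).card : ℝ) ≤
      (∑ x ∈ PA H, (r : ℝ) * (if x.1 ∪ x.2 ⊆ U then 1 else 0)) +
      ∑ x ∈ TB r H, (r : ℝ) * (if x.1 ∪ x.2.1 ∪ x.2.2 ⊆ U then 1 else 0) := by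
  set P := (PA H).filter (fun x => x.1 ∪ x.2 ⊆ U) with hP
  set T := (TB r H).filter (fun x => x.1 ∪ x.2.1 ∪ x.2.2 ⊆ U) with hT
  have hsub : U.filter (fun v => ¬ IsGood H U v) ⊆ P.biUnion (fun x => x.1) ∪ T.biUnion (fun x => x.1) := by
    intro v hv
    have hv' := (Finset.mem_filter.1 hv).2
    unfold IsGood at hv'
    push Not at hv'
    obtain ⟨g, hg, hgU, hvg, a, hag, b, hbg, ha, hb, hab⟩ := hv'
    simp only [nb, Finset.mem_filter] at ha hb
    obtain ⟨haU, hav, e, he, heU, hve, hae⟩ := ha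
    obtain ⟨hbU, hbv, f, hf, hfU, hvf, hbf⟩ := hb
    have addP : ∀ e g, e ∈ H → g ∈ H → e ⊆ U → g ⊆ U → v ∈ e → e ≠ g → 2 ≤ (e ∩ g).card →
        v ∈ P.biUnion (fun x => x.1) ∪ T.biUnion (fun x => x.1) := by
      intro e g he hg heU hgU hve hne hc
      apply Finset.mem_union_left
      refine Finset.mem_biUnion.2 ⟨(e, g), ?_, hve⟩
      simp only [hP, PA, Finset.mem_filter, Finset.mem_product]
      exact ⟨⟨⟨he, hg⟩, hne, hc⟩, Finset.union_subset heU hgU⟩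
    have heg : e ≠ g := fun h => hvg (h ▸ hve)
    have hfg : f ≠ g := fun h => hvg (h ▸ hvf)
    by_cases h1 : 2 ≤ (e ∩ g).card
    · exact addP e g he hg heU hgU hve heg h1
    by_cases h2 : 2 ≤ (f ∩ g).card
    · exact addP f g hf hg hfU hgU hvf hfg h2
    have hef : e ≠ f := by
      rintro rfl
      apply h1
      exact Finset.one_lt_card.2 ⟨a, by simp [hae, hag], b, by simp [hbf, hbg], hab⟩
    by_cases h3 : 2 ≤ (e ∩ f).card
    · exact addP e f he hf heU hfU hve hef h3
    apply Finset.mem_union_right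
    refine Finset.mem_biUnion.2 ⟨(e, f, g), ?_, hve⟩
    simp only [hT, TB, Finset.mem_filter, Finset.mem_product]
    refine ⟨⟨⟨he, hf, hg⟩, ?_, ⟨v, hve, hvf⟩, a, hae, b, hbf, hab, hag, hbg⟩,
      Finset.union_subset (Finset.union_subset heU hfU) hgU⟩
    have k1 := Finset.card_union_add_card_inter e f
    have k2 := Finset.card_union_add_card_inter (e ∪ f) g
    have k3 : ((e ∪ f) ∩ g).card ≤ (e ∩ g).card + (f ∩ g).card := by
      rw [Finset.union_inter_distrib_right]; exact Finset.card_union_le _ _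
    rw [hH e he, hH f hf] at k1
    rw [hH g hg] at k2
    omega
  have hPc : (P.biUnion (fun x => x.1)).card ≤ P.card * r := by
    apply Finset.card_biUnion_le_card_mul
    intro x hx
    simp only [hP, PA, Finset.mem_filter, Finset.mem_product] at hx
    exact (hH _ hx.1.1.1).le
  have hTc : (T.biUnion (fun x => x.1)).card ≤ T.card * r := by
    apply Finset.card_biUnion_le_card_mul
    intro x hx
    simp only [hT, TB, Finset.mem_filter, Finset.mem_product] at hx
    exact (hH _ hx.1.1.1).le
  have htot : (U.filter (fun v => ¬ IsGood H U v)).card ≤ P.card * r + T.card * r :=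
    (Finset.card_le_card hsub).trans ((Finset.card_union_le _ _).trans (Nat.add_le_add hPc hTc))
  rw [← Finset.mul_sum, ← Finset.mul_sum, ← Finset.natCast_card_filter, ← Finset.natCast_card_filter]
  calc ((U.filter (fun v => ¬ IsGood H U v)).card : ℝ) ≤ ((P.card * r + T.card * r : ℕ) : ℝ) := by
        exact_mod_cast htot
    _ = _ := by push_cast; ring

theorem PA_sum (r d : ℕ) (hr : 3 ≤ r) (H : Finset (Finset V)) (hH : ∀ e ∈ H, e.card = r)
    (hd : ∀ S : Finset V, S.card = r - 1 → (H.filter (fun e => S ⊆ e)).card ≤ d)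
    (p : ℝ) (h0 : 0 ≤ p) (hM : 1 ≤ p * Fintype.card V) :
    ∑ x ∈ PA H, p ^ (x.1 ∪ x.2).card ≤
      ((Fintype.card V : ℝ) ^ (r - 1) * d) *
        (2 ^ r * (p ^ (r + 1) * (p * Fintype.card V) ^ (r - 3) * d)) := by
  set n := Fintype.card V with hn
  have hHc : (H.card : ℝ) ≤ (n : ℝ) ^ (r - 1) * d := by
    have := deg_bound r d H hH hd ∅ (by simp)
    simp at this
    exact_mod_cast this
  have hJb : ∀ e ∈ H, ∀ J ∈ e.powerset.filter (fun J => 2 ≤ J.card ∧ J.card ≤ r - 1),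
      ∑ g ∈ H, (if J ⊆ g then p ^ (2 * r - J.card) else 0) ≤
        p ^ (r + 1) * (p * n) ^ (r - 3) * d := by
    intro e he J hJ
    have hJ' := (Finset.mem_filter.1 hJ).2
    rw [← Finset.sum_filter, Finset.sum_const, nsmul_eq_mul]
    have hb := deg_bound r d H hH hd J hJ'.2
    have hb' : ((H.filter (fun e => J ⊆ e)).card : ℝ) ≤ (n:ℝ) ^ (r - 1 - J.card) * d := by
      exact_mod_cast hb
    calc _ ≤ (n:ℝ) ^ (r - 1 - J.card) * d * p ^ (2 * r - J.card) :=
          mul_le_mul_of_nonneg_right hb' (pow_nonneg h0 _)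
      _ = p ^ (r + 1) * (p * n) ^ (r - 1 - J.card) * d := by
          have : 2 * r - J.card = (r + 1) + (r - 1 - J.card) := by omega
          rw [this, pow_add, mul_pow]; ring
      _ ≤ _ := by
          apply mul_le_mul_of_nonneg_right _ (Nat.cast_nonneg _)
          apply mul_le_mul_of_nonneg_left _ (pow_nonneg h0 _)
          exact pow_le_pow_right₀ hM (by omega)
  have hB0 : 0 ≤ p ^ (r + 1) * (p * n) ^ (r - 3) * d := by positivity
  have hinner : ∀ e ∈ H, ∑ g ∈ H, (if e ≠ g ∧ 2 ≤ (e ∩ g).card then p ^ (e ∪ g).card else 0) ≤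
      2 ^ r * (p ^ (r + 1) * (p * n) ^ (r - 3) * d) := by
    intro e he
    calc _ ≤ ∑ g ∈ H, ∑ J ∈ e.powerset.filter (fun J => 2 ≤ J.card ∧ J.card ≤ r - 1),
          (if J ⊆ g then p ^ (2 * r - J.card) else 0) := by
          apply Finset.sum_le_sum
          intro g hg
          have hnn : ∀ J ∈ e.powerset.filter (fun J => 2 ≤ J.card ∧ J.card ≤ r - 1),
              (0:ℝ) ≤ (if J ⊆ g then p ^ (2 * r - J.card) else 0) := by
            intro J _; split_ifs
            · exact pow_nonneg h0 _
            · exact le_rfl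
          split_ifs with h
          · have hlt : (e ∩ g).card ≤ r - 1 := by
              have hss : e ∩ g ⊂ e := by
                refine Finset.inter_subset_left.ssubset_of_ne ?_
                intro heq
                apply h.1
                apply Finset.eq_of_subset_of_card_le (Finset.inter_eq_left.1 heq)
                rw [hH e he, hH g hg]
              have := Finset.card_lt_card hss
              rw [hH e he] at this
              omega
            have hmem : e ∩ g ∈ e.powerset.filter (fun J => 2 ≤ J.card ∧ J.card ≤ r - 1) :=
              Finset.mem_filter.2 ⟨Finset.mem_powerset.2 Finset.inter_subset_left, h.2, hlt⟩
            refine le_trans (le_of_eq ?_) (Finset.single_le_sum hnn hmem)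
            rw [if_pos Finset.inter_subset_right]
            congr 1
            have := Finset.card_union_add_card_inter e g
            rw [hH e he, hH g hg] at this
            omega
          · exact Finset.sum_nonneg hnn
      _ = ∑ J ∈ e.powerset.filter (fun J => 2 ≤ J.card ∧ J.card ≤ r - 1), ∑ g ∈ H,
          (if J ⊆ g then p ^ (2 * r - J.card) else 0) := Finset.sum_comm
      _ ≤ ∑ J ∈ e.powerset.filter (fun J => 2 ≤ J.card ∧ J.card ≤ r - 1),
          p ^ (r + 1) * (p * n) ^ (r - 3) * d := Finset.sum_le_sum (hJb e he)
      _ ≤ _ := by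
          rw [Finset.sum_const, nsmul_eq_mul]
          apply mul_le_mul_of_nonneg_right _ hB0
          have : (e.powerset.filter (fun J => 2 ≤ J.card ∧ J.card ≤ r - 1)).card ≤ 2 ^ r := by
            rw [← hH e he, ← Finset.card_powerset]; exact Finset.card_filter_le _ _
          exact_mod_cast this
  unfold PA
  rw [Finset.sum_filter, Finset.sum_product]
  calc _ ≤ ∑ e ∈ H, 2 ^ r * (p ^ (r + 1) * (p * n) ^ (r - 3) * d) := Finset.sum_le_sum hinner
    _ = H.card * (2 ^ r * (p ^ (r + 1) * (p * n) ^ (r - 3) * d)) := by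
        rw [Finset.sum_const, nsmul_eq_mul]
    _ ≤ _ := mul_le_mul_of_nonneg_right hHc (by positivity)

theorem TB_card (r d : ℕ) (hr : 3 ≤ r) (H : Finset (Finset V)) (hH : ∀ e ∈ H, e.card = r)
    (hd : ∀ S : Finset V, S.card = r - 1 → (H.filter (fun e => S ⊆ e)).card ≤ d) :
    (TB r H).card ≤ (Fintype.card V ^ (r - 1) * d) * ((r * (Fintype.card V ^ (r - 2) * d)) *
      ((r * r) * (Fintype.card V ^ (r - 3) * d))) := by
  set n := Fintype.card V with hn
  have hHc : H.card ≤ n ^ (r - 1) * d := by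
    have := deg_bound r d H hH hd ∅ (by simp)
    simpa using this
  set Fe : Finset V → Finset (Finset V) := fun e => e.biUnion (fun v => H.filter (fun f => {v} ⊆ f)) with hFe
  set Ge : Finset V → Finset V → Finset (Finset V) := fun e f =>
    ((e ×ˢ f).filter (fun x => x.1 ≠ x.2)).biUnion (fun x => H.filter (fun g => {x.1, x.2} ⊆ g)) with hGe
  have hFc : ∀ e ∈ H, (Fe e).card ≤ r * (n ^ (r - 2) * d) := by
    intro e he
    rw [← hH e he]
    apply Finset.card_biUnion_le_card_mul
    intro v hv
    have := deg_bound r d H hH hd {v} (by simp; omega)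
    rw [hH e he]
    simpa [Nat.sub_sub] using this
  have hGc : ∀ e ∈ H, ∀ f ∈ H, (Ge e f).card ≤ (r * r) * (n ^ (r - 3) * d) := by
    intro e he f hf
    refine le_trans (Finset.card_biUnion_le_card_mul _ _ (n ^ (r - 3) * d) ?_) ?_
    · intro x hx
      have hx' := (Finset.mem_filter.1 hx).2
      have hc : ({x.1, x.2} : Finset V).card = 2 := Finset.card_pair hx'
      have := deg_bound r d H hH hd {x.1, x.2} (by omega)
      rw [hc, Nat.sub_sub] at this
      exact this
    · apply Nat.mul_le_mul_right
      refine (Finset.card_filter_le _ _).trans ?_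
      rw [Finset.card_product, hH e he, hH f hf]
  have hsub : TB r H ⊆ H.biUnion (fun e => (Fe e).biUnion (fun f => (Ge e f).image (fun g => (e, f, g)))) := by
    rintro ⟨e, f, g⟩ hx
    simp only [TB, Finset.mem_filter, Finset.mem_product] at hx
    obtain ⟨⟨he, hf, hg⟩, -, ⟨v, hve, hvf⟩, a, ha, b, hb, hab, hag, hbg⟩ := hx
    refine Finset.mem_biUnion.2 ⟨e, he, Finset.mem_biUnion.2 ⟨f, ?_, Finset.mem_image.2 ⟨g, ?_, rfl⟩⟩⟩
    · exact Finset.mem_biUnion.2 ⟨v, hve, Finset.mem_filter.2 ⟨hf, by simpa using hvf⟩⟩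
    · refine Finset.mem_biUnion.2 ⟨(a, b), Finset.mem_filter.2 ⟨Finset.mem_product.2 ⟨ha, hb⟩, hab⟩,
        Finset.mem_filter.2 ⟨hg, ?_⟩⟩
      intro y hy
      simp only [Finset.mem_insert, Finset.mem_singleton] at hy
      rcases hy with rfl | rfl
      · exact hag
      · exact hbg
  refine (Finset.card_le_card hsub).trans ?_
  refine le_trans (Finset.card_biUnion_le_card_mul _ _ ((r * (n ^ (r - 2) * d)) *
      ((r * r) * (n ^ (r - 3) * d))) ?_) (Nat.mul_le_mul_right _ hHc)
  intro e he
  refine le_trans (Finset.card_biUnion_le_card_mul _ _ ((r * r) * (n ^ (r - 3) * d)) ?_)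
    (Nat.mul_le_mul_right _ (hFc e he))
  intro f hf
  obtain ⟨v, _, hfv⟩ := Finset.mem_biUnion.1 hf
  exact Finset.card_image_le.trans (hGc e he f (Finset.mem_filter.1 hfv).1)

theorem bad_exp (r d : ℕ) (hr : 3 ≤ r) (H : Finset (Finset V)) (hH : ∀ e ∈ H, e.card = r)
    (hd : ∀ S : Finset V, S.card = r - 1 → (H.filter (fun e => S ⊆ e)).card ≤ d)
    (p : ℝ) (h0 : 0 ≤ p) (h1 : p ≤ 1) (hM : 1 ≤ p * Fintype.card V) :
    ∑ U ∈ (Finset.univ : Finset V).powerset,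
      wt p U * ((U.filter (fun v => ¬ IsGood H U v)).card : ℝ) ≤
    r * 2 ^ r * (p * Fintype.card V) ^ (2 * r - 4) * (p * d) ^ 2 +
      r ^ 4 * (p * Fintype.card V) ^ (3 * r - 6) * (p * d) ^ 3 := by
  have hpa := PA_sum r d hr H hH hd p h0 hM
  have htb : ((TB r H).card : ℝ) ≤ ((Fintype.card V : ℝ) ^ (r - 1) * d) * ((r * ((Fintype.card V : ℝ) ^ (r - 2) * d)) *
      ((r * r) * ((Fintype.card V : ℝ) ^ (r - 3) * d))) := by exact_mod_cast TB_card r d hr H hH hd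
  set n := Fintype.card V with hn
  have htb2 : ∑ x ∈ TB r H, p ^ (x.1 ∪ x.2.1 ∪ x.2.2).card ≤ (TB r H).card * p ^ (3 * r - 3) := by
    rw [← nsmul_eq_mul]
    apply Finset.sum_le_card_nsmul
    intro x hx
    exact pow_le_pow_of_le_one h0 h1 (Finset.mem_filter.1 hx).2.1
  calc _ ≤ ∑ U ∈ (Finset.univ : Finset V).powerset, wt p U * ((∑ x ∈ PA H, (r : ℝ) * (if x.1 ∪ x.2 ⊆ U then 1 else 0)) +
      ∑ x ∈ TB r H, (r : ℝ) * (if x.1 ∪ x.2.1 ∪ x.2.2 ⊆ U then 1 else 0)) :=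
        Finset.sum_le_sum (fun U _ => mul_le_mul_of_nonneg_left (bad_pointwise r H hH U) (wt_nonneg h0 h1 U))
    _ = r * (∑ x ∈ PA H, p ^ (x.1 ∪ x.2).card) + r * ∑ x ∈ TB r H, p ^ (x.1 ∪ x.2.1 ∪ x.2.2).card := by
        simp only [mul_add, Finset.sum_add_distrib, Finset.mul_sum]
        congr 1
        · rw [Finset.sum_comm]
          apply Finset.sum_congr rfl
          intro x _
          rw [← wt_subset (V := V), Finset.mul_sum]
          apply Finset.sum_congr rfl
          intros; ring
        · rw [Finset.sum_comm]
          apply Finset.sum_congr rfl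
          intro x _
          rw [← wt_subset (V := V), Finset.mul_sum]
          apply Finset.sum_congr rfl
          intros; ring
    _ ≤ r * (((n : ℝ) ^ (r - 1) * d) * (2 ^ r * (p ^ (r + 1) * (p * n) ^ (r - 3) * d))) +
        r * ((((n : ℝ) ^ (r - 1) * d) * ((r * ((n : ℝ) ^ (r - 2) * d)) *
      ((r * r) * ((n : ℝ) ^ (r - 3) * d)))) * p ^ (3 * r - 3)) := by
        apply add_le_add
        · exact mul_le_mul_of_nonneg_left hpa (Nat.cast_nonneg _)
        · apply mul_le_mul_of_nonneg_left _ (Nat.cast_nonneg _)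
          exact htb2.trans (mul_le_mul_of_nonneg_right htb (pow_nonneg h0 _))
    _ = _ := by
        obtain ⟨k, rfl⟩ : ∃ k, r = k + 3 := ⟨r - 3, by omega⟩
        have e1 : k + 3 - 1 = k + 2 := by omega
        have e2 : k + 3 - 2 = k + 1 := by omega
        have e3 : k + 3 - 3 = k := by omega
        have e4 : 3 * (k + 3) - 3 = 3 * k + 6 := by omega
        have e5 : 2 * (k + 3) - 4 = 2 * k + 2 := by omega
        have e6 : 3 * (k + 3) - 6 = 3 * k + 3 := by omega
        rw [e1, e2, e3, e4, e5, e6]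
        push_cast
        ring

end Bad

section Core
variable {V : Type*} [Fintype V] [DecidableEq V]

theorem dg_mono (H : Finset (Finset V)) {W W' : Finset V} (h : W ⊆ W') (v : V) :
    dg H W v ≤ dg H W' v := by
  apply Finset.card_le_card
  intro e he
  have he' := Finset.mem_filter.1 he
  exact Finset.mem_filter.2 ⟨he'.1, he'.2.1, he'.2.2.trans h⟩

theorem core (r ℓ d : ℕ) (hr : 2 ≤ r) (hℓ : 1 ≤ ℓ) (H : Finset (Finset V))
    (hH : ∀ e ∈ H, e.card = r)
    (hd : ∀ S : Finset V, S.card = r - 1 → (H.filter (fun e => S ⊆ e)).card ≤ d)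
    (hα : ∀ W : Finset V, IsIndep H W → W.card ≤ d) (hdn : d ≤ Fintype.card V)
    (p : ℝ) (h0 : 0 ≤ p) (h1 : p ≤ 1) (hM : 1 ≤ p * Fintype.card V)
    (K : ℝ) (hK : (d : ℝ) ^ r * p ≤ K * ℓ)
    (hbad : ∑ U ∈ (Finset.univ : Finset V).powerset,
      wt p U * ((U.filter (fun v => ¬ IsGood H U v)).card : ℝ) ≤ p * Fintype.card V / 4)
    (htail : (Fintype.card V : ℝ) * ((Fintype.card V : ℝ) ^ d * Real.exp (-K)) ≤
      p * Fintype.card V / 4) :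
    (ℓ : ℝ) * (p * Fintype.card V / 2) ≤ 2 ^ r * (4 ^ ℓ * d + 3 * K * ℓ) := by
  set n := Fintype.card V with hn
  set 𝒲 := (Finset.univ : Finset V).powersetCard d with h𝒲
  have h𝒲c : (𝒲.card : ℝ) ≤ (n : ℝ) ^ d := by
    rw [h𝒲, Finset.card_powersetCard, Finset.card_univ]
    exact_mod_cast Nat.choose_le_pow _ _
  set ind : Finset V → Finset V → ℝ := fun W U =>
    if 3 * K * ℓ < ∑ v ∈ U, ((min ℓ (dg H W v) : ℕ) : ℝ) then 1 else 0 with hind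
  have hind0 : ∀ W U, 0 ≤ ind W U := by
    intro W U; simp only [hind]; split_ifs <;> norm_num
  set val : Finset V → ℝ := fun U =>
    (U.card : ℝ) - ((U.filter (fun v => ¬ IsGood H U v)).card : ℝ) - n * ∑ W ∈ 𝒲, ind W U with hval
  have hone : ∀ W ∈ 𝒲, ∑ U ∈ (Finset.univ : Finset V).powerset, wt p U * ind W U ≤ Real.exp (-K) := by
    intro W hW
    apply tail_one h0 h1 ℓ hℓ (fun v => min ℓ (dg H W v)) (fun v => min_le_left _ _)
    refine le_trans (mul_le_mul_of_nonneg_right ?_ h0) hK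
    have h2 := dg_sum r d (by omega) H hH hd W (Finset.mem_powersetCard.1 hW).2.le
    have h3 : ∑ v, min ℓ (dg H W v) ≤ d ^ r :=
      (Finset.sum_le_sum (fun v _ => min_le_right _ _)).trans h2
    exact_mod_cast h3
  have hE : p * n / 2 ≤ ∑ U ∈ (Finset.univ : Finset V).powerset, wt p U * val U := by
    have e1 : ∑ U ∈ (Finset.univ : Finset V).powerset, wt p U * val U =
        (∑ U ∈ (Finset.univ : Finset V).powerset, wt p U * (U.card : ℝ))
        - (∑ U ∈ (Finset.univ : Finset V).powerset,
            wt p U * ((U.filter (fun v => ¬ IsGood H U v)).card : ℝ))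
        - n * ∑ W ∈ 𝒲, ∑ U ∈ (Finset.univ : Finset V).powerset, wt p U * ind W U := by
      rw [Finset.sum_comm, Finset.mul_sum, ← Finset.sum_sub_distrib, ← Finset.sum_sub_distrib]
      apply Finset.sum_congr rfl
      intro U _
      simp only [hval]
      rw [← Finset.mul_sum]
      ring
    rw [e1, wt_card]
    have e2 : ∑ W ∈ 𝒲, ∑ U ∈ (Finset.univ : Finset V).powerset, wt p U * ind W U ≤
        (n:ℝ) ^ d * Real.exp (-K) := by
      calc _ ≤ ∑ W ∈ 𝒲, Real.exp (-K) := Finset.sum_le_sum hone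
        _ = 𝒲.card * Real.exp (-K) := by rw [Finset.sum_const, nsmul_eq_mul]
        _ ≤ _ := mul_le_mul_of_nonneg_right h𝒲c (Real.exp_pos _).le
    have e3 := mul_le_mul_of_nonneg_left e2 (Nat.cast_nonneg n : (0:ℝ) ≤ n)
    linarith
  have hex : ∃ U : Finset V, p * n / 2 ≤ val U := by
    obtain ⟨U, _, hU⟩ := Finset.exists_max_image (Finset.univ : Finset V).powerset val
      ⟨∅, by simp⟩
    refine ⟨U, hE.trans ?_⟩
    calc _ ≤ ∑ U' ∈ (Finset.univ : Finset V).powerset, wt p U' * val U :=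
          Finset.sum_le_sum (fun U' h => mul_le_mul_of_nonneg_left (hU U' h) (wt_nonneg h0 h1 U'))
      _ = val U := by rw [← Finset.sum_mul, wt_sum, one_mul]
  obtain ⟨U, hU⟩ := hex
  have hUn : (U.card : ℝ) ≤ n := by exact_mod_cast Finset.card_le_univ U
  have hbn : (0:ℝ) ≤ ((U.filter (fun v => ¬ IsGood H U v)).card : ℝ) := Nat.cast_nonneg _
  have hsn : 0 ≤ ∑ W ∈ 𝒲, ind W U := Finset.sum_nonneg (fun W _ => hind0 W U)
  have hY : ∀ W ∈ 𝒲, ∑ v ∈ U, ((min ℓ (dg H W v) : ℕ) : ℝ) ≤ 3 * K * ℓ := by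
    intro W hW
    by_contra hcon
    have hi : ind W U = 1 := by simp only [hind]; rw [if_pos (not_le.1 hcon)]
    have h2 : 1 ≤ ∑ W ∈ 𝒲, ind W U := by
      rw [← hi]; exact Finset.single_le_sum (f := fun W => ind W U) (fun W _ => hind0 W U) hW
    have h3 := mul_le_mul_of_nonneg_left h2 (Nat.cast_nonneg n : (0:ℝ) ≤ n)
    simp only [hval] at hU
    linarith
  set G := U.filter (fun v => IsGood H U v) with hG
  have hGc : p * n / 2 ≤ (G.card : ℝ) := by
    have h2 := Finset.card_filter_add_card_filter_not (s := U) (fun v => IsGood H U v)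
    have h3 : (G.card : ℝ) + ((U.filter (fun v => ¬ IsGood H U v)).card : ℝ) = U.card := by
      exact_mod_cast h2
    have h4 := mul_nonneg (Nat.cast_nonneg n : (0:ℝ) ≤ n) hsn
    simp only [hval] at hU
    linarith
  set I := U.powerset.filter (fun Z => IsIndep H Z) with hI
  have hIpos : (0:ℝ) < I.card := by
    have : (∅ : Finset V) ∈ I := by
      refine Finset.mem_filter.2 ⟨by simp, ?_⟩
      intro e he hs
      have := hH e he
      rw [Finset.subset_empty.1 hs] at this
      simp at this; omega
    exact_mod_cast Finset.card_pos.2 ⟨_, this⟩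
  have hW : ∀ W ∈ I, ∑ v ∈ G, ((4:ℝ) ^ ℓ * (if v ∈ W then 1 else 0) + ((min ℓ (dg H W v) : ℕ) : ℝ))
      ≤ 4 ^ ℓ * d + 3 * K * ℓ := by
    intro W hW
    have hWd := hα W (Finset.mem_filter.1 hW).2
    rw [Finset.sum_add_distrib]
    apply add_le_add
    · rw [← Finset.mul_sum]
      apply mul_le_mul_of_nonneg_left _ (by positivity)
      rw [← Finset.natCast_card_filter]
      have : (G.filter (fun v => v ∈ W)).card ≤ W.card := by
        apply Finset.card_le_card
        intro v hv; exact (Finset.mem_filter.1 hv).2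
      exact_mod_cast this.trans hWd
    · obtain ⟨W', hWW', hW'c⟩ := Finset.exists_superset_card_eq hWd hdn
      refine le_trans ?_ (hY W' (Finset.mem_powersetCard.2 ⟨Finset.subset_univ _, hW'c⟩))
      calc _ ≤ ∑ v ∈ G, ((min ℓ (dg H W' v) : ℕ) : ℝ) := by
            apply Finset.sum_le_sum
            intro v _
            exact_mod_cast min_le_min le_rfl (dg_mono H hWW' v)
        _ ≤ _ := Finset.sum_le_sum_of_subset_of_nonneg (Finset.filter_subset _ _)
            (fun _ _ _ => Nat.cast_nonneg _)
  have hloc : ∀ v ∈ G, (ℓ : ℝ) * I.card ≤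
      2 ^ r * ∑ W ∈ I, ((4:ℝ) ^ ℓ * (if v ∈ W then 1 else 0) + ((min ℓ (dg H W v) : ℕ) : ℝ)) := by
    intro v hv
    have hv' := Finset.mem_filter.1 hv
    have := local_good r ℓ hr H hH U v hv'.1 hv'.2
    have h2 : ((ℓ * I.card : ℕ) : ℝ) ≤ ((2 ^ r * ∑ W ∈ I,
        (4 ^ ℓ * (if v ∈ W then 1 else 0) + min ℓ (dg H W v)) : ℕ) : ℝ) := Nat.cast_le.2 this
    push_cast at h2 ⊢
    exact h2
  have hfin : (G.card : ℝ) * (ℓ * I.card) ≤ I.card * (2 ^ r * (4 ^ ℓ * d + 3 * K * ℓ)) := by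
    calc (G.card : ℝ) * (ℓ * I.card) = ∑ v ∈ G, (ℓ : ℝ) * I.card := by
          rw [Finset.sum_const, nsmul_eq_mul]
      _ ≤ ∑ v ∈ G, 2 ^ r * ∑ W ∈ I, ((4:ℝ) ^ ℓ * (if v ∈ W then 1 else 0) + ((min ℓ (dg H W v) : ℕ) : ℝ)) :=
          Finset.sum_le_sum hloc
      _ = 2 ^ r * ∑ W ∈ I, ∑ v ∈ G, ((4:ℝ) ^ ℓ * (if v ∈ W then 1 else 0) + ((min ℓ (dg H W v) : ℕ) : ℝ)) := by
          rw [← Finset.mul_sum, Finset.sum_comm]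
      _ ≤ 2 ^ r * ∑ W ∈ I, (4 ^ ℓ * d + 3 * K * ℓ) :=
          mul_le_mul_of_nonneg_left (Finset.sum_le_sum hW) (by positivity)
      _ = _ := by rw [Finset.sum_const, nsmul_eq_mul]; ring
  have h5 : (p * n / 2) * (ℓ * I.card) ≤ I.card * (2 ^ r * (4 ^ ℓ * d + 3 * K * ℓ)) :=
    (mul_le_mul_of_nonneg_right hGc (by positivity)).trans hfin
  have h6 : I.card * ((ℓ : ℝ) * (p * n / 2)) ≤ I.card * (2 ^ r * (4 ^ ℓ * d + 3 * K * ℓ)) := by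
    linarith
  exact le_of_mul_le_mul_left h6 hIpos

end Core

section Final
variable {V : Type*} [Fintype V] [DecidableEq V]

theorem indep_le (H : Finset (Finset V)) (W : Finset V) (h : IsIndep H W) :
    W.card ≤ indepNum H := by
  unfold indepNum
  exact Finset.le_sup (f := Finset.card) (Finset.mem_filter.2 ⟨by simp, h⟩)

theorem indepNum_le (H : Finset (Finset V)) : indepNum H ≤ Fintype.card V := by
  unfold indepNum
  exact Finset.sup_le (fun W _ => Finset.card_le_univ W)

theorem codeg_le (r : ℕ) (hr : 2 ≤ r) (H : Finset (Finset V)) (hH : ∀ e ∈ H, e.card = r)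
    (hI : HasIndepNbhds r H) (S : Finset V) (hS : S.card = r - 1) :
    (H.filter (fun e => S ⊆ e)).card ≤ indepNum H := by
  refine le_trans ?_ (indep_le H _ (hI S hS))
  have : H.filter (fun e => S ⊆ e) ⊆
      ((Finset.univ : Finset V).filter (fun v => insert v S ∈ H)).image (fun v => insert v S) := by
    intro e he
    have he' := Finset.mem_filter.1 he
    have hc : (e \ S).card = 1 := by
      rw [Finset.card_sdiff_of_subset he'.2, hH e he'.1, hS]; omega
    obtain ⟨v, hv⟩ := Finset.card_eq_one.1 hc
    have hins : insert v S = e := by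
      rw [Finset.insert_eq, ← hv]; exact Finset.sdiff_union_of_subset he'.2
    refine Finset.mem_image.2 ⟨v, Finset.mem_filter.2 ⟨Finset.mem_univ _, ?_⟩, hins⟩
    rw [hins]; exact he'.1
  exact (Finset.card_le_card this).trans Finset.card_image_le

theorem good_two (H : Finset (Finset V)) (hH : ∀ e ∈ H, e.card = 2)
    (hI : HasIndepNbhds 2 H) (U : Finset V) (v : V) : IsGood H U v := by
  intro g hg hgU hvg a ha b hb haN hbN
  by_contra hab
  have key : ∀ a, a ∈ nb H U v → insert a {v} ∈ H := by
    intro a ha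
    simp only [nb, Finset.mem_filter] at ha
    obtain ⟨-, hav, e, he, -, hve, hae⟩ := ha
    have : insert a {v} = e := by
      apply Finset.eq_of_subset_of_card_le
      · intro y hy
        simp only [Finset.mem_insert, Finset.mem_singleton] at hy
        rcases hy with rfl | rfl
        · exact hae
        · exact hve
      · rw [hH e he, Finset.card_pair hav]
    rw [this]; exact he
  have hgab : {a, b} = g := by
    apply Finset.eq_of_subset_of_card_le
    · intro y hy
      simp only [Finset.mem_insert, Finset.mem_singleton] at hy
      rcases hy with rfl | rfl
      · exact ha
      · exact hb
    · rw [hH g hg, Finset.card_pair hab]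
  apply hI {v} (by simp) g hg
  rw [← hgab]
  intro y hy
  simp only [Finset.mem_insert, Finset.mem_singleton] at hy
  rcases hy with rfl | rfl
  · exact Finset.mem_filter.2 ⟨Finset.mem_univ _, key _ haN⟩
  · exact Finset.mem_filter.2 ⟨Finset.mem_univ _, key _ hbN⟩

end Final

set_option maxHeartbeats 2000000 in
theorem large_n (r : ℕ) (hr : 2 ≤ r) {V : Type*} [Fintype V] [DecidableEq V] (H : Finset (Finset V))
    (hH : ∀ e ∈ H, e.card = r) (hI : HasIndepNbhds r H) (x δ : ℝ)
    (hδ : δ = 1 / 2 ^ (r + 4))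
    (hxn : (Fintype.card V : ℝ) = x ^ (8 * r ^ 2))
    (hx4 : 4 ≤ x) (hx : 4 * (r * 2 ^ r + r ^ 4) ≤ x)
    (hlog : Real.log (Fintype.card V) ≤ δ ^ r * x / 2)
    (hα : (indepNum H : ℝ) ^ r ≤ δ / (32 * r ^ 2) * ((Fintype.card V : ℝ) * Real.log (Fintype.card V))) :
    False := by
  set d := indepNum H with hd
  set n : ℝ := (Fintype.card V : ℝ) with hn
  have hr' : (2:ℝ) ≤ r := by exact_mod_cast hr
  have hδ0 : 0 < δ := by rw [hδ]; positivity
  have hδ1 : δ ≤ 1 := by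
    rw [hδ, div_le_one (by positivity)]
    exact one_le_pow₀ (by norm_num)
  have hx0 : 0 < x := by linarith
  have hx1 : 1 ≤ x := by linarith
  have hn0 : 0 < n := by rw [hxn]; positivity
  set M : ℝ := x ^ (8 * r + 2) with hM
  have hM0 : 0 < M := by positivity
  have hMx : x ≤ M := by
    calc x = x ^ 1 := (pow_one x).symm
      _ ≤ _ := pow_le_pow_right₀ hx1 (by omega)
  set p : ℝ := M / n with hp
  have hpn : p * n = M := by rw [hp]; field_simp
  have hp0 : 0 ≤ p := by positivity
  have hp1 : p ≤ 1 := by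
    rw [hp, div_le_one hn0, hxn]
    exact pow_le_pow_right₀ hx1 (by nlinarith)
  have hlogn0 : 0 ≤ Real.log n := Real.log_natCast_nonneg _
  have hlogn : Real.log n = 8 * r ^ 2 * Real.log x := by
    rw [hxn, Real.log_pow]; push_cast; ring
  -- bound on d
  have hdr : (d:ℝ) ^ r ≤ (δ * x ^ (8 * r + 1)) ^ r := by
    calc (d:ℝ) ^ r ≤ δ / (32 * r ^ 2) * (n * Real.log n) := hα
      _ ≤ 1 * (n * Real.log n) := by
          apply mul_le_mul_of_nonneg_right _ (by positivity)
          rw [div_le_one (by positivity)]; nlinarith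
      _ ≤ 1 * (n * (δ ^ r * x / 2)) := by gcongr
      _ ≤ n * (δ ^ r * x ^ r) := by
          have h1 : x ≤ x ^ r := by
            calc x = x ^ 1 := (pow_one x).symm
              _ ≤ _ := pow_le_pow_right₀ hx1 (by omega)
          have h2 : δ ^ r * x ≤ δ ^ r * x ^ r := mul_le_mul_of_nonneg_left h1 (by positivity)
          have h3 : 0 ≤ δ ^ r * x := by positivity
          rw [one_mul]
          apply mul_le_mul_of_nonneg_left _ hn0.le
          linarith
      _ = _ := by
          rw [hxn, mul_pow, ← pow_mul]
          have : (8 * r + 1) * r = 8 * r ^ 2 + r := by ring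
          rw [this, pow_add]; ring
  have hdx : (d:ℝ) ≤ δ * x ^ (8 * r + 1) :=
    le_of_pow_le_pow_left₀ (by omega) (by positivity) hdr
  have hMx1 : M = x ^ (8 * r + 1) * x := by rw [hM, pow_succ]
  have hX0 : 0 < x ^ (8 * r + 1) := by positivity
  have hX1 : 1 ≤ x ^ (8 * r + 1) := one_le_pow₀ hx1
  have hdX : (d:ℝ) ≤ x ^ (8 * r + 1) := by nlinarith
  have hdM : (d:ℝ) ≤ M := by rw [hMx1]; nlinarith
  -- ℓ
  have hlog4 : Real.log 4 = 2 * Real.log 2 := by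
    rw [show (4:ℝ) = 2 ^ 2 by norm_num, Real.log_pow]; norm_num
  have hl2 := Real.log_two_lt_d9
  have hl2' := Real.log_two_gt_d9
  have hlog4p : 0 < Real.log 4 := by rw [hlog4]; linarith
  set ℓ := ⌊Real.log x / Real.log 4⌋₊ with hℓ
  have hℓ1 : 1 ≤ ℓ := by
    rw [hℓ, Nat.one_le_floor_iff, le_div_iff₀ hlog4p, one_mul]
    exact Real.log_le_log (by norm_num) hx4
  have hℓ1' : (1:ℝ) ≤ ℓ := by exact_mod_cast hℓ1
  have hlx0 : 0 ≤ Real.log x := Real.log_nonneg hx1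
  have hℓx : (4:ℝ) ^ ℓ ≤ x := by
    have h1 : (ℓ:ℝ) ≤ Real.log x / Real.log 4 := Nat.floor_le (by positivity)
    rw [le_div_iff₀ hlog4p] at h1
    rw [← Real.log_le_log_iff (by positivity) hx0, Real.log_pow]
    exact h1
  have hxℓ : Real.log x ≤ 4 * ℓ := by
    have h1 : Real.log x / Real.log 4 < ℓ + 1 := Nat.lt_floor_add_one _
    rw [div_lt_iff₀ hlog4p] at h1
    nlinarith
  have hdK : (d:ℝ) ^ r ≤ δ * n * ℓ := by
    calc (d:ℝ) ^ r ≤ δ / (32 * r ^ 2) * (n * Real.log n) := hα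
      _ ≤ δ / (32 * r ^ 2) * (n * (8 * r ^ 2 * (4 * ℓ))) := by
          rw [hlogn]; gcongr
      _ = _ := by field_simp; ring
  have hc := core r ℓ d hr hℓ1 H hH (codeg_le r hr H hH hI) (indep_le H) (indepNum_le H)
    p hp0 hp1 (by rw [hpn]; linarith) (δ * M)
    (by
      calc (d:ℝ) ^ r * p ≤ δ * n * ℓ * p := mul_le_mul_of_nonneg_right hdK hp0
        _ = δ * (p * n) * ℓ := by ring
        _ = _ := by rw [hpn])
    (by
      rw [← hn, hpn]
      rcases Nat.lt_or_ge r 3 with h | h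
      · have : r = 2 := by omega
        subst this
        have : ∀ U : Finset V, U.filter (fun v => ¬ IsGood H U v) = ∅ := by
          intro U
          apply Finset.filter_eq_empty_iff.2
          intro v _ hv
          exact hv (good_two H hH hI U v)
        simp only [this]
        simp
        positivity
      · refine (bad_exp r d h H hH (codeg_le r hr H hH hI) p hp0 hp1 (by rw [← hn, hpn]; linarith)).trans ?_
        rw [← hn, hpn]
        have hpd : p * d ≤ M ^ 2 / n := by
          rw [hp, div_mul_eq_mul_div, pow_two]
          gcongr
        have hpd0 : 0 ≤ p * d := by positivity
        have b1 : M ^ (2 * r - 4) * (p * d) ^ 2 ≤ x ^ (8 * r + 1) := by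
          calc _ ≤ M ^ (2 * r - 4) * (M ^ 2 / n) ^ 2 := by gcongr
            _ = M ^ (2 * r) / n ^ 2 := by
                have hsplit : M ^ (2 * r) = M ^ (2 * r - 4) * M ^ 4 := by
                  rw [← pow_add]; congr 1; omega
                rw [hsplit]; ring
            _ = x ^ (4 * r) := by
                rw [hxn, hM, ← pow_mul, ← pow_mul, div_eq_iff (by positivity), ← pow_add]
                congr 1; ring
            _ ≤ _ := pow_le_pow_right₀ hx1 (by omega)
        have b2 : M ^ (3 * r - 6) * (p * d) ^ 3 ≤ x ^ (8 * r + 1) := by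
          calc _ ≤ M ^ (3 * r - 6) * (M ^ 2 / n) ^ 3 := by gcongr
            _ = M ^ (3 * r) / n ^ 3 := by
                have hsplit : M ^ (3 * r) = M ^ (3 * r - 6) * M ^ 6 := by
                  rw [← pow_add]; congr 1; omega
                rw [hsplit]; ring
            _ = x ^ (6 * r) := by
                rw [hxn, hM, ← pow_mul, ← pow_mul, div_eq_iff (by positivity), ← pow_add]
                congr 1; ring
            _ ≤ _ := pow_le_pow_right₀ hx1 (by omega)
        calc _ = (r * 2 ^ r) * (M ^ (2 * r - 4) * (p * d) ^ 2) + r ^ 4 * (M ^ (3 * r - 6) * (p * d) ^ 3) := by ring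
          _ ≤ (r * 2 ^ r) * x ^ (8 * r + 1) + r ^ 4 * x ^ (8 * r + 1) := by gcongr
          _ = (r * 2 ^ r + r ^ 4) * x ^ (8 * r + 1) := by ring
          _ ≤ x / 4 * x ^ (8 * r + 1) := by
              apply mul_le_mul_of_nonneg_right _ hX0.le
              linarith
          _ = M / 4 := by rw [hMx1]; ring)
    (by
      rw [← hn, hpn]
      have h1 : n * (n ^ d * Real.exp (-(δ * M))) = Real.exp ((d + 1) * Real.log n - δ * M) := by
        rw [sub_eq_add_neg, Real.exp_add, add_mul, Real.exp_add, one_mul, Real.exp_log hn0,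
          Real.exp_nat_mul, Real.exp_log hn0]
        ring
      have h2 : (d + 1) * Real.log n ≤ δ * M := by
        have hδr : δ ^ r ≤ δ := by
          calc δ ^ r ≤ δ ^ 1 := pow_le_pow_of_le_one hδ0.le hδ1 (by omega)
            _ = δ := pow_one _
        calc (d + 1) * Real.log n ≤ (2 * x ^ (8 * r + 1)) * (δ * x / 2) := by
              apply mul_le_mul _ _ hlogn0 (by positivity)
              · linarith
              · refine hlog.trans ?_
                have := mul_le_mul_of_nonneg_right hδr hx0.le
                linarith
          _ = δ * M := by rw [hMx1]; ring
      rw [h1]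
      have h3 : Real.exp ((d + 1) * Real.log n - δ * M) ≤ 1 := by
        rw [Real.exp_le_one_iff]; linarith
      linarith)
  rw [← hn, hpn] at hc
  have hfin : (4:ℝ) ^ ℓ * d + 3 * (δ * M) * ℓ ≤ 4 * (δ * M * ℓ) := by
    have h1 : (4:ℝ) ^ ℓ * d ≤ x * (δ * x ^ (8 * r + 1)) := by gcongr
    have h2 : x * (δ * x ^ (8 * r + 1)) = δ * M := by rw [hMx1]; ring
    have h3 : δ * M ≤ δ * M * ℓ := le_mul_of_one_le_right (by positivity) hℓ1'
    linarith
  have h4 : (2:ℝ) ^ r * (4 * (δ * M * ℓ)) = M * ℓ / 4 := by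
    rw [hδ, pow_add]; field_simp; norm_num
  have h5 := mul_le_mul_of_nonneg_left hfin (by positivity : (0:ℝ) ≤ 2 ^ r)
  have h6 : 0 < M * ℓ := by positivity
  nlinarith

theorem exists_n0 (r : ℕ) (hr : 2 ≤ r) (A B : ℝ) (hB : 0 < B) : ∃ n0 : ℕ, ∀ n : ℕ, n0 ≤ n →
    A ≤ (n:ℝ) ^ (1 / (8 * (r:ℝ) ^ 2)) ∧ Real.log n ≤ B * (n:ℝ) ^ (1 / (8 * (r:ℝ) ^ 2)) := by
  have hs : 0 < 1 / (8 * (r:ℝ) ^ 2) := by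
    have : (0:ℝ) < r := by exact_mod_cast (by omega : 0 < r)
    positivity
  have h1 := (tendsto_rpow_atTop hs).eventually_ge_atTop A
  have h2 := (isLittleO_log_rpow_atTop hs).bound hB
  have h3 := tendsto_natCast_atTop_atTop (R := ℝ) |>.eventually (h1.and h2)
  obtain ⟨n0, hn0⟩ := Filter.eventually_atTop.1 h3
  refine ⟨n0, fun n hn => ?_⟩
  obtain ⟨ha, hb⟩ := hn0 n hn
  refine ⟨ha, ?_⟩
  rw [Real.norm_of_nonneg (Real.log_natCast_nonneg n), Real.norm_of_nonneg (by positivity)] at hb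
  exact hb

/-- For every `r ≥ 2` there is `c > 0` such that every `r`-graph on `n ≥ 2`
vertices with independent neighborhoods has `α(H) ≥ c·(n·log n)^(1/r)`. -/
theorem stmt7 (r : ℕ) (hr : 2 ≤ r) :
    ∃ c : ℝ, 0 < c ∧
      ∀ (V : Type) [Fintype V] [DecidableEq V], ∀ (H : Finset (Finset V)),
        2 ≤ Fintype.card V →
        (∀ e ∈ H, e.card = r) →
        HasIndepNbhds r H →
        c * ((Fintype.card V : ℝ) * Real.log (Fintype.card V)) ^ ((1 : ℝ) / r)
          ≤ (indepNum H : ℝ) := by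
  obtain ⟨δ, hδ⟩ : ∃ δ : ℝ, δ = 1 / 2 ^ (r + 4) := ⟨_, rfl⟩
  have hδ0 : 0 < δ := by rw [hδ]; positivity
  have hδ1 : δ ≤ 1 := by
    rw [hδ, div_le_one (by positivity)]
    exact one_le_pow₀ (by norm_num)
  have hr' : (2:ℝ) ≤ r := by exact_mod_cast hr
  obtain ⟨n0, hn0⟩ := exists_n0 r hr (4 + 4 * (r * 2 ^ r + r ^ 4)) (δ ^ r / 2) (by positivity)
  set c1 : ℝ := δ / (32 * r ^ 2) with hc1
  have hc10 : 0 < c1 := by positivity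
  have hc11 : c1 ≤ 1 := by
    rw [hc1, div_le_one (by positivity)]; nlinarith
  refine ⟨min c1 (1 / (1 + (n0:ℝ) ^ 2)), by positivity, ?_⟩
  intro V _ _ H hV hH hI
  set n := Fintype.card V with hn
  have hn2 : (2:ℝ) ≤ n := by exact_mod_cast hV
  have hlog0 : 0 ≤ Real.log n := Real.log_natCast_nonneg _
  set y := ((n:ℝ) * Real.log n) ^ ((1:ℝ) / r) with hy
  have hy0 : 0 ≤ y := by positivity
  rcases Nat.lt_or_ge n n0 with hlt | hge
  · have hα1 : (1:ℝ) ≤ indepNum H := by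
      have : Nonempty V := Fintype.card_pos_iff.1 (by omega)
      obtain ⟨v⟩ := this
      have : ({v} : Finset V).card ≤ indepNum H := by
        apply indep_le
        intro e he hs
        have h1 := Finset.card_le_card hs
        rw [hH e he, Finset.card_singleton] at h1
        omega
      rw [Finset.card_singleton] at this
      exact_mod_cast this
    refine le_trans ?_ hα1
    have hyb : y ≤ 1 + (n0:ℝ) ^ 2 := by
      have h1 : (n:ℝ) * Real.log n ≤ 1 + (n0:ℝ) ^ 2 := by
        have h2 : Real.log n ≤ n := (Real.log_le_sub_one_of_pos (by linarith)).trans (by linarith)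
        have h3 : (n:ℝ) ≤ n0 := by exact_mod_cast hlt.le
        nlinarith
      calc y ≤ (1 + (n0:ℝ) ^ 2) ^ ((1:ℝ) / r) :=
            Real.rpow_le_rpow (by positivity) h1 (by positivity)
        _ ≤ (1 + (n0:ℝ) ^ 2) ^ (1:ℝ) := by
            apply Real.rpow_le_rpow_of_exponent_le
            · nlinarith [sq_nonneg (n0:ℝ)]
            · rw [div_le_one (by linarith)]; linarith
        _ = _ := Real.rpow_one _
    calc min c1 (1 / (1 + (n0:ℝ) ^ 2)) * y ≤ (1 / (1 + (n0:ℝ) ^ 2)) * (1 + (n0:ℝ) ^ 2) :=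
          mul_le_mul (min_le_right _ _) hyb hy0 (by positivity)
      _ = 1 := by field_simp
  · refine le_trans (mul_le_mul_of_nonneg_right (min_le_left _ _) hy0) ?_
    by_contra hcon
    push Not at hcon
    obtain ⟨hxA, hxB⟩ := hn0 n hge
    have hpos : (0:ℝ) ≤ r * 2 ^ r + r ^ 4 := by positivity
    refine large_n r hr H hH hI ((n:ℝ) ^ (1 / (8 * (r:ℝ) ^ 2))) δ hδ ?_ ?_ ?_ ?_ ?_
    · rw [← Real.rpow_natCast, ← Real.rpow_mul (by positivity)]
      push_cast
      rw [one_div, inv_mul_cancel₀ (by positivity), Real.rpow_one]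
    · linarith
    · linarith
    · linarith
    · calc (indepNum H : ℝ) ^ r ≤ (c1 * y) ^ r := pow_le_pow_left₀ (Nat.cast_nonneg _) hcon.le _
        _ = c1 ^ r * (n * Real.log n) := by
            rw [mul_pow, hy, ← Real.rpow_natCast (_ ^ _), ← Real.rpow_mul (by positivity), one_div,
              inv_mul_cancel₀ (by positivity), Real.rpow_one]
        _ ≤ c1 * (n * Real.log n) := by
            apply mul_le_mul_of_nonneg_right _ (by positivity)
            calc c1 ^ r ≤ c1 ^ 1 := pow_le_pow_of_le_one hc10.le hc11 (by omega)
              _ = c1 := pow_one _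
end

section
/- For every integer r ≥ 2 there exists a constant C > 0 such that for every integer t ≥ 2 and every integer N ≥ C·t^r/log t, every r-graph G on N vertices either contains a copy of T_r or has an independent set of size t. In other words, the Ramsey number R(T_r, K_t^{(r)}) is O(t^r/log t). -/
open Finset
open scoped Classical

/-- `G` contains a copy of `T_r`: there are disjoint vertex sets `S`, `R` with
`|S| = r−1`, `|R| = r`, such that `R ∈ G` and `S ∪ {v} ∈ G` for every `v ∈ R`. -/
def ContainsTr {V : Type*} [DecidableEq V] (r : ℕ) (G : Finset (Finset V)) : Prop :=
  ∃ S R : Finset V, Disjoint S R ∧ S.card = r - 1 ∧ R.card = r ∧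
    R ∈ G ∧ ∀ v ∈ R, insert v S ∈ G


namespace TrProof

variable {α : Type*} [DecidableEq α]

lemma card_superset_le (A : Finset (Finset α)) (e : Finset α)
    (h : ∀ W ∈ A, ∀ s, s ⊆ e → W \ s ∈ A) :
    2 ^ e.card * (A.filter (fun W => e ⊆ W)).card ≤ A.card := by
  rw [← Finset.card_powerset, ← Finset.card_product]
  apply Finset.card_le_card_of_injOn (fun x => x.2 \ x.1)
  · rintro ⟨s, W⟩ hx
    simp only [Finset.coe_product, Set.mem_prod, Finset.mem_coe, Finset.mem_powerset,
      Finset.mem_filter] at hx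
    exact h W hx.2.1 s hx.1
  · rintro ⟨s, W⟩ hx ⟨s', W'⟩ hx' heq
    simp only [Finset.coe_product, Set.mem_prod, Finset.mem_coe, Finset.mem_powerset,
      Finset.mem_filter] at hx hx' heq
    have h1 := Finset.ext_iff.1 heq
    simp only [Finset.mem_sdiff] at h1
    have hs : s = s' := by
      ext a
      have := h1 a
      have := @hx.1 a
      have := @hx'.1 a
      have := @hx.2.2 a
      have := @hx'.2.2 a
      tauto
    have hW : W = W' := by
      ext a
      have := h1 a
      have := @hx.1 a
      have := @hx'.1 a
      have := @hx.2.2 a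
      have := @hx'.2.2 a
      tauto
    rw [hs, hW]

lemma card_superset_ge (A : Finset (Finset α)) (e : Finset α)
    (h : ∀ W ∈ A, W ∪ e ∈ A) :
    A.card ≤ 2 ^ e.card * (A.filter (fun W => e ⊆ W)).card := by
  rw [← Finset.card_powerset, ← Finset.card_product]
  apply Finset.card_le_card_of_injOn (fun W => (W ∩ e, W ∪ e))
  · intro W hW
    simp only [Finset.coe_product, Set.mem_prod, Finset.mem_coe, Finset.mem_powerset,
      Finset.mem_filter] at hW ⊢
    exact ⟨Finset.inter_subset_right, h W hW, Finset.subset_union_right⟩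
  · intro W hW W' hW' heq
    simp only [Prod.mk.injEq] at heq
    have h1 := Finset.ext_iff.1 heq.1
    have h2 := Finset.ext_iff.1 heq.2
    simp only [Finset.mem_inter, Finset.mem_union] at h1 h2
    ext a
    have := h1 a
    have := h2 a
    tauto

lemma card_avoid (B : Finset α) (b : ℕ) (K : Finset (Finset α)) :
    ∀ (A : Finset (Finset α)), (∀ W ∈ A, ∀ s, s ⊆ B → W \ s ∈ A) →
    (∀ e ∈ K, e ⊆ B ∧ e.card = b) →
    (1 - (1 / 2 : ℝ) ^ b) ^ K.card * A.card ≤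
      ((A.filter (fun W => ∀ e ∈ K, ¬ e ⊆ W)).card : ℝ) := by
  induction K using Finset.induction_on with
  | empty => intro A _ _; simp
  | insert e K he ih =>
    intro A hA hK
    have h1 := card_superset_le A e (fun W hW s hs =>
      hA W hW s (hs.trans (hK e (Finset.mem_insert_self _ _)).1))
    rw [(hK e (Finset.mem_insert_self _ _)).2] at h1
    have h2 := ih (A.filter (fun W => ¬ e ⊆ W)) (by
      intro W hW s hs
      rw [Finset.mem_filter] at hW ⊢
      exact ⟨hA W hW.1 s hs, fun h => hW.2 (h.trans Finset.sdiff_subset)⟩)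
      (fun f hf => hK f (Finset.mem_insert_of_mem hf))
    have h3 : (A.filter (fun W => ∀ f ∈ insert e K, ¬ f ⊆ W)) =
        (A.filter (fun W => ¬ e ⊆ W)).filter (fun W => ∀ e ∈ K, ¬ e ⊆ W) := by
      ext W
      simp only [Finset.mem_filter, Finset.mem_insert, forall_eq_or_imp, and_assoc]
    rw [h3, Finset.card_insert_of_notMem he]
    refine le_trans ?_ h2
    rw [pow_succ, mul_assoc]
    have hq : (0:ℝ) ≤ 1 - (1/2:ℝ)^b := by
      have : (1/2:ℝ)^b ≤ 1 := pow_le_one₀ (by norm_num) (by norm_num)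
      linarith
    apply mul_le_mul_of_nonneg_left _ (pow_nonneg hq _)
    have h4 := Finset.card_filter_add_card_filter_not (s := A) (fun W => e ⊆ W)
    have h4' : ((A.filter (fun W => e ⊆ W)).card : ℝ) + (A.filter (fun W => ¬ e ⊆ W)).card
      = A.card := by exact_mod_cast h4
    have h1' : (2:ℝ)^b * (A.filter (fun W => e ⊆ W)).card ≤ A.card := by exact_mod_cast h1
    have h5 : ((A.filter (fun W => e ⊆ W)).card : ℝ) ≤ (1/2:ℝ)^b * A.card := by
      calc ((A.filter (fun W => e ⊆ W)).card : ℝ)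
          = (1/2:ℝ)^b * ((2:ℝ)^b * (A.filter (fun W => e ⊆ W)).card) := by
            rw [← mul_assoc, ← mul_pow]; norm_num
        _ ≤ _ := mul_le_mul_of_nonneg_left h1' (by positivity)
    linarith

lemma local_ineq (I L : Finset (Finset α)) (b : ℕ) (c₀ M : ℝ) (hM : 0 ≤ M)
    (hL : ∀ e ∈ L, e.card = b)
    (hdown : ∀ W ∈ I, ∀ s, s ⊆ W → s ∈ I)
    (hgood : ∀ W ∈ I, ∀ e ∈ L, (W \ L.biUnion id) ∪ e ∈ I → W ∪ e ∈ I)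
    (hc : ∀ a : ℕ, c₀ ≤ a * (1 / 2 : ℝ) ^ b + M * (1 - (1 / 2 : ℝ) ^ b) ^ a) :
    c₀ * I.card ≤ ∑ W ∈ I, ((L.filter (fun e => e ⊆ W)).card : ℝ)
      + M * ((I.filter (fun W => ∀ e ∈ L, ¬ e ⊆ W)).card : ℝ) := by
  set B := L.biUnion id with hB
  have hLB : ∀ e ∈ L, e ⊆ B := fun e he => Finset.subset_biUnion_of_mem id he
  let κ : Finset α → Finset (Finset α) := fun W => L.filter (fun e => (W \ B) ∪ e ∈ I)
  have hκ : ∀ W ∈ I, κ W ∈ L.powerset := fun W _ => by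
    simp only [κ, Finset.mem_powerset]; exact Finset.filter_subset _ _
  have key : ∀ K ∈ L.powerset, c₀ * ((I.filter (fun W => κ W = K)).card : ℝ) ≤
      ∑ W ∈ I.filter (fun W => κ W = K), ((L.filter (fun e => e ⊆ W)).card : ℝ)
      + M * (((I.filter (fun W => κ W = K)).filter (fun W => ∀ e ∈ L, ¬ e ⊆ W)).card : ℝ) := by
    intro K hK
    rw [Finset.mem_powerset] at hK
    set A := I.filter (fun W => κ W = K) with hA
    have hAdown : ∀ W ∈ A, ∀ s, s ⊆ B → W \ s ∈ A := by
      intro W hW s hs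
      rw [hA, Finset.mem_filter] at hW ⊢
      refine ⟨hdown W hW.1 _ Finset.sdiff_subset, ?_⟩
      rw [← hW.2]
      have : (W \ s) \ B = W \ B := by
        rw [Finset.sdiff_sdiff_left', ]
        ext a
        have := @hs a
        simp only [Finset.mem_inter, Finset.mem_sdiff]
        tauto
      simp only [κ, this]
    have hAup : ∀ e ∈ K, ∀ W ∈ A, W ∪ e ∈ A := by
      intro e he W hW
      rw [hA, Finset.mem_filter] at hW ⊢
      have he' : e ∈ κ W := by rw [hW.2]; exact he
      simp only [κ, Finset.mem_filter] at he'
      refine ⟨hgood W hW.1 e he'.1 he'.2, ?_⟩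
      rw [← hW.2]
      have : (W ∪ e) \ B = W \ B := by
        have h := hLB e he'.1
        ext a
        have := @h a
        simp only [Finset.mem_union, Finset.mem_sdiff]
        tauto
      simp only [κ, this]
    have hav := card_avoid B b K A hAdown (fun e he => ⟨hLB e (hK he), hL e (hK he)⟩)
    have heq : A.filter (fun W => ∀ e ∈ K, ¬ e ⊆ W) ⊆ A.filter (fun W => ∀ e ∈ L, ¬ e ⊆ W) := by
      intro W hW
      rw [Finset.mem_filter] at hW ⊢
      refine ⟨hW.1, fun e he heW => ?_⟩
      have hWA := hW.1
      rw [hA, Finset.mem_filter] at hWA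
      refine hW.2 e ?_ heW
      rw [← hWA.2]
      simp only [κ, Finset.mem_filter]
      exact ⟨he, hdown W hWA.1 _ (Finset.union_subset Finset.sdiff_subset heW)⟩
    have h2 : ((A.filter (fun W => ∀ e ∈ K, ¬ e ⊆ W)).card : ℝ) ≤
        (A.filter (fun W => ∀ e ∈ L, ¬ e ⊆ W)).card := by
      exact_mod_cast Finset.card_le_card heq
    have h3 : (K.card : ℝ) * (1 / 2 : ℝ) ^ b * A.card ≤
        ∑ W ∈ A, ((L.filter (fun e => e ⊆ W)).card : ℝ) := by
      have e1 : ∑ W ∈ A, ((L.filter (fun e => e ⊆ W)).card : ℝ) =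
          ∑ e ∈ L, ((A.filter (fun W => e ⊆ W)).card : ℝ) := by
        simp only [Finset.card_filter, Nat.cast_sum]
        rw [Finset.sum_comm]
      rw [e1]
      calc (K.card : ℝ) * (1 / 2 : ℝ) ^ b * A.card = ∑ e ∈ K, (1 / 2 : ℝ) ^ b * A.card := by
            rw [Finset.sum_const, nsmul_eq_mul, mul_assoc]
        _ ≤ ∑ e ∈ K, ((A.filter (fun W => e ⊆ W)).card : ℝ) := by
            apply Finset.sum_le_sum
            intro e he
            have := card_superset_ge A e (hAup e he)
            rw [hL e (hK he)] at this
            have h' : (A.card : ℝ) ≤ 2 ^ b * (A.filter (fun W => e ⊆ W)).card := by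
              exact_mod_cast this
            calc (1 / 2 : ℝ) ^ b * A.card ≤ (1 / 2 : ℝ) ^ b * (2 ^ b * (A.filter (fun W => e ⊆ W)).card) :=
                  mul_le_mul_of_nonneg_left h' (by positivity)
              _ = _ := by rw [← mul_assoc, ← mul_pow]; norm_num
        _ ≤ _ := Finset.sum_le_sum_of_subset_of_nonneg hK (fun _ _ _ => by positivity)
    have h4 := mul_le_mul_of_nonneg_right (hc K.card) (Nat.cast_nonneg (α := ℝ) A.card)
    have h5 := mul_le_mul_of_nonneg_left (hav.trans h2) hM
    nlinarith
  have s1 : (I.card : ℝ) = ∑ K ∈ L.powerset, ((I.filter (fun W => κ W = K)).card : ℝ) := by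
    exact_mod_cast Finset.card_eq_sum_card_fiberwise hκ
  have s2 : ∑ W ∈ I, ((L.filter (fun e => e ⊆ W)).card : ℝ) = ∑ K ∈ L.powerset,
      ∑ W ∈ I.filter (fun W => κ W = K), ((L.filter (fun e => e ⊆ W)).card : ℝ) :=
    (Finset.sum_fiberwise_of_maps_to hκ _).symm
  have s3 : ((I.filter (fun W => ∀ e ∈ L, ¬ e ⊆ W)).card : ℝ) = ∑ K ∈ L.powerset,
      (((I.filter (fun W => κ W = K)).filter (fun W => ∀ e ∈ L, ¬ e ⊆ W)).card : ℝ) := by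
    have : (I.filter (fun W => ∀ e ∈ L, ¬ e ⊆ W)).card = ∑ K ∈ L.powerset,
      ((I.filter (fun W => ∀ e ∈ L, ¬ e ⊆ W)).filter (fun W => κ W = K)).card :=
      Finset.card_eq_sum_card_fiberwise (fun W hW => hκ W (Finset.mem_filter.1 hW).1)
    rw [this]
    push_cast
    refine Finset.sum_congr rfl (fun K _ => ?_)
    rw [Finset.filter_comm]
  rw [s1, s2, s3, Finset.mul_sum, Finset.mul_sum, ← Finset.sum_add_distrib]
  exact Finset.sum_le_sum key

end TrProof

namespace TrProof

set_option linter.unusedSectionVars false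
variable {V : Type*} [Fintype V] [DecidableEq V]

/-- Weight of `U` in the `p`-random subset model. -/
noncomputable def wt (p : ℝ) (U : Finset V) : ℝ :=
  p ^ U.card * (1 - p) ^ (Fintype.card V - U.card)

lemma wt_nonneg {p : ℝ} (hp : 0 ≤ p) (hp1 : p ≤ 1) (U : Finset V) : 0 ≤ wt p U :=
  mul_nonneg (pow_nonneg hp _) (pow_nonneg (by linarith) _)

lemma wt_sum (p : ℝ) : ∑ U : Finset V, wt p U = 1 := by
  have := Finset.sum_pow_mul_eq_add_pow p (1 - p) (Finset.univ : Finset V)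
  simp only [Finset.powerset_univ, Finset.card_univ] at this
  simp only [wt]
  rw [this]; simp

lemma wt_superset {p : ℝ} (S : Finset V) :
    ∑ U ∈ (Finset.univ : Finset (Finset V)).filter (fun U => S ⊆ U), wt p U = p ^ S.card := by
  have h := Finset.sum_pow_mul_eq_add_pow p (1 - p) (Sᶜ)
  rw [add_sub_cancel, one_pow] at h
  have : ∑ U ∈ (Finset.univ : Finset (Finset V)).filter (fun U => S ⊆ U), wt p U =
      ∑ T ∈ (Sᶜ).powerset, p ^ S.card * (p ^ T.card * (1 - p) ^ ((Sᶜ).card - T.card)) := by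
    symm
    apply Finset.sum_bij' (fun T _ => S ∪ T) (fun U _ => U \ S)
    · intro T hT; simp
    · intro U hU; 
      simp only [Finset.mem_powerset]
      intro a ha
      simp only [Finset.mem_sdiff] at ha
      simp [ha.2]
    · intro T hT
      rw [Finset.mem_powerset] at hT
      ext a
      have := @hT a
      simp only [Finset.mem_compl] at this
      simp only [Finset.mem_sdiff, Finset.mem_union]
      tauto
    · intro U hU
      simp only [Finset.mem_filter, Finset.mem_univ, true_and] at hU
      exact Finset.union_sdiff_of_subset hU
    · intro T hT
      rw [Finset.mem_powerset] at hT
      have hd : Disjoint S T := by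
        rw [Finset.disjoint_left]
        intro a ha hb
        have := hT hb
        simp only [Finset.mem_compl] at this
        exact this ha
      simp only [wt]
      rw [Finset.card_union_of_disjoint hd, pow_add, Finset.card_compl, Nat.sub_sub, mul_assoc]
  rw [this, ← Finset.mul_sum, h, mul_one]

lemma wt_insert {p : ℝ} (hp : 0 ≤ p) (hp1 : p ≤ 1) (U : Finset V) (v : V) (hv : v ∉ U) :
    p * wt p U ≤ wt p (insert v U) := by
  simp only [wt]
  rw [Finset.card_insert_of_notMem hv, pow_succ]
  have h : (1 - p) ^ (Fintype.card V - U.card) ≤ (1 - p) ^ (Fintype.card V - (U.card + 1)) :=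
    pow_le_pow_of_le_one (by linarith) (by linarith) (by omega)
  calc p * (p ^ U.card * (1 - p) ^ (Fintype.card V - U.card))
      = p ^ U.card * p * (1 - p) ^ (Fintype.card V - U.card) := by ring
    _ ≤ _ := mul_le_mul_of_nonneg_left h (mul_nonneg (pow_nonneg hp _) hp)

lemma wt_notMem {p : ℝ} (v : V) :
    ∑ U ∈ (Finset.univ : Finset (Finset V)).filter (fun U => v ∉ U), wt p U = 1 - p := by
  have h := Finset.sum_filter_add_sum_filter_not (Finset.univ : Finset (Finset V))
    (fun U => v ∈ U) (wt p)
  rw [wt_sum] at h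
  have h2 := wt_superset (p := p) ({v} : Finset V)
  simp only [Finset.singleton_subset_iff, Finset.card_singleton, pow_one] at h2
  linarith

end TrProof

namespace TrProof

set_option linter.unusedSectionVars false
variable {V : Type*} [Fintype V] [DecidableEq V]

/-- Independent subsets of `U`. -/
noncomputable def indF (G : Finset (Finset V)) (U : Finset V) : Finset (Finset V) :=
  U.powerset.filter (fun W => IsIndep G W)

lemma mem_indF {G : Finset (Finset V)} {U W : Finset V} :
    W ∈ indF G U ↔ W ⊆ U ∧ IsIndep G W := by
  simp [indF]

/-- The local obstruction at `v`. -/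
def Bad (G : Finset (Finset V)) (v : V) (U : Finset V) : Prop :=
  ∃ f1 ∈ G, ∃ f2 ∈ G, ∃ f ∈ G, v ∈ f1 ∧ v ∈ f2 ∧ f1.erase v ⊆ U ∧ f2.erase v ⊆ U ∧ f ⊆ U ∧
    ∃ x ∈ f, x ∈ f1 ∧ ∃ y ∈ f, y ∈ f2 ∧ y ∉ f1

/-- Number of `(r-1)`-subsets of `W` blocking `v`. -/
noncomputable def X (G : Finset (Finset V)) (v : V) (W : Finset V) : ℕ :=
  (G.filter (fun f => v ∈ f ∧ f.erase v ⊆ W)).card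

lemma local_graph (G : Finset (Finset V)) (b : ℕ) (hG : ∀ e ∈ G, e.card = b + 1)
    (v : V) (U : Finset V) (hv : v ∉ U) (hbad : ¬ Bad G v U) (c₀ M : ℝ) (hM : 0 ≤ M)
    (hc : ∀ a : ℕ, c₀ ≤ a * (1 / 2 : ℝ) ^ b + M * (1 - (1 / 2 : ℝ) ^ b) ^ a) :
    c₀ * (indF G U).card ≤ ∑ W ∈ indF G U, (X G v W : ℝ)
      + M * (((indF G (insert v U)).filter (fun W => v ∈ W)).card : ℝ) := by
  set L := (G.filter (fun f => v ∈ f ∧ f.erase v ⊆ U)).image (fun f => f.erase v) with hLdef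
  have memL : ∀ e, e ∈ L ↔ ∃ f ∈ G, v ∈ f ∧ f.erase v ⊆ U ∧ f.erase v = e := by
    intro e
    simp only [hLdef, Finset.mem_image, Finset.mem_filter, and_assoc]
  have h := local_ineq (indF G U) L b c₀ M hM ?_ ?_ ?_ hc
  · refine h.trans (add_le_add ?_ (mul_le_mul_of_nonneg_left ?_ hM))
    · apply Finset.sum_le_sum
      intro W hW
      have : (L.filter (fun e => e ⊆ W)).card ≤ X G v W := by
        have hs : L.filter (fun e => e ⊆ W) ⊆
            (G.filter (fun f => v ∈ f ∧ f.erase v ⊆ W)).image (fun f => f.erase v) := by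
          intro e he
          rw [Finset.mem_filter, memL] at he
          obtain ⟨⟨f, hf, hvf, hfU, rfl⟩, heW⟩ := he
          exact Finset.mem_image_of_mem _ (Finset.mem_filter.2 ⟨hf, hvf, heW⟩)
        exact (Finset.card_le_card hs).trans Finset.card_image_le
      exact_mod_cast this
    · norm_cast
      apply Finset.card_le_card_of_injOn (fun W => insert v W)
      · intro W hW
        simp only [Finset.coe_filter, Set.mem_ofPred_eq, mem_indF] at hW ⊢
        refine ⟨⟨Finset.insert_subset_insert _ hW.1.1, ?_⟩, Finset.mem_insert_self _ _⟩
        intro f hf hfW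
        by_cases hvf : v ∈ f
        · have h1 : f.erase v ⊆ W := by
            rw [← Finset.subset_insert_iff]; exact hfW
          exact hW.2 (f.erase v) ((memL _).2 ⟨f, hf, hvf, h1.trans hW.1.1, rfl⟩) h1
        · exact hW.1.2 f hf ((Finset.subset_insert_iff_of_notMem hvf).1 hfW)
      · intro W hW W' hW' heq
        simp only [Finset.coe_filter, Set.mem_ofPred_eq, mem_indF] at hW hW' heq
        have h1 : v ∉ W := fun h => hv (hW.1.1 h)
        have h2 : v ∉ W' := fun h => hv (hW'.1.1 h)
        rw [← Finset.erase_insert h1, ← Finset.erase_insert h2, heq]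
  · intro e he
    obtain ⟨f, hf, hvf, hfU, rfl⟩ := (memL e).1 he
    rw [Finset.card_erase_of_mem hvf, hG f hf]; rfl
  · intro W hW s hs
    rw [mem_indF] at hW ⊢
    exact ⟨hs.trans hW.1, fun f hf hfs => hW.2 f hf (hfs.trans hs)⟩
  · intro W hW e he hWe
    rw [mem_indF] at hW hWe ⊢
    have heU : e ⊆ U := Finset.subset_union_right.trans hWe.1
    refine ⟨Finset.union_subset hW.1 heU, ?_⟩
    intro f hf hfW
    obtain ⟨f1, hf1, hvf1, hf1U, rfl⟩ := (memL e).1 he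
    have hfU : f ⊆ U := hfW.trans (Finset.union_subset hW.1 heU)
    obtain ⟨x, hxf, hxW⟩ := Finset.not_subset.1 (hW.2 f hf)
    obtain ⟨y, hyf, hyW⟩ := Finset.not_subset.1 (hWe.2 f hf)
    have hx : x ∈ f1 := by
      have := hfW hxf
      rw [Finset.mem_union] at this
      exact Finset.mem_of_mem_erase (this.resolve_left hxW)
    have hyv : y ≠ v := fun h => hv (h ▸ hfU hyf)
    rw [Finset.mem_union, not_or] at hyW
    have hy1 : y ∉ f1 := fun h => hyW.2 (Finset.mem_erase.2 ⟨hyv, h⟩)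
    have hyWW : y ∈ W := by
      have := hfW hyf
      rw [Finset.mem_union] at this
      exact this.resolve_right hyW.2
    have hyB : y ∈ L.biUnion id := by
      by_contra hcon
      exact hyW.1 (Finset.mem_sdiff.2 ⟨hyWW, hcon⟩)
    rw [Finset.mem_biUnion] at hyB
    obtain ⟨e2, he2, hye2⟩ := hyB
    obtain ⟨f2, hf2, hvf2, hf2U, rfl⟩ := (memL e2).1 he2
    exact hbad ⟨f1, hf1, f2, hf2, f, hf, hvf1, hvf2, hf1U, hf2U, hfU, x, hxf, hx, y, hyf,
      Finset.mem_of_mem_erase hye2, hy1⟩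

lemma sum_X_le (G : Finset (Finset V)) (b : ℕ) (hG : ∀ e ∈ G, e.card = b + 1)
    (d t : ℕ) (hdeg : maxDegLe b G d) (W : Finset V) (hW : W.card ≤ t) :
    ∑ v ∈ (Finset.univ : Finset V).filter (fun v => v ∉ W), X G v W ≤ t ^ b * d := by
  simp only [X]
  rw [← Finset.card_sigma]
  calc _ ≤ ((W.powersetCard b).sigma (fun S => G.filter (fun e => S ⊆ e))).card := by
        apply Finset.card_le_card_of_injOn (fun x => ⟨x.2.erase x.1, x.2⟩)
        · rintro ⟨v, f⟩ hx
          simp only [Finset.coe_sigma, Set.mem_sigma_iff, Finset.mem_coe, Finset.mem_filter,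
            Finset.mem_univ, true_and, Finset.mem_powersetCard] at hx ⊢
          refine ⟨⟨hx.2.2.2, ?_⟩, hx.2.1, Finset.erase_subset _ _⟩
          rw [Finset.card_erase_of_mem hx.2.2.1, hG f hx.2.1]; rfl
        · rintro ⟨v, f⟩ hx ⟨v', f'⟩ hx' heq
          simp only [Finset.coe_sigma, Set.mem_sigma_iff, Finset.mem_coe, Finset.mem_filter,
            Finset.mem_univ, true_and] at hx hx'
          simp only [Sigma.mk.injEq, heq_eq_eq] at heq
          obtain ⟨h1, rfl⟩ := heq
          have : v = v' := by
            by_contra hne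
            have : v ∈ f.erase v' := Finset.mem_erase.2 ⟨hne, hx.2.2.1⟩
            rw [← h1] at this
            exact Finset.notMem_erase _ _ this
          rw [this]
    _ = ∑ S ∈ W.powersetCard b, (G.filter (fun e => S ⊆ e)).card := Finset.card_sigma _ _
    _ ≤ ∑ S ∈ W.powersetCard b, d := by
        apply Finset.sum_le_sum
        intro S hS
        exact hdeg S (Finset.mem_powersetCard.1 hS).2
    _ = (W.card.choose b) * d := by
        rw [Finset.sum_const, Finset.card_powersetCard, smul_eq_mul]
    _ ≤ t ^ b * d := by
        apply Nat.mul_le_mul_right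
        exact (Nat.choose_le_pow _ _).trans (Nat.pow_le_pow_left hW _)

lemma main_ineq (G : Finset (Finset V)) (b : ℕ) (hG : ∀ e ∈ G, e.card = b + 1)
    (d t : ℕ) (hdeg : maxDegLe b G d) (hind : ∀ W, IsIndep G W → W.card ≤ t)
    (p : ℝ) (hp : 0 < p) (hp1 : p ≤ 1 / 4) (c₀ M : ℝ) (hc0 : 0 ≤ c₀) (hM : 0 ≤ M)
    (hc : ∀ a : ℕ, c₀ ≤ a * (1 / 2 : ℝ) ^ b + M / 2 * (1 - (1 / 2 : ℝ) ^ b) ^ a)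
    (hbad : ∑ v : V, ∑ U ∈ (Finset.univ : Finset (Finset V)).filter
      (fun U => v ∉ U ∧ Bad G v U), wt p U ≤ (Fintype.card V : ℝ) / 4) :
    c₀ * Fintype.card V / 2 ≤ (t : ℝ) ^ b * d + M / p * t := by
  have hwt : ∀ U : Finset V, 0 ≤ wt p U := wt_nonneg hp.le (by linarith)
  have hIpos : ∀ U : Finset V, (0 : ℝ) < (indF G U).card := by
    intro U
    have : ∅ ∈ indF G U := by
      rw [mem_indF]
      refine ⟨Finset.empty_subset _, fun f hf h => ?_⟩
      have := hG f hf
      rw [Finset.subset_empty.1 h] at this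
      simp at this
    exact_mod_cast Finset.card_pos.2 ⟨_, this⟩
  -- upper bounds
  have up1 : ∑ U : Finset V, wt p U / (indF G U).card *
      ∑ W ∈ indF G U, ∑ v ∈ (Finset.univ : Finset V).filter (fun v => v ∉ U), (X G v W : ℝ)
      ≤ (t : ℝ) ^ b * d := by
    calc _ ≤ ∑ U : Finset V, wt p U * ((t : ℝ) ^ b * d) := by
          apply Finset.sum_le_sum
          intro U _
          have : ∑ W ∈ indF G U, ∑ v ∈ (Finset.univ : Finset V).filter (fun v => v ∉ U),
              (X G v W : ℝ) ≤ ∑ W ∈ indF G U, ((t : ℝ) ^ b * d) := by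
            apply Finset.sum_le_sum
            intro W hW
            rw [mem_indF] at hW
            have h1 := sum_X_le G b hG d t hdeg W (hind W hW.2)
            have h2 : ∑ v ∈ (Finset.univ : Finset V).filter (fun v => v ∉ U), X G v W ≤
                ∑ v ∈ (Finset.univ : Finset V).filter (fun v => v ∉ W), X G v W := by
              apply Finset.sum_le_sum_of_subset
              intro v hv
              simp only [Finset.mem_filter, Finset.mem_univ, true_and] at hv ⊢
              exact fun h => hv (hW.1 h)
            exact_mod_cast h2.trans h1
          rw [Finset.sum_const, nsmul_eq_mul] at this
          calc _ ≤ wt p U / (indF G U).card * ((indF G U).card * ((t : ℝ) ^ b * d)) :=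
                mul_le_mul_of_nonneg_left this (div_nonneg (hwt U) (hIpos U).le)
            _ = _ := by have := (hIpos U).ne'; field_simp
      _ = _ := by rw [← Finset.sum_mul, wt_sum, one_mul]
  have up2 : ∑ U : Finset V, wt p U / (indF G U).card *
      ∑ v ∈ U, (((indF G U).filter (fun W => v ∈ W)).card : ℝ) ≤ t := by
    calc _ ≤ ∑ U : Finset V, wt p U * (t : ℝ) := by
          apply Finset.sum_le_sum
          intro U _
          have : ∑ v ∈ U, (((indF G U).filter (fun W => v ∈ W)).card : ℝ) ≤
              ∑ W ∈ indF G U, (t : ℝ) := by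
            have e1 : ∑ v ∈ U, (((indF G U).filter (fun W => v ∈ W)).card : ℝ) =
                ∑ W ∈ indF G U, ((U.filter (fun v => v ∈ W)).card : ℝ) := by
              simp only [Finset.card_filter, Nat.cast_sum]
              rw [Finset.sum_comm]
            rw [e1]
            apply Finset.sum_le_sum
            intro W hW
            rw [mem_indF] at hW
            have h1 : (U.filter (fun v => v ∈ W)).card ≤ W.card :=
              Finset.card_le_card (fun v hv => (Finset.mem_filter.1 hv).2)
            exact_mod_cast h1.trans (hind W hW.2)
          rw [Finset.sum_const, nsmul_eq_mul] at this
          calc _ ≤ wt p U / (indF G U).card * ((indF G U).card * (t : ℝ)) :=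
                mul_le_mul_of_nonneg_left this (div_nonneg (hwt U) (hIpos U).le)
            _ = _ := by have := (hIpos U).ne'; field_simp
      _ = _ := by rw [← Finset.sum_mul, wt_sum, one_mul]
  -- swapped forms
  have sw1 : ∑ U : Finset V, wt p U / (indF G U).card *
      ∑ W ∈ indF G U, ∑ v ∈ (Finset.univ : Finset V).filter (fun v => v ∉ U), (X G v W : ℝ)
      = ∑ v : V, ∑ U ∈ (Finset.univ : Finset (Finset V)).filter (fun U => v ∉ U),
        wt p U / (indF G U).card * ∑ W ∈ indF G U, (X G v W : ℝ) := by
    have : ∀ U : Finset V, wt p U / (indF G U).card *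
      ∑ W ∈ indF G U, ∑ v ∈ (Finset.univ : Finset V).filter (fun v => v ∉ U), (X G v W : ℝ)
      = ∑ v : V, if v ∉ U then wt p U / (indF G U).card * ∑ W ∈ indF G U, (X G v W : ℝ)
        else 0 := by
      intro U
      rw [Finset.sum_comm, Finset.mul_sum, Finset.sum_filter]
    rw [Finset.sum_congr rfl (fun U _ => this U), Finset.sum_comm]
    refine Finset.sum_congr rfl (fun v _ => ?_)
    rw [Finset.sum_filter]
  have sw2 : ∑ U : Finset V, wt p U / (indF G U).card *
      ∑ v ∈ U, (((indF G U).filter (fun W => v ∈ W)).card : ℝ)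
      = ∑ v : V, ∑ U ∈ (Finset.univ : Finset (Finset V)).filter (fun U => v ∉ U),
        wt p (insert v U) / (indF G (insert v U)).card *
          (((indF G (insert v U)).filter (fun W => v ∈ W)).card : ℝ) := by
    have : ∀ U : Finset V, wt p U / (indF G U).card *
      ∑ v ∈ U, (((indF G U).filter (fun W => v ∈ W)).card : ℝ)
      = ∑ v : V, if v ∈ U then wt p U / (indF G U).card *
         (((indF G U).filter (fun W => v ∈ W)).card : ℝ) else 0 := by
      intro U
      rw [Finset.mul_sum, ← Finset.sum_filter]
      congr 1
      ext v; simp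
    rw [Finset.sum_congr rfl (fun U _ => this U), Finset.sum_comm]
    refine Finset.sum_congr rfl (fun v _ => ?_)
    rw [← Finset.sum_filter]
    refine Finset.sum_bij' (fun U _ => U.erase v) (fun U _ => insert v U) ?_ ?_ ?_ ?_ ?_
    · intro U hU; simp
    · intro U hU; simp
    · intro U hU
      simp only [Finset.mem_filter, Finset.mem_univ, true_and] at hU
      exact Finset.insert_erase hU
    · intro U hU
      simp only [Finset.mem_filter, Finset.mem_univ, true_and] at hU
      exact Finset.erase_insert hU
    · intro U hU
      simp only [Finset.mem_filter, Finset.mem_univ, true_and] at hU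
      rw [Finset.insert_erase hU]
  rw [sw1] at up1
  rw [sw2] at up2
  have hMp : 0 ≤ M / p := div_nonneg hM hp.le
  have up3 := add_le_add up1 (mul_le_mul_of_nonneg_left up2 hMp)
  refine le_trans ?_ up3
  rw [Finset.mul_sum, ← Finset.sum_add_distrib]
  -- pointwise lower bound
  have low : ∀ v : V, c₀ * (1 - p) - c₀ * ∑ U ∈ (Finset.univ : Finset (Finset V)).filter
      (fun U => v ∉ U ∧ Bad G v U), wt p U ≤
      ∑ U ∈ (Finset.univ : Finset (Finset V)).filter (fun U => v ∉ U),
        wt p U / (indF G U).card * ∑ W ∈ indF G U, (X G v W : ℝ) +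
      M / p * ∑ U ∈ (Finset.univ : Finset (Finset V)).filter (fun U => v ∉ U),
        wt p (insert v U) / (indF G (insert v U)).card *
          (((indF G (insert v U)).filter (fun W => v ∈ W)).card : ℝ) := by
    intro v
    have e1 := Finset.sum_filter_add_sum_filter_not
      ((Finset.univ : Finset (Finset V)).filter (fun U => v ∉ U)) (fun U => Bad G v U) (wt p)
    rw [wt_notMem, Finset.filter_filter, ] at e1
    have e2 : c₀ * (1 - p) - c₀ * ∑ U ∈ (Finset.univ : Finset (Finset V)).filter
      (fun U => v ∉ U ∧ Bad G v U), wt p U = ∑ U ∈ ((Finset.univ : Finset (Finset V)).filter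
        (fun U => v ∉ U)).filter (fun U => ¬ Bad G v U), c₀ * wt p U := by
      rw [← e1, ← Finset.mul_sum]; ring
    rw [e2, Finset.mul_sum, ← Finset.sum_add_distrib]
    refine le_trans ?_ (Finset.sum_le_sum_of_subset_of_nonneg (Finset.filter_subset
      (fun U => ¬ Bad G v U) _) ?_)
    · apply Finset.sum_le_sum
      intro U hU
      simp only [Finset.mem_filter, Finset.mem_univ, true_and] at hU
      have hl := local_graph G b hG v U hU.1 hU.2 c₀ (M / 2) (by linarith) hc
      set J := (((indF G (insert v U)).filter (fun W => v ∈ W)).card : ℝ) with hJ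
      set i := ((indF G U).card : ℝ) with hi
      have hi0 : 0 < i := hIpos U
      have hJ0 : 0 ≤ J := Nat.cast_nonneg _
      have hiJ : ((indF G (insert v U)).card : ℝ) ≤ 2 * i := by
        have a1 := Finset.card_filter_add_card_filter_not (s := indF G (insert v U))
          (fun W => v ∈ W)
        have a2 : ((indF G (insert v U)).filter (fun W => ¬ v ∈ W)).card ≤ (indF G U).card := by
          apply Finset.card_le_card
          intro W hW
          simp only [Finset.mem_filter, mem_indF] at hW ⊢
          exact ⟨(Finset.subset_insert_iff_of_notMem hW.2).1 hW.1.1, hW.1.2⟩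
        have a3 : ((indF G (insert v U)).filter (fun W => v ∈ W)).card ≤ (indF G U).card := by
          apply Finset.card_le_card_of_injOn (fun W => W.erase v)
          · intro W hW
            simp only [Finset.coe_filter, Set.mem_ofPred_eq, mem_indF, Finset.mem_coe] at hW ⊢
            exact ⟨Finset.subset_insert_iff.1 hW.1.1,
              fun f hf h => hW.1.2 f hf (h.trans (Finset.erase_subset _ _))⟩
          · intro W hW W' hW' heq
            simp only [Finset.coe_filter, Set.mem_ofPred_eq] at hW hW' heq
            rw [← Finset.insert_erase hW.2, ← Finset.insert_erase hW'.2, heq]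
        have : (indF G (insert v U)).card ≤ 2 * (indF G U).card := by omega
        rw [hi]; exact_mod_cast this
      have hi' := hIpos (insert v U)
      have b1 : M / p * (wt p (insert v U) / (indF G (insert v U)).card * J) ≥
          wt p U / i * (M / 2 * J) := by
        have c1 : wt p U * p / (2 * i) ≤ wt p (insert v U) / (indF G (insert v U)).card := by
          apply div_le_div₀ (hwt _) _ hi' hiJ
          rw [mul_comm]; exact wt_insert hp.le (by linarith) U v hU.1
        calc wt p U / i * (M / 2 * J) = M / p * (wt p U * p / (2 * i) * J) := by
              field_simp
          _ ≤ _ := mul_le_mul_of_nonneg_left (mul_le_mul_of_nonneg_right c1 hJ0) hMp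
      have b2 := mul_le_mul_of_nonneg_left hl (div_nonneg (hwt U) hi0.le)
      have b3 : wt p U / i * (c₀ * i) = c₀ * wt p U := by field_simp
      rw [b3, mul_add] at b2
      linarith
    · intro U _ _
      have := hwt U
      have := hwt (insert v U)
      positivity
  refine le_trans ?_ (Finset.sum_le_sum (fun v _ => low v))
  rw [Finset.sum_sub_distrib, Finset.sum_const, Finset.card_univ, nsmul_eq_mul, ← Finset.mul_sum]
  have hn : (0:ℝ) ≤ Fintype.card V := Nat.cast_nonneg _
  have f1 := mul_le_mul_of_nonneg_left hbad hc0
  have f2 : (Fintype.card V : ℝ) * (c₀ * (3/4)) ≤ Fintype.card V * (c₀ * (1 - p)) :=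
    mul_le_mul_of_nonneg_left (mul_le_mul_of_nonneg_left (by linarith) hc0) hn
  linarith

end TrProof

namespace TrProof

set_option linter.unusedSectionVars false
variable {V : Type*} [Fintype V] [DecidableEq V]

lemma deg_le (G : Finset (Finset V)) (b : ℕ) (hG : ∀ e ∈ G, e.card = b + 1)
    (d : ℕ) (hdeg : maxDegLe b G d) (m : ℕ) : ∀ J : Finset V, J.card + m = b →
    (G.filter (fun h => J ⊆ h)).card ≤ (Fintype.card V) ^ m * d := by
  induction m with
  | zero => intro J hJ; simpa using hdeg J (by simpa using hJ)
  | succ m ih =>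
    intro J hJ
    have hs : G.filter (fun h => J ⊆ h) ⊆ ((Finset.univ : Finset V).filter (fun x => x ∉ J)).biUnion
        (fun x => G.filter (fun h => insert x J ⊆ h)) := by
      intro h hh
      rw [Finset.mem_filter] at hh
      obtain ⟨x, hx, hxJ⟩ := Finset.exists_mem_notMem_of_card_lt_card
        (show J.card < h.card by rw [hG h hh.1]; omega)
      simp only [Finset.mem_biUnion, Finset.mem_filter, Finset.mem_univ, true_and]
      exact ⟨x, hxJ, hh.1, Finset.insert_subset hx hh.2⟩
    calc _ ≤ _ := Finset.card_le_card hs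
      _ ≤ ∑ x ∈ (Finset.univ : Finset V).filter (fun x => x ∉ J),
          (G.filter (fun h => insert x J ⊆ h)).card := Finset.card_biUnion_le
      _ ≤ ∑ x ∈ (Finset.univ : Finset V).filter (fun x => x ∉ J), (Fintype.card V) ^ m * d := by
          apply Finset.sum_le_sum
          intro x hx
          apply ih
          rw [Finset.card_insert_of_notMem (Finset.mem_filter.1 hx).2]
          omega
      _ ≤ ∑ x : V, (Fintype.card V) ^ m * d :=
          Finset.sum_le_sum_of_subset (Finset.filter_subset _ _)
      _ = _ := by
          rw [Finset.sum_const, Finset.card_univ, smul_eq_mul, pow_succ]; ring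

lemma union_bound {ι : Type*} (s : Finset ι) (S : ι → Finset V) (P : Finset V → Prop)
    [DecidablePred P]
    {p : ℝ} (hp : 0 ≤ p) (hp1 : p ≤ 1) (h : ∀ U, P U → ∃ i ∈ s, S i ⊆ U) :
    ∑ U ∈ (Finset.univ : Finset (Finset V)).filter P, wt p U ≤ ∑ i ∈ s, p ^ (S i).card := by
  have e : ∑ i ∈ s, p ^ (S i).card =
      ∑ U : Finset V, ∑ i ∈ s, if S i ⊆ U then wt p U else 0 := by
    rw [Finset.sum_comm]
    refine Finset.sum_congr rfl (fun i _ => ?_)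
    rw [← Finset.sum_filter, wt_superset]
  rw [e, Finset.sum_filter]
  apply Finset.sum_le_sum
  intro U _
  have hnn : ∀ i ∈ s, 0 ≤ (if S i ⊆ U then wt p U else 0) := by
    intro i _
    split_ifs
    · exact wt_nonneg hp hp1 U
    · exact le_rfl
  split_ifs with hP
  · obtain ⟨i, hi, hiU⟩ := h U hP
    have := Finset.single_le_sum hnn hi
    rw [if_pos hiU] at this
    exact this
  · exact Finset.sum_nonneg hnn

/-- The two types of local obstruction. -/
def BadA (v : V) (x : Finset V × Finset V) : Prop :=
  v ∈ x.1 ∧ x.1 ≠ x.2 ∧ 2 ≤ (x.1 ∩ x.2).card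

def BadB (b : ℕ) (v : V) (x : Finset V × Finset V × Finset V) : Prop :=
  v ∈ x.1 ∧ (∃ y ∈ x.1, y ∈ x.2.1) ∧ v ∈ x.2.2 ∧ v ∉ x.2.1 ∧ (∃ y ∈ x.2.1, y ∈ x.2.2) ∧
    3 * b ≤ (x.1 ∪ x.2.1 ∪ x.2.2).card

lemma bad_split (G : Finset (Finset V)) (b : ℕ) (hG : ∀ e ∈ G, e.card = b + 1)
    (v : V) (U : Finset V) (hv : v ∉ U) (hbad : Bad G v U) :
    (∃ x ∈ (G ×ˢ G).filter (BadA v), (x.1 ∪ x.2).erase v ⊆ U) ∨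
    (∃ x ∈ (G ×ˢ G ×ˢ G).filter (BadB b v), (x.1 ∪ x.2.1 ∪ x.2.2).erase v ⊆ U) := by
  obtain ⟨f1, hf1, f2, hf2, f, hf, hv1, hv2, h1U, h2U, hU, x, hxf, hx1, y, hyf, hy2, hy1⟩ := hbad
  have hvf : v ∉ f := fun h => hv (hU h)
  have heU : f.erase v ⊆ U := (Finset.erase_subset _ _).trans hU
  by_cases hA1 : 2 ≤ (f1 ∩ f).card
  · left
    refine ⟨(f1, f), ?_, ?_⟩
    · simp only [Finset.mem_filter, Finset.mem_product, BadA]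
      exact ⟨⟨hf1, hf⟩, hv1, fun h => hvf (h ▸ hv1), hA1⟩
    · simp only [Finset.erase_union_distrib]
      exact Finset.union_subset h1U heU
  by_cases hA2 : 2 ≤ (f2 ∩ f).card
  · left
    refine ⟨(f2, f), ?_, ?_⟩
    · simp only [Finset.mem_filter, Finset.mem_product, BadA]
      exact ⟨⟨hf2, hf⟩, hv2, fun h => hvf (h ▸ hv2), hA2⟩
    · simp only [Finset.erase_union_distrib]
      exact Finset.union_subset h2U heU
  by_cases hA3 : 2 ≤ (f1 ∩ f2).card
  · left
    refine ⟨(f1, f2), ?_, ?_⟩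
    · simp only [Finset.mem_filter, Finset.mem_product, BadA]
      exact ⟨⟨hf1, hf2⟩, hv1, fun h => hy1 (h ▸ hy2), hA3⟩
    · simp only [Finset.erase_union_distrib]
      exact Finset.union_subset h1U h2U
  right
  refine ⟨(f1, f, f2), ?_, ?_⟩
  · simp only [Finset.mem_filter, Finset.mem_product, BadB]
    refine ⟨⟨hf1, hf, hf2⟩, hv1, ⟨x, hx1, hxf⟩, hv2, hvf, ⟨y, hyf, hy2⟩, ?_⟩
    have e1 := Finset.card_union_add_card_inter f1 f
    have e2 := Finset.card_union_add_card_inter (f1 ∪ f) f2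
    have e3 : ((f1 ∪ f) ∩ f2).card ≤ (f1 ∩ f2).card + (f2 ∩ f).card := by
      rw [Finset.union_inter_distrib_right, Finset.inter_comm f2 f]
      exact Finset.card_union_le _ _
    rw [hG _ hf1, hG _ hf] at e1
    rw [hG _ hf2] at e2
    omega
  · simp only [Finset.erase_union_distrib]
    exact Finset.union_subset (Finset.union_subset h1U heU) h2U

lemma sum_edges (G : Finset (Finset V)) (b : ℕ) (hG : ∀ e ∈ G, e.card = b + 1)
    (d : ℕ) (hdeg : maxDegLe b G d) :
    ∑ v : V, ((G.filter (fun g => v ∈ g)).card : ℝ) ≤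
      (b + 1) * ((Fintype.card V : ℝ) ^ b * d) := by
  have h1 : ∑ v : V, (G.filter (fun g => v ∈ g)).card = G.card * (b + 1) := by
    have : ∑ v : V, (G.filter (fun g => v ∈ g)).card = ∑ g ∈ G, g.card := by
      simp only [Finset.card_filter]
      rw [Finset.sum_comm]
      refine Finset.sum_congr rfl (fun g _ => ?_)
      rw [← Finset.card_filter]
      congr 1; ext v; simp
    rw [this, Finset.sum_congr rfl hG, Finset.sum_const, smul_eq_mul]
  have h2 := deg_le G b hG d hdeg b ∅ (by simp)
  simp only [Finset.empty_subset, Finset.filter_true] at h2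
  have h3 : (∑ v : V, (G.filter (fun g => v ∈ g)).card) ≤ (b + 1) * ((Fintype.card V) ^ b * d) := by
    rw [h1, mul_comm]; exact Nat.mul_le_mul_left _ h2
  exact_mod_cast h3

lemma badA_sum (G : Finset (Finset V)) (b : ℕ) (hG : ∀ e ∈ G, e.card = b + 1)
    (d : ℕ) (hdeg : maxDegLe b G d) (hb : 2 ≤ b) {p : ℝ} (hp : 0 < p)
    (hm : 1 ≤ p * Fintype.card V) :
    ∑ v : V, ∑ x ∈ (G ×ˢ G).filter (BadA v), p ^ ((x.1 ∪ x.2).erase v).card ≤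
      (b + 1) * 2 ^ (b + 1) * (d : ℝ) ^ 2 * p * (p * Fintype.card V) ^ (2 * b - 2) := by
  set n : ℝ := (Fintype.card V : ℝ) with hn
  have inner : ∀ g ∈ G, ∑ h ∈ G.filter (fun h => g ≠ h ∧ 2 ≤ (g ∩ h).card),
      p ^ ((g ∪ h).card - 1) ≤ 2 ^ (b + 1) * (d * ((p * n) ^ (b - 2) * p ^ (b + 1))) := by
    intro g hg
    have hmaps : ∀ h ∈ G.filter (fun h => g ≠ h ∧ 2 ≤ (g ∩ h).card), g ∩ h ∈ g.powerset :=
      fun h _ => Finset.mem_powerset.2 Finset.inter_subset_left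
    rw [← Finset.sum_fiberwise_of_maps_to hmaps]
    calc _ ≤ ∑ J ∈ g.powerset, (d * ((p * n) ^ (b - 2) * p ^ (b + 1))) := by
          apply Finset.sum_le_sum
          intro J hJ
          by_cases hcard : 2 ≤ J.card ∧ J.card ≤ b
          · have hle : ∑ h ∈ (G.filter (fun h => g ≠ h ∧ 2 ≤ (g ∩ h).card)).filter
                (fun h => g ∩ h = J), p ^ ((g ∪ h).card - 1) ≤
                ∑ h ∈ G.filter (fun h => J ⊆ h), p ^ (2 * b + 1 - J.card) := by
              calc _ = ∑ h ∈ (G.filter (fun h => g ≠ h ∧ 2 ≤ (g ∩ h).card)).filter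
                    (fun h => g ∩ h = J), p ^ (2 * b + 1 - J.card) := by
                    refine Finset.sum_congr rfl (fun h hh => ?_)
                    simp only [Finset.mem_filter] at hh
                    have e1 := Finset.card_union_add_card_inter g h
                    rw [hG _ hg, hG _ hh.1.1, hh.2] at e1
                    congr 1; omega
                _ ≤ _ := by
                    apply Finset.sum_le_sum_of_subset_of_nonneg
                    · intro h hh
                      simp only [Finset.mem_filter] at hh ⊢
                      exact ⟨hh.1.1, by rw [← hh.2]; exact Finset.inter_subset_right⟩
                    · intro _ _ _; positivity
            refine hle.trans ?_
            rw [Finset.sum_const, nsmul_eq_mul]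
            have hd : ((G.filter (fun h => J ⊆ h)).card : ℝ) ≤ n ^ (b - J.card) * d := by
              rw [hn]; exact_mod_cast deg_le G b hG d hdeg (b - J.card) J (by omega)
            calc _ ≤ n ^ (b - J.card) * d * p ^ (2 * b + 1 - J.card) :=
                  mul_le_mul_of_nonneg_right hd (by positivity)
              _ = d * ((p * n) ^ (b - J.card) * p ^ (b + 1)) := by
                  rw [show 2 * b + 1 - J.card = (b - J.card) + (b + 1) by omega, pow_add, mul_pow]
                  ring
              _ ≤ _ := by
                  have : (p * n) ^ (b - J.card) ≤ (p * n) ^ (b - 2) :=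
                    pow_le_pow_right₀ hm (by omega)
                  gcongr
          · have hemp : (G.filter (fun h => g ≠ h ∧ 2 ≤ (g ∩ h).card)).filter
                (fun h => g ∩ h = J) = ∅ := by
              rw [Finset.eq_empty_iff_forall_notMem]
              intro h hh
              simp only [Finset.mem_filter] at hh
              apply hcard
              rw [← hh.2]
              refine ⟨hh.1.2.2, ?_⟩
              by_contra hlt
              have hgh : g ∩ h = g := Finset.eq_of_subset_of_card_le Finset.inter_subset_left
                (by rw [hG g hg]; omega)
              have hgh2 : g ∩ h = h := Finset.eq_of_subset_of_card_le Finset.inter_subset_right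
                (by rw [hG h hh.1.1]; omega)
              exact hh.1.2.1 (hgh.symm.trans hgh2)
            rw [hemp, Finset.sum_empty]
            positivity
      _ = _ := by
          rw [Finset.sum_const, Finset.card_powerset, hG g hg, nsmul_eq_mul]
          push_cast; ring
  have perv : ∀ v : V, ∑ x ∈ (G ×ˢ G).filter (BadA v), p ^ ((x.1 ∪ x.2).erase v).card ≤
      ((G.filter (fun g => v ∈ g)).card : ℝ) *
        (2 ^ (b + 1) * (d * ((p * n) ^ (b - 2) * p ^ (b + 1)))) := by
    intro v
    calc _ = ∑ g ∈ G.filter (fun g => v ∈ g), ∑ h ∈ G.filter (fun h => g ≠ h ∧ 2 ≤ (g ∩ h).card),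
          p ^ ((g ∪ h).card - 1) := by
          rw [Finset.sum_sigma']
          refine Finset.sum_bij' (fun x _ => ⟨x.1, x.2⟩) (fun x _ => (x.1, x.2)) ?_ ?_ ?_ ?_ ?_
          · intro x hx
            simp only [Finset.mem_filter, Finset.mem_product, BadA, Finset.mem_sigma] at hx ⊢
            tauto
          · intro x hx
            simp only [Finset.mem_filter, Finset.mem_product, BadA, Finset.mem_sigma] at hx ⊢
            tauto
          · intro x hx; rfl
          · intro x hx; rfl
          · intro x hx
            simp only [Finset.mem_filter, Finset.mem_product, BadA] at hx
            rw [Finset.card_erase_of_mem (Finset.mem_union_left _ hx.2.1)]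
      _ ≤ ∑ g ∈ G.filter (fun g => v ∈ g), (2 ^ (b + 1) * (d * ((p * n) ^ (b - 2) * p ^ (b + 1)))) :=
          Finset.sum_le_sum (fun g hg => inner g (Finset.mem_filter.1 hg).1)
      _ = _ := by rw [Finset.sum_const, nsmul_eq_mul]
  calc _ ≤ _ := Finset.sum_le_sum (fun v _ => perv v)
    _ = (∑ v : V, ((G.filter (fun g => v ∈ g)).card : ℝ)) *
        (2 ^ (b + 1) * (d * ((p * n) ^ (b - 2) * p ^ (b + 1)))) := by rw [Finset.sum_mul]
    _ ≤ (b + 1) * (n ^ b * d) * (2 ^ (b + 1) * (d * ((p * n) ^ (b - 2) * p ^ (b + 1)))) :=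
        mul_le_mul_of_nonneg_right (sum_edges G b hG d hdeg) (by positivity)
    _ = _ := by
        rw [show 2 * b - 2 = (b - 2) + b by omega, pow_add (p * n), mul_pow p n b, pow_succ p b]
        ring

lemma badB_sum (G : Finset (Finset V)) (b : ℕ) (hG : ∀ e ∈ G, e.card = b + 1)
    (d : ℕ) (hdeg : maxDegLe b G d) (hb : 2 ≤ b) {p : ℝ} (hp : 0 < p) (hp1 : p ≤ 1) :
    ∑ v : V, ∑ x ∈ (G ×ˢ G ×ˢ G).filter (BadB b v), p ^ ((x.1 ∪ x.2.1 ∪ x.2.2).erase v).card ≤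
      (b + 1) ^ 3 * (d : ℝ) ^ 3 * p ^ 2 * (p * Fintype.card V) ^ (3 * b - 3) := by
  set n : ℝ := (Fintype.card V : ℝ) with hn
  have hin1 : ∀ (v : V), ∀ f ∈ G, v ∉ f → 
      ((G.filter (fun f2 => v ∈ f2 ∧ ∃ y ∈ f, y ∈ f2)).card : ℝ) ≤ (b + 1) * (n ^ (b - 2) * d) := by
    intro v f hf hvf
    have hs : G.filter (fun f2 => v ∈ f2 ∧ ∃ y ∈ f, y ∈ f2) ⊆
        f.biUnion (fun y => G.filter (fun h => ({v, y} : Finset V) ⊆ h)) := by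
      intro h hh
      simp only [Finset.mem_filter] at hh
      obtain ⟨hhG, hvh, y, hy, hyh⟩ := hh
      simp only [Finset.mem_biUnion, Finset.mem_filter]
      refine ⟨y, hy, hhG, ?_⟩
      intro a ha
      simp only [Finset.mem_insert, Finset.mem_singleton] at ha
      rcases ha with rfl | rfl <;> assumption
    have : (G.filter (fun f2 => v ∈ f2 ∧ ∃ y ∈ f, y ∈ f2)).card ≤
        (b + 1) * ((Fintype.card V) ^ (b - 2) * d) := by
      calc _ ≤ _ := Finset.card_le_card hs
        _ ≤ ∑ y ∈ f, (G.filter (fun h => ({v, y} : Finset V) ⊆ h)).card := Finset.card_biUnion_le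
        _ ≤ ∑ y ∈ f, (Fintype.card V) ^ (b - 2) * d := by
            apply Finset.sum_le_sum
            intro y hy
            apply deg_le G b hG d hdeg
            have hvy : v ≠ y := fun h => hvf (by rw [h]; exact hy)
            rw [Finset.card_pair hvy]
            omega
        _ = _ := by rw [Finset.sum_const, hG f hf, smul_eq_mul]
    rw [hn]; exact_mod_cast this
  have hin2 : ∀ f1 ∈ G, 
      ((G.filter (fun f => ∃ y ∈ f1, y ∈ f)).card : ℝ) ≤ (b + 1) * (n ^ (b - 1) * d) := by
    intro f hf
    have hs : G.filter (fun f2 => ∃ y ∈ f, y ∈ f2) ⊆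
        f.biUnion (fun y => G.filter (fun h => ({y} : Finset V) ⊆ h)) := by
      intro h hh
      simp only [Finset.mem_filter] at hh
      obtain ⟨hhG, y, hy, hyh⟩ := hh
      simp only [Finset.mem_biUnion, Finset.mem_filter]
      exact ⟨y, hy, hhG, Finset.singleton_subset_iff.2 hyh⟩
    have : (G.filter (fun f2 => ∃ y ∈ f, y ∈ f2)).card ≤
        (b + 1) * ((Fintype.card V) ^ (b - 1) * d) := by
      calc _ ≤ _ := Finset.card_le_card hs
        _ ≤ ∑ y ∈ f, (G.filter (fun h => ({y} : Finset V) ⊆ h)).card := Finset.card_biUnion_le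
        _ ≤ ∑ y ∈ f, (Fintype.card V) ^ (b - 1) * d := by
            apply Finset.sum_le_sum
            intro y hy
            apply deg_le G b hG d hdeg
            rw [Finset.card_singleton]
            omega
        _ = _ := by rw [Finset.sum_const, hG f hf, smul_eq_mul]
    rw [hn]; exact_mod_cast this
  have perv : ∀ v : V, ∑ x ∈ (G ×ˢ G ×ˢ G).filter (BadB b v),
      p ^ ((x.1 ∪ x.2.1 ∪ x.2.2).erase v).card ≤
      ((G.filter (fun g => v ∈ g)).card : ℝ) *
        ((b + 1) * (n ^ (b - 1) * d) * ((b + 1) * (n ^ (b - 2) * d) * p ^ (3 * b - 1))) := by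
    intro v
    calc _ ≤ ∑ x ∈ (G ×ˢ G ×ˢ G).filter (BadB b v), p ^ (3 * b - 1) := by
          apply Finset.sum_le_sum
          intro x hx
          simp only [Finset.mem_filter, BadB] at hx
          apply pow_le_pow_of_le_one hp.le hp1
          rw [Finset.card_erase_of_mem
            (Finset.mem_union_left _ (Finset.mem_union_left _ hx.2.1))]
          omega
      _ ≤ ∑ x ∈ (G.filter (fun g => v ∈ g)).sigma (fun f1 =>
            ((G.filter (fun f => ∃ y ∈ f1, y ∈ f)).filter (fun f => v ∉ f)).sigma (fun f =>
              G.filter (fun f2 => v ∈ f2 ∧ ∃ y ∈ f, y ∈ f2))), p ^ (3 * b - 1) := by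
          rw [Finset.sum_const, Finset.sum_const]
          refine nsmul_le_nsmul_left (by positivity) ?_
          apply Finset.card_le_card_of_injOn (fun x => ⟨x.1, x.2.1, x.2.2⟩)
          · intro x hx
            simp only [Finset.mem_coe, Finset.mem_filter, Finset.mem_product, BadB,
              Finset.mem_sigma] at hx ⊢
            tauto
          · rintro ⟨a, b, c⟩ hx ⟨a', b', c'⟩ hx' heq
            simpa using heq
      _ = ∑ f1 ∈ G.filter (fun g => v ∈ g), 
            ∑ f ∈ (G.filter (fun f => ∃ y ∈ f1, y ∈ f)).filter (fun f => v ∉ f),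
              ((G.filter (fun f2 => v ∈ f2 ∧ ∃ y ∈ f, y ∈ f2)).card : ℝ) * p ^ (3 * b - 1) := by
          rw [Finset.sum_sigma]
          refine Finset.sum_congr rfl (fun f1 _ => ?_)
          rw [Finset.sum_sigma]
          refine Finset.sum_congr rfl (fun f _ => ?_)
          rw [Finset.sum_const, nsmul_eq_mul]
      _ ≤ ∑ f1 ∈ G.filter (fun g => v ∈ g), 
            ((b + 1) * (n ^ (b - 1) * d) * ((b + 1) * (n ^ (b - 2) * d) * p ^ (3 * b - 1))) := by
          apply Finset.sum_le_sum
          intro f1 hf1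
          calc _ ≤ ∑ f ∈ (G.filter (fun f => ∃ y ∈ f1, y ∈ f)).filter (fun f => v ∉ f),
                ((b + 1) * (n ^ (b - 2) * d) * p ^ (3 * b - 1)) := by
                apply Finset.sum_le_sum
                intro f hf
                simp only [Finset.mem_filter] at hf
                exact mul_le_mul_of_nonneg_right (hin1 v f hf.1.1 hf.2) (by positivity)
            _ ≤ ∑ f ∈ (G.filter (fun f => ∃ y ∈ f1, y ∈ f)),
                ((b + 1) * (n ^ (b - 2) * d) * p ^ (3 * b - 1)) :=
                Finset.sum_le_sum_of_subset_of_nonneg (Finset.filter_subset _ _)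
                  (fun _ _ _ => by positivity)
            _ ≤ _ := by
                rw [Finset.sum_const, nsmul_eq_mul]
                exact mul_le_mul_of_nonneg_right (hin2 f1 (Finset.mem_filter.1 hf1).1)
                  (by positivity)
      _ = _ := by rw [Finset.sum_const, nsmul_eq_mul]
  calc _ ≤ _ := Finset.sum_le_sum (fun v _ => perv v)
    _ = (∑ v : V, ((G.filter (fun g => v ∈ g)).card : ℝ)) *
        ((b + 1) * (n ^ (b - 1) * d) * ((b + 1) * (n ^ (b - 2) * d) * p ^ (3 * b - 1))) := by
          rw [Finset.sum_mul]
    _ ≤ (b + 1) * (n ^ b * d) *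
        ((b + 1) * (n ^ (b - 1) * d) * ((b + 1) * (n ^ (b - 2) * d) * p ^ (3 * b - 1))) :=
        mul_le_mul_of_nonneg_right (sum_edges G b hG d hdeg) (by positivity)
    _ = _ := by
        obtain ⟨c, rfl⟩ := Nat.exists_eq_add_of_le hb
        rw [show 3 * (2 + c) - 3 = 3 * c + 3 by omega, show 3 * (2 + c) - 1 = 3 * c + 5 by omega,
          show 2 + c - 1 = c + 1 by omega, show 2 + c - 2 = c by omega]
        rw [mul_pow p n]
        ring

lemma bad_weight (G : Finset (Finset V)) (b : ℕ) (hG : ∀ e ∈ G, e.card = b + 1)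
    (d : ℕ) (hdeg : maxDegLe b G d) (hb : 2 ≤ b) {p : ℝ} (hp : 0 < p) (hp1 : p ≤ 1)
    (hm : 1 ≤ p * Fintype.card V) :
    ∑ v : V, ∑ U ∈ (Finset.univ : Finset (Finset V)).filter
      (fun U => v ∉ U ∧ Bad G v U), wt p U ≤
      (b + 1) * 2 ^ (b + 1) * (d : ℝ) ^ 2 * p * (p * Fintype.card V) ^ (2 * b - 2) +
      (b + 1) ^ 3 * (d : ℝ) ^ 3 * p ^ 2 * (p * Fintype.card V) ^ (3 * b - 3) := by
  refine le_trans ?_ (add_le_add (badA_sum G b hG d hdeg hb hp hm) (badB_sum G b hG d hdeg hb hp hp1))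
  rw [← Finset.sum_add_distrib]
  apply Finset.sum_le_sum
  intro v _
  refine le_trans ?_ (add_le_add
    (union_bound ((G ×ˢ G).filter (BadA v)) (fun x => (x.1 ∪ x.2).erase v)
      (fun U => ∃ x ∈ (G ×ˢ G).filter (BadA v), (x.1 ∪ x.2).erase v ⊆ U) hp.le hp1
      (fun U h => h))
    (union_bound ((G ×ˢ G ×ˢ G).filter (BadB b v)) (fun x => (x.1 ∪ x.2.1 ∪ x.2.2).erase v)
      (fun U => ∃ x ∈ (G ×ˢ G ×ˢ G).filter (BadB b v), (x.1 ∪ x.2.1 ∪ x.2.2).erase v ⊆ U)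
      hp.le hp1 (fun U h => h)))
  rw [← Finset.sum_union_inter]
  refine le_trans ?_ (le_add_of_nonneg_right (Finset.sum_nonneg
    (fun U _ => wt_nonneg hp.le hp1 U)))
  apply Finset.sum_le_sum_of_subset_of_nonneg
  · intro U hU
    rw [Finset.mem_filter] at hU
    rcases bad_split G b hG v U hU.2.1 hU.2.2 with h | h
    · exact Finset.mem_union.2 (Or.inl (Finset.mem_filter.2 ⟨Finset.mem_univ _, h⟩))
    · exact Finset.mem_union.2 (Or.inr (Finset.mem_filter.2 ⟨Finset.mem_univ _, h⟩))
  · intro U _ _; exact wt_nonneg hp.le hp1 U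

end TrProof

namespace TrProof

lemma hc_aux (b : ℕ) (hb : 1 ≤ b) (M : ℝ) (hM : 1 ≤ M) (a : ℕ) :
    Real.log M / 2 ^ (b + 1) ≤ a * (1 / 2 : ℝ) ^ b + M / 2 * (1 - (1 / 2 : ℝ) ^ b) ^ a := by
  have hl : 0 ≤ Real.log M := Real.log_nonneg hM
  have hhalf : (1 / 2 : ℝ) ^ b ≤ 1 / 2 := by
    calc (1 / 2 : ℝ) ^ b ≤ (1 / 2 : ℝ) ^ 1 :=
          pow_le_pow_of_le_one (by norm_num) (by norm_num) hb
      _ = 1 / 2 := pow_one _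
  have hq : (0:ℝ) ≤ (1 - (1 / 2 : ℝ) ^ b) := by linarith
  have e1 : Real.log M / 2 ^ (b + 1) = Real.log M / 2 * (1 / 2 : ℝ) ^ b := by
    rw [pow_succ, one_div_pow]; field_simp
  rw [e1]
  by_cases ha : Real.log M / 2 ≤ a
  · have h1 : Real.log M / 2 * (1 / 2 : ℝ) ^ b ≤ a * (1 / 2 : ℝ) ^ b :=
      mul_le_mul_of_nonneg_right ha (by positivity)
    have h2 : 0 ≤ M / 2 * (1 - (1 / 2 : ℝ) ^ b) ^ a := by positivity
    linarith
  · push Not at ha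
    have he : Real.exp (-1) ≤ 1 - (1 / 2 : ℝ) ^ b := by
      have h2 : (2:ℝ) ≤ Real.exp 1 := by
        have := Real.add_one_le_exp (1:ℝ); linarith
      have : Real.exp (-1) ≤ 1 / 2 := by
        rw [Real.exp_neg, ← one_div]
        exact one_div_le_one_div_of_le (by norm_num) h2
      linarith
    have h1 : Real.exp (-(Real.log M / 2)) ≤ (1 - (1 / 2 : ℝ) ^ b) ^ a := by
      calc Real.exp (-(Real.log M / 2)) ≤ Real.exp (a * (-1)) := by
            apply Real.exp_le_exp.2; linarith
        _ = Real.exp (-1) ^ a := Real.exp_nat_mul _ _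
        _ ≤ _ := pow_le_pow_left₀ (Real.exp_pos _).le he a
    have h2 : M * Real.exp (-(Real.log M / 2)) = Real.exp (Real.log M / 2) := by
      conv_lhs => rw [← Real.exp_log (show 0 < M by linarith)]
      rw [← Real.exp_add]
      rw [Real.log_exp]
      congr 1; ring
    have h3 := Real.add_one_le_exp (Real.log M / 2)
    have h4 : M / 2 * Real.exp (-(Real.log M / 2)) ≤ M / 2 * (1 - (1 / 2 : ℝ) ^ b) ^ a :=
      mul_le_mul_of_nonneg_left h1 (by linarith)
    have h5 : Real.log M / 2 * (1 / 2 : ℝ) ^ b ≤ Real.log M / 2 * (1 / 2) :=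
      mul_le_mul_of_nonneg_left hhalf (by linarith)
    have h6 : (0:ℝ) ≤ a * (1 / 2 : ℝ) ^ b := by positivity
    linarith

variable {V : Type*} [Fintype V] [DecidableEq V]

lemma codeg (G : Finset (Finset V)) (b t : ℕ) (hG : ∀ e ∈ G, e.card = b + 1)
    (hT : ¬ ContainsTr (b + 1) G) (hind : ∀ W, IsIndep G W → W.card ≤ t) :
    maxDegLe b G t := by
  intro S hS
  set Nb := (Finset.univ : Finset V).filter (fun v => v ∉ S ∧ insert v S ∈ G) with hNb
  have hN : IsIndep G Nb := by
    intro e he hsub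
    apply hT
    refine ⟨S, e, ?_, by simpa using hS, hG e he, he, ?_⟩
    · rw [Finset.disjoint_right]
      intro a ha
      have := hsub ha
      simp only [hNb, Finset.mem_filter] at this
      exact this.2.1
    · intro v hv
      have := hsub hv
      simp only [hNb, Finset.mem_filter] at this
      exact this.2.2
  refine le_trans ?_ (hind _ hN)
  have hs : G.filter (fun e => S ⊆ e) ⊆ Nb.image (fun v => insert v S) := by
    intro e he
    rw [Finset.mem_filter] at he
    obtain ⟨x, hx, hxS⟩ := Finset.exists_mem_notMem_of_card_lt_card
        (show S.card < e.card by rw [hG e he.1]; omega)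
    have heq : insert x S = e := by
      apply Finset.eq_of_subset_of_card_le (Finset.insert_subset hx he.2)
      rw [Finset.card_insert_of_notMem hxS, hG e he.1, hS]
    refine Finset.mem_image.2 ⟨x, ?_, heq⟩
    simp only [hNb, Finset.mem_filter, Finset.mem_univ, true_and]
    exact ⟨hxS, by rw [heq]; exact he.1⟩
  exact (Finset.card_le_card hs).trans Finset.card_image_le

lemma no_bad_two (G : Finset (Finset V)) (hG : ∀ e ∈ G, e.card = 2)
    (hT : ¬ ContainsTr 2 G) (v : V) (U : Finset V) (hv : v ∉ U) : ¬ Bad G v U := by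
  rintro ⟨f1, hf1, f2, hf2, f, hf, hv1, hv2, h1U, h2U, hU, x, hxf, hx1, y, hyf, hy2, hy1⟩
  have hvf : v ∉ f := fun h => hv (hU h)
  have hxv : x ≠ v := fun h => hvf (by rw [← h]; exact hxf)
  have hyv : y ≠ v := fun h => hvf (by rw [← h]; exact hyf)
  have hxy : x ≠ y := fun h => hy1 (by rw [← h]; exact hx1)
  have pair : ∀ (g : Finset V) (a c : V), g ∈ G → a ∈ g → c ∈ g → a ≠ c → ({a, c} : Finset V) = g := by
    intro g a c hg ha hc hac
    apply Finset.eq_of_subset_of_card_le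
    · intro z hz
      simp only [Finset.mem_insert, Finset.mem_singleton] at hz
      rcases hz with rfl | rfl <;> assumption
    · rw [Finset.card_pair hac, hG g hg]
  apply hT
  refine ⟨{v}, f, by simpa using hvf, by simp, hG f hf, hf, ?_⟩
  intro z hz
  rw [← pair f x y hf hxf hyf hxy] at hz
  simp only [Finset.mem_insert, Finset.mem_singleton] at hz
  rcases hz with rfl | rfl
  · rw [pair f1 _ _ hf1 hx1 hv1 hxv]; exact hf1
  · rw [pair f2 _ _ hf2 hy2 hv2 hyv]; exact hf2

set_option maxHeartbeats 4000000 in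
lemma big (r : ℕ) (hr : 2 ≤ r) (t : ℕ) (ht : 1 ≤ t) (hlog : 48 * (r : ℝ) * 2 ^ r ≤ Real.log t)
    (hN : 64 * (r : ℝ) * 2 ^ r * (t : ℝ) ^ r / Real.log t ≤ (Fintype.card V : ℝ))
    (G : Finset (Finset V)) (hG : ∀ e ∈ G, e.card = r) :
    ContainsTr r G ∨ t ≤ indepNum G := by
  by_contra hcon
  push Not at hcon
  obtain ⟨hT, hI⟩ := hcon
  obtain ⟨b, rfl⟩ : ∃ b, r = b + 1 := ⟨r - 1, by omega⟩
  have hb : 1 ≤ b := by omega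
  have hind : ∀ W, IsIndep G W → W.card ≤ t := by
    intro W hW
    refine le_trans ?_ hI.le
    exact Finset.le_sup (f := Finset.card) (Finset.mem_filter.2 ⟨by simp, hW⟩)
  have hdeg := codeg G b t hG hT hind
  set n : ℝ := (Fintype.card V : ℝ) with hn
  set T : ℝ := (t : ℝ) with hTdef
  set R : ℝ := ((b + 1 : ℕ) : ℝ) with hR
  have hR2 : (2:ℝ) ≤ R := by rw [hR]; exact_mod_cast hr
  have hRb : R = (b:ℝ) + 1 := by rw [hR]; push_cast; ring
  have hT1 : (1:ℝ) ≤ T := by rw [hTdef]; exact_mod_cast ht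
  have hT0 : 0 < T := by linarith
  have h2r : (4:ℝ) ≤ 2 ^ (b + 1) := by
    calc (4:ℝ) = 2 ^ 2 := by norm_num
      _ ≤ _ := pow_le_pow_right₀ (by norm_num) (by omega)
  have hRR : (8:ℝ) ≤ R * 2 ^ (b + 1) := by nlinarith
  have hL0 : 0 < Real.log T := by nlinarith
  set K : ℝ := 8 * R * 2 ^ (b + 1) with hK
  have hK4 : 4 ≤ K := by rw [hK]; nlinarith
  have hnK : K * T ^ (R - 1 / 8) ≤ n := by
    refine le_trans ?_ hN
    have hl := Real.log_le_rpow_div hT0.le (show (0:ℝ) < 1 / 8 by norm_num)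
    rw [le_div_iff₀ hL0]
    calc K * T ^ (R - 1 / 8) * Real.log T
        ≤ K * T ^ (R - 1 / 8) * (T ^ (1 / 8 : ℝ) / (1 / 8)) :=
          mul_le_mul_of_nonneg_left hl (by positivity)
      _ = 8 * K * (T ^ (R - 1 / 8) * T ^ (1 / 8 : ℝ)) := by ring
      _ = 8 * K * T ^ (b + 1) := by
          rw [← Real.rpow_add hT0, sub_add_cancel, hR, Real.rpow_natCast]
      _ = _ := by rw [hK]; ring
  have hTpos : ∀ x : ℝ, 0 < T ^ x := fun x => Real.rpow_pos_of_pos hT0 x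
  have hn0 : 0 < n := lt_of_lt_of_le (mul_pos (by linarith) (hTpos _)) hnK
  set m : ℝ := T ^ (1 + 1 / (6 * R)) with hm
  have hm0 : 0 < m := hTpos _
  have hRinv : 1 / (6 * R) ≤ 1 / 12 := one_div_le_one_div_of_le (by norm_num) (by linarith)
  have hRinv0 : 0 ≤ 1 / (6 * R) := by positivity
  have hm1 : 1 ≤ m := Real.one_le_rpow hT1 (by linarith)
  have hmn : 4 * m ≤ n := by
    refine le_trans ?_ hnK
    have : m ≤ T ^ (R - 1 / 8) := Real.rpow_le_rpow_of_exponent_le hT1 (by linarith)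
    calc 4 * m ≤ K * m := mul_le_mul_of_nonneg_right hK4 hm0.le
      _ ≤ _ := mul_le_mul_of_nonneg_left this (by linarith)
  set p : ℝ := m / n with hp
  have hp0 : 0 < p := div_pos hm0 hn0
  have hp1 : p ≤ 1 / 4 := by rw [hp, div_le_iff₀ hn0]; linarith
  have hpn : p * n = m := by rw [hp]; field_simp
  set M : ℝ := T ^ (1 / (12 * R)) with hM
  have hM1 : 1 ≤ M := Real.one_le_rpow hT1 (by positivity)
  have hlogM : Real.log M = Real.log T / (12 * R) := by
    rw [hM, Real.log_rpow hT0]; ring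
  set c₀ : ℝ := Real.log M / 2 ^ (b + 1) with hc
  have hc0 : c₀ = Real.log T / (12 * R * 2 ^ (b + 1)) := by
    rw [hc, hlogM, div_div]
  have hc4 : 4 ≤ c₀ := by
    rw [hc0, le_div_iff₀ (by positivity)]; linarith
  have hbadsum : ∑ v : V, ∑ U ∈ (Finset.univ : Finset (Finset V)).filter
      (fun U => v ∉ U ∧ Bad G v U), wt p U ≤ n / 4 := by
    rcases Nat.lt_or_ge b 2 with hb2 | hb2
    · obtain rfl : b = 1 := by omega
      have : ∀ v : V, (Finset.univ : Finset (Finset V)).filter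
          (fun U => v ∉ U ∧ Bad G v U) = ∅ := by
        intro v
        rw [Finset.eq_empty_iff_forall_notMem]
        intro U hU
        rw [Finset.mem_filter] at hU
        exact no_bad_two G hG hT v U hU.2.1 hU.2.2
      simp only [this, Finset.sum_empty, Finset.sum_const_zero]
      positivity
    · refine (bad_weight G b hG t hdeg hb2 hp0 (by linarith) (by rw [hpn]; exact hm1)).trans ?_
      rw [← hn, hpn, ← hRb, ← hTdef]
      have hn2 : (K * T ^ (R - 1 / 8)) ^ 2 ≤ n ^ 2 :=
        pow_le_pow_left₀ (by positivity) hnK 2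
      have hn3 : (K * T ^ (R - 1 / 8)) ^ 3 ≤ n ^ 3 :=
        pow_le_pow_left₀ (by positivity) hnK 3
      have hRi : 1 / (6 * R) * R = 1 / 6 := by field_simp
      have cA : ((2 * b - 1 : ℕ) : ℝ) = 2 * R - 3 := by
        rw [Nat.cast_sub (by omega), hRb]; push_cast; ring
      have cB : ((3 * b - 1 : ℕ) : ℝ) = 3 * R - 4 := by
        rw [Nat.cast_sub (by omega), hRb]; push_cast; ring
      have pA : T ^ 2 * m ^ (2 * b - 1) ≤ (T ^ (R - 1 / 8)) ^ 2 := by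
        rw [hm, ← Real.rpow_mul_natCast hT0.le, ← Real.rpow_mul_natCast hT0.le,
          ← Real.rpow_natCast T 2, ← Real.rpow_add hT0, cA]
        apply Real.rpow_le_rpow_of_exponent_le hT1
        push_cast
        nlinarith
      have pB : T ^ 3 * m ^ (3 * b - 1) ≤ (T ^ (R - 1 / 8)) ^ 3 := by
        rw [hm, ← Real.rpow_mul_natCast hT0.le, ← Real.rpow_mul_natCast hT0.le,
          ← Real.rpow_natCast T 3, ← Real.rpow_add hT0, cB]
        apply Real.rpow_le_rpow_of_exponent_le hT1
        push_cast
        nlinarith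
      have qA : R * 2 ^ (b + 1) * T ^ 2 * p * m ^ (2 * b - 2) ≤ n / 8 := by
        have e : R * 2 ^ (b + 1) * T ^ 2 * p * m ^ (2 * b - 2) =
            R * 2 ^ (b + 1) * (T ^ 2 * m ^ (2 * b - 1)) / n := by
          rw [hp, show 2 * b - 1 = (2 * b - 2) + 1 by omega, pow_succ m]; ring
        rw [e, div_le_iff₀ hn0]
        have s1 : R * 2 ^ (b + 1) * (T ^ 2 * m ^ (2 * b - 1)) ≤
            K / 8 * (T ^ (R - 1 / 8)) ^ 2 := by
          rw [hK]
          calc _ ≤ R * 2 ^ (b + 1) * (T ^ (R - 1 / 8)) ^ 2 :=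
                mul_le_mul_of_nonneg_left pA (by positivity)
            _ = _ := by ring
        have s2 : K / 8 * (T ^ (R - 1 / 8)) ^ 2 ≤ K ^ 2 / 8 * (T ^ (R - 1 / 8)) ^ 2 :=
          mul_le_mul_of_nonneg_right (by nlinarith) (by positivity)
        rw [mul_pow] at hn2
        linarith
      have qB : R ^ 3 * T ^ 3 * p ^ 2 * m ^ (3 * b - 3) ≤ n / 8 := by
        have e : R ^ 3 * T ^ 3 * p ^ 2 * m ^ (3 * b - 3) =
            R ^ 3 * (T ^ 3 * m ^ (3 * b - 1)) / n ^ 2 := by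
          rw [hp, show 3 * b - 1 = (3 * b - 3) + 2 by omega, pow_add m]; ring
        rw [e, div_le_iff₀ (by positivity)]
        have s1 : R ^ 3 * (T ^ 3 * m ^ (3 * b - 1)) ≤
            R ^ 3 * (T ^ (R - 1 / 8)) ^ 3 :=
          mul_le_mul_of_nonneg_left pB (by positivity)
        have hKR : 8 * R ^ 3 ≤ K ^ 3 := by
          calc 8 * R ^ 3 = (2 * R) ^ 3 := by ring
            _ ≤ K ^ 3 := by
              apply pow_le_pow_left₀ (by positivity)
              rw [hK]; nlinarith
        have s2 : R ^ 3 * (T ^ (R - 1 / 8)) ^ 3 ≤ K ^ 3 / 8 * (T ^ (R - 1 / 8)) ^ 3 :=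
          mul_le_mul_of_nonneg_right (by linarith) (by positivity)
        rw [mul_pow] at hn3
        linarith
      linarith
  have main := main_ineq G b hG t t hdeg hind p hp0 hp1 c₀ M (by linarith) (by linarith)
    (fun a => hc_aux b hb M hM1 a) hbadsum
  rw [← hn, ← hTdef] at main
  have hMp : M / p * T ≤ n := by
    have e : M / p * T = n * (M * T / m) := by rw [hp]; field_simp
    rw [e]
    have : M * T / m ≤ 1 := by
      rw [div_le_one hm0, hM, hm]
      nth_rewrite 2 [← Real.rpow_one T]
      rw [← Real.rpow_add hT0]
      apply Real.rpow_le_rpow_of_exponent_le hT1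
      have : 1 / (12 * R) ≤ 1 / (6 * R) :=
        one_div_le_one_div_of_le (by linarith) (by linarith)
      linarith
    calc _ ≤ n * 1 := mul_le_mul_of_nonneg_left this hn0.le
      _ = n := mul_one n
  rw [← pow_succ] at main
  have h1 : c₀ * n / 4 ≤ T ^ (b + 1) := by nlinarith
  rw [hc0] at h1
  rw [div_le_iff₀ hL0] at hN
  have hD : (0:ℝ) < 12 * R * 2 ^ (b + 1) := by positivity
  have h2 : Real.log T * n ≤ 4 * (12 * R * 2 ^ (b + 1)) * T ^ (b + 1) := by
    have : Real.log T / (12 * R * 2 ^ (b + 1)) * n / 4 =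
      Real.log T * n / (4 * (12 * R * 2 ^ (b + 1))) := by field_simp
    rw [this, div_le_iff₀ (by positivity)] at h1
    linarith
  have h3 : 0 < R * 2 ^ (b + 1) * T ^ (b + 1) := by positivity
  linarith

end TrProof

/-- For every `r ≥ 2` there is `C > 0` such that for all `t ≥ 2` and
`N ≥ C·t^r/log t`, every `r`-graph on `N` vertices contains a copy of `T_r` or has an
independent set of size `t`; i.e. `R(T_r, K_t^{(r)}) = O(t^r / log t)`. -/
theorem stmt8 (r : ℕ) (hr : 2 ≤ r) :
    ∃ C : ℝ, 0 < C ∧ ∀ t : ℕ, 2 ≤ t → ∀ N : ℕ,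
      C * (t : ℝ) ^ r / Real.log t ≤ (N : ℝ) →
      ∀ (V : Type) [Fintype V] [DecidableEq V], ∀ (G : Finset (Finset V)),
        Fintype.card V = N →
        (∀ e ∈ G, e.card = r) →
        ContainsTr r G ∨ t ≤ indepNum G := by
  obtain ⟨t₀, ht₀⟩ := exists_nat_ge (Real.exp (48 * (r : ℝ) * 2 ^ r))
  have he0 : (0:ℝ) < t₀ := lt_of_lt_of_le (Real.exp_pos _) ht₀
  have hC1 : (0:ℝ) < 64 * (r : ℝ) * 2 ^ r := by
    have : (0:ℝ) < r := by exact_mod_cast (by omega : 0 < r)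
    positivity
  refine ⟨max (64 * (r : ℝ) * 2 ^ r) (64 * (r : ℝ) * 2 ^ r * (t₀ : ℝ) ^ r / Real.log t₀),
    lt_of_lt_of_le hC1 (le_max_left _ _), ?_⟩
  intro t ht N hN V _ _ G hV hG
  have ht1 : (1:ℝ) < t := by exact_mod_cast (by omega : 1 < t)
  have hlt : 0 < Real.log t := Real.log_pos ht1
  subst hV
  have hlog : ∀ s : ℕ, t₀ ≤ s → 48 * (r : ℝ) * 2 ^ r ≤ Real.log s := by
    intro s hs
    have hs' : (t₀ : ℝ) ≤ s := by exact_mod_cast hs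
    rw [Real.le_log_iff_exp_le (by linarith)]
    linarith
  have ht₀1 : 1 ≤ t₀ := by exact_mod_cast he0
  rcases le_or_gt t₀ t with hle | hgt
  · apply TrProof.big r hr t (by omega) (hlog t hle) _ G hG
    refine le_trans ?_ hN
    apply div_le_div_of_nonneg_right _ hlt.le
    exact mul_le_mul_of_nonneg_right (le_max_left _ _) (by positivity)
  · have h := TrProof.big (V := V) r hr t₀ ht₀1 (hlog t₀ le_rfl) ?_ G hG
    · rcases h with h | h
      · exact Or.inl h
      · exact Or.inr (hgt.le.trans h)
    · refine le_trans (le_max_right (64 * (r : ℝ) * 2 ^ r) _) (le_trans ?_ hN)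
      rw [le_div_iff₀ hlt]
      apply mul_le_mul_of_nonneg_left _ (le_trans hC1.le (le_max_left _ _))
      calc Real.log t ≤ t := (Real.log_le_sub_one_of_pos (by linarith)).trans (by linarith)
        _ = (t:ℝ) ^ 1 := (pow_one _).symm
        _ ≤ (t:ℝ) ^ r := pow_le_pow_right₀ ht1.le (by omega)
end

section
/- Fix a real q ∈ (0,1] and let b : ℕ → ℕ satisfy b(k) ≥ 1 for all k. For k ≥ 1 define S(k) = Σ_{j=0}^{k} C(k,j)·q^j·(1−q)^{k−j}·min(j, b(k)). Then S(k)/min(q·k, b(k)) → 1 as k → ∞. -/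
open Finset

theorem aux_sum (q : ℝ) (k : ℕ) :
    ∑ j ∈ Finset.range (k + 1), (Nat.choose k j : ℝ) * q ^ j * (1 - q) ^ (k - j) = 1 := by
  have h := congrArg (Polynomial.eval q) (bernsteinPolynomial.sum ℝ k)
  simpa [Polynomial.eval_finset_sum, bernsteinPolynomial] using h

theorem aux_mean (q : ℝ) (k : ℕ) :
    ∑ j ∈ Finset.range (k + 1),
      (Nat.choose k j : ℝ) * q ^ j * (1 - q) ^ (k - j) * (j : ℝ) = q * k := by
  have h := congrArg (Polynomial.eval q) (bernsteinPolynomial.sum_smul ℝ k)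
  simp [Polynomial.eval_finset_sum, bernsteinPolynomial] at h
  rw [mul_comm q, ← h]
  exact Finset.sum_congr rfl fun j _ => by ring

theorem aux_var (q : ℝ) (k : ℕ) :
    ∑ j ∈ Finset.range (k + 1),
      (Nat.choose k j : ℝ) * q ^ j * (1 - q) ^ (k - j) * ((j : ℝ) - q * k) ^ 2
        = k * q * (1 - q) := by
  have h := congrArg (Polynomial.eval q) (bernsteinPolynomial.variance ℝ k)
  simp [Polynomial.eval_finset_sum, bernsteinPolynomial] at h
  rw [← h]
  exact Finset.sum_congr rfl fun j _ => by ring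

theorem aux_pt (m N s j b : ℝ) (hm : m = min N b) (hm0 : 0 < m) (hs : 0 < s) (hj0 : 0 ≤ j) :
    m * (1 - (1 / s + s * ((j - N) ^ 2 / N ^ 2)) / 2) ≤ min j b := by
  have hN : m ≤ N := hm ▸ min_le_left _ _
  have hb : m ≤ b := hm ▸ min_le_right _ _
  have hN0 : 0 < N := hm0.trans_le hN
  obtain ⟨t, ht⟩ : ∃ t, t = j / N := ⟨_, rfl⟩
  have hj : j = N * t := by rw [ht]; field_simp
  have e : (j - N) ^ 2 / N ^ 2 = (t - 1) ^ 2 := by rw [hj]; field_simp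
  rw [e]
  have h1 : 0 ≤ 1 / s + s * (t - 1) ^ 2 := by positivity
  have h2 : 1 / s + s * (t - 1) ^ 2 - 2 * (1 - t) = (s * (t - 1) + 1) ^ 2 / s := by
    field_simp
    ring
  have h3 : 0 ≤ (s * (t - 1) + 1) ^ 2 / s := by positivity
  have hu1 : 1 - (1 / s + s * (t - 1) ^ 2) / 2 ≤ 1 := by linarith
  have hut : 1 - (1 / s + s * (t - 1) ^ 2) / 2 ≤ t := by linarith
  generalize 1 - (1 / s + s * (t - 1) ^ 2) / 2 = u at *
  refine le_min ?_ (by nlinarith)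
  rw [hj]
  have ht0 : 0 ≤ t := by rw [ht]; positivity
  exact (mul_le_mul_of_nonneg_left hut hm0.le).trans (mul_le_mul_of_nonneg_right hN ht0)

/-- For fixed `q ∈ (0,1]` and `b : ℕ → ℕ` with `b k ≥ 1`, the quantity
`S(k) = Σ_{j=0}^{k} C(k,j)·q^j·(1−q)^{k−j}·min(j, b k)` satisfies
`S(k)/min(q·k, b k) → 1` as `k → ∞`. -/
theorem stmt11 (q : ℝ) (hq0 : 0 < q) (hq1 : q ≤ 1) (b : ℕ → ℕ) (hb : ∀ k, 1 ≤ b k) :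
    Filter.Tendsto (fun k : ℕ =>
      (∑ j ∈ Finset.range (k + 1),
          (Nat.choose k j : ℝ) * q ^ j * (1 - q) ^ (k - j) * min (j : ℝ) (b k : ℝ)) /
        min (q * k) (b k : ℝ))
      Filter.atTop (nhds 1) := by
  have hlim : Filter.Tendsto (fun k : ℕ => 1 - (1 / (2 * q)) * (Real.sqrt (k : ℝ))⁻¹)
      Filter.atTop (nhds 1) := by
    have h : Filter.Tendsto (fun k : ℕ => (Real.sqrt (k : ℝ))⁻¹) Filter.atTop (nhds 0) :=
      tendsto_inv_atTop_zero.comp (Real.tendsto_sqrt_atTop.comp tendsto_natCast_atTop_atTop)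
    simpa using (h.const_mul (1 / (2 * q))).const_sub 1
  have hw : ∀ k j : ℕ, 0 ≤ (Nat.choose k j : ℝ) * q ^ j * (1 - q) ^ (k - j) := fun k j => by
    have : 0 ≤ 1 - q := by linarith
    positivity
  refine tendsto_of_tendsto_of_tendsto_of_le_of_le' hlim tendsto_const_nhds ?_ ?_
  · filter_upwards [Filter.eventually_gt_atTop 0] with k hk
    have hk' : (0 : ℝ) < k := by exact_mod_cast hk
    have hb' : (0 : ℝ) < b k := by exact_mod_cast hb k
    have hm0 : 0 < min (q * k) (b k : ℝ) := lt_min (by positivity) hb'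
    rw [le_div_iff₀ hm0]
    have hs : 0 < Real.sqrt (k : ℝ) := Real.sqrt_pos.2 hk'
    have hss : Real.sqrt (k : ℝ) ^ 2 = k := Real.sq_sqrt hk'.le
    generalize Real.sqrt (k : ℝ) = s at *
    have key := Finset.sum_le_sum fun j (_ : j ∈ Finset.range (k + 1)) =>
      mul_le_mul_of_nonneg_left (aux_pt _ (q * k) s j (b k) rfl hm0 hs (Nat.cast_nonneg j)) (hw k j)
    refine le_trans (le_of_eq ?_) key
    generalize min (q * k) (b k : ℝ) = m
    have e : ∀ j ∈ Finset.range (k + 1), (Nat.choose k j : ℝ) * q ^ j * (1 - q) ^ (k - j) *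
        (m * (1 - (1 / s + s * (((j : ℝ) - q * k) ^ 2 / (q * k) ^ 2)) / 2)) =
        (m * (1 - 1 / s / 2)) * ((Nat.choose k j : ℝ) * q ^ j * (1 - q) ^ (k - j)) -
        (m * s / (q * k) ^ 2 / 2) * ((Nat.choose k j : ℝ) * q ^ j * (1 - q) ^ (k - j) *
          ((j : ℝ) - q * k) ^ 2) := fun j _ => by ring
    rw [Finset.sum_congr rfl e, Finset.sum_sub_distrib, ← Finset.mul_sum, ← Finset.mul_sum,
      aux_sum, aux_var, ← hss]
    field_simp
    ring
  · filter_upwards [Filter.eventually_gt_atTop 0] with k hk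
    have hk' : (0 : ℝ) < k := by exact_mod_cast hk
    have hb' : (0 : ℝ) < b k := by exact_mod_cast hb k
    have hm0 : 0 < min (q * k) (b k : ℝ) := lt_min (by positivity) hb'
    rw [div_le_one hm0]
    refine le_min ?_ ?_
    · rw [← aux_mean q k]
      exact Finset.sum_le_sum fun j _ => mul_le_mul_of_nonneg_left (min_le_left _ _) (hw k j)
    · refine (Finset.sum_le_sum fun j _ =>
        mul_le_mul_of_nonneg_left (min_le_right _ _) (hw k j)).trans ?_
      rw [← Finset.sum_mul, aux_sum, one_mul]
end

section
/- For every integer r ≥ 2 and every real ε > 0 there exists b₀ such that the following holds for every real b ≥ b₀ and every linear, triangle-free (r+1)-graph H on a vertex set V of size m ≥ 1: averaging over all independent sets Z of H (chosen uniformly at random), E[h(Z,b)] + e^b·E[|Z|] ≥ (1−ε)·b·m/(2^r·(−log(1−2^{−r}))). -/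
open Finset
open scoped Classical

/-- `H` is linear: no two distinct edges share two or more vertices. -/
def Linear {V : Type*} [DecidableEq V] (H : Finset (Finset V)) : Prop :=
  ∀ e ∈ H, ∀ f ∈ H, e ≠ f → (e ∩ f).card ≤ 1

/-- `H` is triangle-free: there are no three distinct edges `e, f, g` with
`|e∩f| = |f∩g| = |g∩e| = 1` and `e∩f∩g = ∅`. -/
def TriangleFree {V : Type*} [DecidableEq V] (H : Finset (Finset V)) : Prop :=
  ¬ ∃ e ∈ H, ∃ f ∈ H, ∃ g ∈ H, e ≠ f ∧ f ≠ g ∧ e ≠ g ∧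
      (e ∩ f).card = 1 ∧ (f ∩ g).card = 1 ∧ (g ∩ e).card = 1 ∧ e ∩ f ∩ g = ∅

/-- `ω_Z(v,b)`: the minimum of `b` and the number of `r`-element subsets `e ⊆ Z` with
`e ∪ {v} ∈ H`. -/
noncomputable def omegaZ {V : Type*} [DecidableEq V] (r : ℕ) (H : Finset (Finset V))
    (Z : Finset V) (b : ℝ) (v : V) : ℝ :=
  min b (((Z.powersetCard r).filter (fun e => insert v e ∈ H)).card : ℝ)

/-- `h(Z,b) = Σ_{v ∈ V∖Z} ω_Z(v,b)`. -/
noncomputable def hZb {V : Type*} [Fintype V] [DecidableEq V] (r : ℕ)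
    (H : Finset (Finset V)) (Z : Finset V) (b : ℝ) : ℝ :=
  ∑ v ∈ (Finset.univ : Finset V) \ Z, omegaZ r H Z b v

/-- Number of subsets of `F` containing `P`. -/
lemma card_supersets {V : Type} [DecidableEq V] (F P : Finset V) (hP : P ⊆ F) :
    ((F.powerset.filter (fun S => P ⊆ S)).card : ℝ) = 2 ^ F.card * (1 / 2 ^ P.card) := by
  have h : F.powerset.filter (fun S => P ⊆ S) = Finset.Icc P F := by
    ext S
    simp [Finset.mem_Icc, and_comm]
  rw [h, Finset.card_Icc_finset hP]
  have hle := Finset.card_le_card hP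
  push_cast
  rw [mul_one_div, eq_div_iff (by positivity), ← pow_add]
  congr 1
  omega

/-- First moment. -/
lemma moment_one {V : Type} [DecidableEq V] (r : ℕ) (F : Finset V) (I : Finset (Finset V))
    (hI : ∀ P ∈ I, P ⊆ F ∧ P.card = r) :
    ∑ S ∈ F.powerset, ((I.filter (fun P => P ⊆ S)).card : ℝ)
      = 2 ^ F.card * (I.card * (1 / 2 ^ r)) := by
  have h1 : ∀ S ∈ F.powerset, ((I.filter (fun P => P ⊆ S)).card : ℝ)
      = ∑ P ∈ I, if P ⊆ S then (1 : ℝ) else 0 := by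
    intro S _
    simp
  rw [Finset.sum_congr rfl h1, Finset.sum_comm]
  have h2 : ∀ P ∈ I, (∑ S ∈ F.powerset, if P ⊆ S then (1 : ℝ) else 0)
      = 2 ^ F.card * (1 / 2 ^ r) := by
    intro P hP
    rw [← (hI P hP).2, ← card_supersets F P (hI P hP).1]
    simp
  rw [Finset.sum_congr rfl h2, Finset.sum_const, nsmul_eq_mul]
  ring

/-- Second moment. -/
lemma moment_two {V : Type} [DecidableEq V] (r : ℕ) (F : Finset V) (I : Finset (Finset V))
    (hI : ∀ P ∈ I, P ⊆ F ∧ P.card = r)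
    (hd : ∀ P ∈ I, ∀ Q ∈ I, P ≠ Q → Disjoint P Q) :
    ∑ S ∈ F.powerset, ((I.filter (fun P => P ⊆ S)).card : ℝ) ^ 2
      ≤ 2 ^ F.card * (I.card * (1 / 2 ^ r) + (I.card * (1 / 2 ^ r)) ^ 2) := by
  have h1 : ∀ S ∈ F.powerset, ((I.filter (fun P => P ⊆ S)).card : ℝ) ^ 2
      = ∑ P ∈ I, ∑ Q ∈ I, if P ∪ Q ⊆ S then (1 : ℝ) else 0 := by
    intro S _
    have : ((I.filter (fun P => P ⊆ S)).card : ℝ) = ∑ P ∈ I, if P ⊆ S then (1 : ℝ) else 0 := by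
      simp
    rw [this, sq, Finset.sum_mul_sum]
    refine Finset.sum_congr rfl fun P _ => Finset.sum_congr rfl fun Q _ => ?_
    simp only [Finset.union_subset_iff]
    by_cases h : P ⊆ S <;> by_cases h' : Q ⊆ S <;> simp [h, h']
  rw [Finset.sum_congr rfl h1, Finset.sum_comm]
  have h2 : ∀ P ∈ I, (∑ S ∈ F.powerset, ∑ Q ∈ I, if P ∪ Q ⊆ S then (1 : ℝ) else 0)
      ≤ 2 ^ F.card * (1 / 2 ^ r) + I.card * (2 ^ F.card * (1 / 2 ^ r) ^ 2) := by
    intro P hP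
    rw [Finset.sum_comm]
    have h3 : ∀ Q ∈ I, (∑ S ∈ F.powerset, if P ∪ Q ⊆ S then (1 : ℝ) else 0)
        ≤ (if P = Q then 2 ^ F.card * (1 / 2 ^ r) else 0) + 2 ^ F.card * (1 / 2 ^ r) ^ 2 := by
      intro Q hQ
      have e : (∑ S ∈ F.powerset, if P ∪ Q ⊆ S then (1 : ℝ) else 0)
          = 2 ^ F.card * (1 / 2 ^ (P ∪ Q).card) := by
        rw [← card_supersets F (P ∪ Q) (Finset.union_subset (hI P hP).1 (hI Q hQ).1)]
        simp
      rw [e]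
      by_cases hPQ : P = Q
      · subst hPQ
        rw [Finset.union_self, (hI P hP).2, if_pos rfl]
        have : (0 : ℝ) ≤ 2 ^ F.card * (1 / 2 ^ r) ^ 2 := by positivity
        linarith
      · rw [Finset.card_union_of_disjoint (hd P hP Q hQ hPQ), (hI P hP).2, (hI Q hQ).2,
          if_neg hPQ, pow_add]
        apply le_of_eq
        field_simp
        ring
    refine (Finset.sum_le_sum h3).trans ?_
    rw [Finset.sum_add_distrib, Finset.sum_ite_eq, if_pos hP, Finset.sum_const, nsmul_eq_mul]
  refine (Finset.sum_le_sum h2).trans ?_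
  rw [Finset.sum_const, nsmul_eq_mul]
  apply le_of_eq
  ring

/-- Truncated first moment via a quadratic minorant. -/
lemma trunc_moment {V : Type} [DecidableEq V] (r : ℕ) (F : Finset V) (I : Finset (Finset V))
    (hI : ∀ P ∈ I, P ⊆ F ∧ P.card = r)
    (hd : ∀ P ∈ I, ∀ Q ∈ I, P ≠ Q → Disjoint P Q) (b μ : ℝ) (hμ : μ = I.card * (1 / 2 ^ r))
    (hb : μ < b) :
    2 ^ F.card * (μ - μ / (4 * (b - μ)))
      ≤ ∑ S ∈ F.powerset, min b ((I.filter (fun P => P ⊆ S)).card : ℝ) := by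
  have hc : 0 < 4 * (b - μ) := by linarith
  have h1 := moment_one r F I hI
  have h2 := moment_two r F I hI hd
  rw [← hμ] at h1 h2
  have key : ∀ x : ℝ, x - (x - μ) ^ 2 / (4 * (b - μ)) ≤ min b x := by
    intro x
    apply le_min
    · have : x - b ≤ (x - μ) ^ 2 / (4 * (b - μ)) := by
        rw [le_div_iff₀ hc]
        nlinarith [sq_nonneg (x - μ - 2 * (b - μ))]
      linarith
    · have : 0 ≤ (x - μ) ^ 2 / (4 * (b - μ)) := by positivity
      linarith
  refine le_trans ?_ (Finset.sum_le_sum fun S _ => key _)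
  rw [Finset.sum_sub_distrib, h1, ← Finset.sum_div]
  have h3 : ∑ S ∈ F.powerset, (((I.filter (fun P => P ⊆ S)).card : ℝ) - μ) ^ 2
      ≤ 2 ^ F.card * μ := by
    have e : ∀ S ∈ F.powerset, (((I.filter (fun P => P ⊆ S)).card : ℝ) - μ) ^ 2
        = ((I.filter (fun P => P ⊆ S)).card : ℝ) ^ 2
          - 2 * μ * ((I.filter (fun P => P ⊆ S)).card : ℝ) + μ ^ 2 := by
      intro S _
      ring
    rw [Finset.sum_congr rfl e, Finset.sum_add_distrib, Finset.sum_sub_distrib,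
      ← Finset.mul_sum, h1, Finset.sum_const, Finset.card_powerset, nsmul_eq_mul]
    push_cast
    linarith
  have h4 := div_le_div_of_nonneg_right h3 hc.le
  have e2 : (2 : ℝ) ^ F.card * (μ - μ / (4 * (b - μ)))
      = 2 ^ F.card * μ - 2 ^ F.card * μ / (4 * (b - μ)) := by ring
  rw [e2]
  linarith

/-- Correlation (Kleitman) lower bound for the number of subsets avoiding a family. -/
lemma avoid_count {V : Type} [Fintype V] [DecidableEq V] (r : ℕ) (F : Finset V)
    (I : Finset (Finset V)) (hI : ∀ P ∈ I, P.card = r) :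
    2 ^ F.card * (1 - 1 / 2 ^ r : ℝ) ^ I.card
      ≤ ((F.powerset.filter (fun S => ∀ P ∈ I, ¬ P ⊆ S)).card : ℝ) := by
  induction I using Finset.induction_on with
  | empty => simp
  | insert P I hP ih =>
    have ih' := ih fun Q hQ => hI Q (Finset.mem_insert_of_mem hQ)
    have hPr := hI P (Finset.mem_insert_self _ _)
    have hA : IsLowerSet ((F.powerset.filter (fun S => ∀ P ∈ I, ¬ P ⊆ S) : Finset (Finset V)) :
        Set (Finset V)) := by
      intro S T hTS hS
      simp only [Finset.coe_filter, Finset.mem_powerset, Set.mem_ofPred_eq] at hS ⊢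
      exact ⟨hTS.trans hS.1, fun Q hQ h => hS.2 Q hQ (h.trans hTS)⟩
    have hB : IsLowerSet (((Finset.univ : Finset (Finset V)).filter (fun S => ¬ P ⊆ S) :
        Finset (Finset V)) : Set (Finset V)) := by
      intro S T hTS hS
      simp only [Finset.coe_filter, Finset.mem_univ, true_and, Set.mem_ofPred_eq] at hS ⊢
      exact fun h => hS (h.trans hTS)
    have hk := hA.le_card_inter_finset hB
    have hBc : (((Finset.univ : Finset (Finset V)).filter (fun S => ¬ P ⊆ S)).card : ℝ)
        = 2 ^ Fintype.card V * (1 - 1 / 2 ^ r) := by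
      have h1 := Finset.card_filter_add_card_filter_not (s := (Finset.univ : Finset (Finset V)))
        (fun S => P ⊆ S)
      have h2 := card_supersets (Finset.univ : Finset V) P (Finset.subset_univ _)
      rw [Finset.powerset_univ, hPr, Finset.card_univ] at h2
      rw [Finset.card_univ, Fintype.card_finset] at h1
      have h3 := congrArg (Nat.cast : ℕ → ℝ) h1
      push_cast at h3
      rw [h2] at h3
      linarith
    have hi : (F.powerset.filter (fun S => ∀ P ∈ I, ¬ P ⊆ S)) ∩
        ((Finset.univ : Finset (Finset V)).filter (fun S => ¬ P ⊆ S))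
        = F.powerset.filter (fun S => ∀ Q ∈ insert P I, ¬ Q ⊆ S) := by
      ext S
      simp only [Finset.mem_inter, Finset.mem_filter, Finset.mem_powerset, Finset.mem_univ,
        true_and, Finset.forall_mem_insert]
      tauto
    rw [hi] at hk
    have hk' := (Nat.cast_le (α := ℝ)).2 hk
    push_cast at hk'
    rw [hBc] at hk'
    have hpos : (0 : ℝ) < 2 ^ Fintype.card V := by positivity
    have hq : (0 : ℝ) ≤ 1 - 1 / 2 ^ r := by
      have : (1 : ℝ) / 2 ^ r ≤ 1 := by
        rw [div_le_one (by positivity)]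
        exact one_le_pow₀ (by norm_num)
      linarith
    rw [Finset.card_insert_of_notMem hP, pow_succ]
    have h5 := mul_le_mul_of_nonneg_right ih' hq
    refine le_trans (le_of_eq (by ring)) (h5.trans ?_)
    refine le_of_mul_le_mul_left ?_ hpos
    refine le_trans (le_of_eq (by ring)) hk'

set_option maxHeartbeats 1000000 in
/-- The core numeric estimate. -/
lemma core_bound (r : ℕ) (hr : 1 ≤ r) (ε : ℝ) (hε : 0 < ε) (hε1 : ε ≤ 1) :
    ∃ b₀ : ℝ, 0 ≤ b₀ ∧ ∀ b : ℝ, b₀ ≤ b → ∀ (V : Type) [Fintype V] [DecidableEq V]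
      (F : Finset V) (I : Finset (Finset V)),
      (∀ P ∈ I, P ⊆ F ∧ P.card = r) →
      (∀ P ∈ I, ∀ Q ∈ I, P ≠ Q → Disjoint P Q) →
      (1 - ε) * b / (2 ^ r * (-Real.log (1 - 1 / 2 ^ r))) *
        (2 ^ F.card + ((F.powerset.filter (fun S => ∀ P ∈ I, ¬ P ⊆ S)).card : ℝ))
      ≤ ∑ S ∈ F.powerset, min b ((I.filter (fun P => P ⊆ S)).card : ℝ)
        + Real.exp b * ((F.powerset.filter (fun S => ∀ P ∈ I, ¬ P ⊆ S)).card : ℝ) := by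
  set p : ℝ := 1 / 2 ^ r with hp
  set L : ℝ := -Real.log (1 - p) with hL
  have hp0 : 0 < p := by positivity
  have hp1 : p < 1 := by
    rw [hp, div_lt_one (by positivity)]
    exact one_lt_pow₀ (by norm_num) (by omega)
  have hpL : p ≤ L := by
    have := Real.log_le_sub_one_of_pos (x := 1 - p) (by linarith)
    rw [hL]
    linarith
  have hL0 : 0 < L := lt_of_lt_of_le hp0 hpL
  have hLexp : Real.exp (-L) = 1 - p := by
    rw [hL, neg_neg, Real.exp_log (by linarith)]
  refine ⟨max (max (4 / ε) (2 * L / (ε ^ 2 * p))) (max 1 (16 / ε ^ 2)), by positivity, ?_⟩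
  intro b hb V _ _ F I hI hd
  have hb1 : 4 / ε ≤ b := ((le_max_left _ _).trans (le_max_left _ _)).trans hb
  have hb2 : 2 * L / (ε ^ 2 * p) ≤ b := ((le_max_right _ _).trans (le_max_left _ _)).trans hb
  have hb3 : 1 ≤ b := ((le_max_left _ _).trans (le_max_right _ _)).trans hb
  have hb4 : 16 / ε ^ 2 ≤ b := ((le_max_right _ _).trans (le_max_right _ _)).trans hb
  rw [div_le_iff₀ (by positivity)] at hb1 hb2 hb4
  have hT : (1 - ε) * b / (2 ^ r * L) = (1 - ε) * (b * (p / L)) := by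
    rw [hp]
    field_simp
  rw [hT]
  set N1 : ℝ := ((F.powerset.filter (fun S => ∀ P ∈ I, ¬ P ⊆ S)).card : ℝ) with hN1
  set N0 : ℝ := 2 ^ F.card with hN0
  have hN0pos : 0 < N0 := by positivity
  have hN1nn : 0 ≤ N1 := by positivity
  have hN10 : N1 ≤ N0 := by
    have := Finset.card_filter_le F.powerset (fun S => ∀ P ∈ I, ¬ P ⊆ S)
    rw [Finset.card_powerset] at this
    rw [hN1, hN0]
    exact_mod_cast this
  have hpL1 : p / L ≤ 1 := by
    rw [div_le_one hL0]
    exact hpL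
  have hpL0 : 0 < p / L := by positivity
  have hTb : (1 - ε) * (b * (p / L)) ≤ b := by
    have h1 : b * (p / L) ≤ b := by nlinarith
    have h2 : 0 ≤ b * (p / L) := by positivity
    nlinarith
  have hbexp : b ≤ Real.exp b := by
    have := Real.add_one_le_exp b
    linarith
  have hsumnn : 0 ≤ ∑ S ∈ F.powerset, min b ((I.filter (fun P => P ⊆ S)).card : ℝ) :=
    Finset.sum_nonneg fun S _ => le_min (by linarith) (by positivity)
  set k₀ : ℕ := ⌈(1 - ε / 2) * b / L⌉₊ with hk₀
  have hx0 : 0 ≤ (1 - ε / 2) * b / L := by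
    have : 0 ≤ 1 - ε / 2 := by linarith
    positivity
  rcases lt_or_ge I.card k₀ with hk | hk
  · -- few complete neighbourhoods
    have hk1 : (I.card : ℝ) < (1 - ε / 2) * b / L := Nat.lt_ceil.1 hk
    rw [lt_div_iff₀ hL0] at hk1
    have hav := avoid_count r F I fun P hP => (hI P hP).2
    rw [← hp, ← hLexp, ← Real.exp_nat_mul, ← hN0, ← hN1] at hav
    have h1 : N0 * Real.exp (ε / 2 * b) ≤ Real.exp b * N1 := by
      have h2 := mul_le_mul_of_nonneg_left hav (Real.exp_pos b).le
      refine le_trans ?_ h2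
      have e : Real.exp b * (N0 * Real.exp (I.card * -L)) = N0 * Real.exp (b + I.card * -L) := by
        rw [Real.exp_add]
        ring
      rw [e]
      refine mul_le_mul_of_nonneg_left (Real.exp_le_exp.2 ?_) hN0pos.le
      linarith
    have h3 : 2 * b ≤ Real.exp (ε / 2 * b) := by
      have := Real.quadratic_le_exp_of_nonneg (x := ε / 2 * b) (by positivity)
      have h5 : 0 ≤ ε / 2 * b := by positivity
      have h4 : 2 * b ≤ (ε / 2 * b) ^ 2 / 2 := by nlinarith
      linarith
    have h6 : N0 * (2 * b) ≤ Real.exp b * N1 :=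
      (mul_le_mul_of_nonneg_left h3 hN0pos.le).trans h1
    have h7 : (1 - ε) * (b * (p / L)) * (N0 + N1) ≤ b * (N0 + N1) :=
      mul_le_mul_of_nonneg_right hTb (by linarith)
    nlinarith
  · -- many complete neighbourhoods
    obtain ⟨J, hJI, hJc⟩ := Finset.exists_subset_card_eq hk
    have hlo : (1 - ε / 2) * b / L ≤ k₀ := Nat.le_ceil _
    have hhi : (k₀ : ℝ) < (1 - ε / 2) * b / L + 1 := Nat.ceil_lt_add_one hx0
    set μ : ℝ := k₀ * p with hμ
    have hμlo : (1 - ε / 2) * (b * (p / L)) ≤ μ := by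
      have := mul_le_mul_of_nonneg_right hlo hp0.le
      refine le_trans (le_of_eq ?_) this
      ring
    have hμhi : μ ≤ (1 - ε / 2) * b + 1 := by
      have h1 := mul_le_mul_of_nonneg_right hhi.le hp0.le
      have e : ((1 - ε / 2) * b / L + 1) * p = (1 - ε / 2) * b * (p / L) + p := by ring
      rw [e] at h1
      have h2 : (1 - ε / 2) * b * (p / L) ≤ (1 - ε / 2) * b * 1 :=
        mul_le_mul_of_nonneg_left hpL1 (mul_nonneg (by linarith) (by linarith))
      linarith
    have hgap : ε * b / 4 ≤ b - μ := by nlinarith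
    have hgap0 : 0 < ε * b / 4 := by positivity
    have htr := trunc_moment r F J (fun P hP => hI P (hJI hP))
      (fun P hP Q hQ => hd P (hJI hP) Q (hJI hQ)) b μ (by rw [hJc]) (by linarith)
    have hsum : ∑ S ∈ F.powerset, min b ((J.filter (fun P => P ⊆ S)).card : ℝ)
        ≤ ∑ S ∈ F.powerset, min b ((I.filter (fun P => P ⊆ S)).card : ℝ) := by
      refine Finset.sum_le_sum fun S _ => min_le_min_left _ ?_
      exact_mod_cast Finset.card_le_card (Finset.filter_subset_filter _ hJI)
    have hμ0 : 0 ≤ μ := by positivity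
    have herr : μ / (4 * (b - μ)) ≤ 1 / ε := by
      rw [div_le_div_iff₀ (by linarith) hε]
      nlinarith
    have hbig : 1 / ε ≤ ε / 2 * (b * (p / L)) := by
      rw [div_le_iff₀ hε]
      have e : ε / 2 * (b * (p / L)) * ε = b * (ε ^ 2 * p) / (2 * L) := by
        ring
      rw [e, le_div_iff₀ (by positivity)]
      linarith
    have hmain : (1 - ε) * (b * (p / L)) ≤ μ - μ / (4 * (b - μ)) := by nlinarith
    have h1 : (1 - ε) * (b * (p / L)) * N0
        ≤ ∑ S ∈ F.powerset, min b ((I.filter (fun P => P ⊆ S)).card : ℝ) := by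
      refine le_trans ?_ (htr.trans hsum)
      rw [mul_comm]
      exact mul_le_mul_of_nonneg_left hmain hN0pos.le
    have h2 : (1 - ε) * (b * (p / L)) * N1 ≤ Real.exp b * N1 :=
      mul_le_mul_of_nonneg_right (hTb.trans hbexp) hN1nn
    linarith


/-- The local estimate at a vertex `v`. -/
lemma vertex_bound {V : Type} [Fintype V] [DecidableEq V] (r : ℕ) (H : Finset (Finset V))
    (hH : ∀ e ∈ H, e.card = r + 1) (hlin : Linear H) (htri : TriangleFree H) (b T : ℝ)
    (hcore : ∀ (F : Finset V) (I : Finset (Finset V)),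
      (∀ P ∈ I, P ⊆ F ∧ P.card = r) →
      (∀ P ∈ I, ∀ Q ∈ I, P ≠ Q → Disjoint P Q) →
      T * (2 ^ F.card + ((F.powerset.filter (fun S => ∀ P ∈ I, ¬ P ⊆ S)).card : ℝ))
      ≤ ∑ S ∈ F.powerset, min b ((I.filter (fun P => P ⊆ S)).card : ℝ)
        + Real.exp b * ((F.powerset.filter (fun S => ∀ P ∈ I, ¬ P ⊆ S)).card : ℝ))
    (Zs : Finset (Finset V)) (hZs : ∀ Z, Z ∈ Zs ↔ IsIndep H Z) (v : V) :
    T * (Zs.card : ℝ) ≤ ∑ Z ∈ Zs, (if v ∈ Z then Real.exp b else omegaZ r H Z b v) := by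
  set φ : Finset V → ℝ := fun Z => if v ∈ Z then Real.exp b else omegaZ r H Z b v with hφ
  set N : Finset V := Finset.univ.filter (fun x => x ≠ v ∧ ∃ e ∈ H, v ∈ e ∧ x ∈ e) with hN
  have hmemN : ∀ x, x ∈ N ↔ x ≠ v ∧ ∃ e ∈ H, v ∈ e ∧ x ∈ e := by
    intro x
    simp [hN]
  have hvN : v ∉ N := fun h => ((hmemN v).1 h).1 rfl
  have hmono : ∀ Z Z' : Finset V, Z ⊆ Z' → IsIndep H Z' → IsIndep H Z :=
    fun Z Z' h hZ' e he hs => hZ' e he (hs.trans h)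
  -- an edge avoiding `v` meets `N` in at most one vertex
  have hone : ∀ f ∈ H, v ∉ f → ∀ x ∈ f, ∀ y ∈ f, x ∈ N → y ∈ N → x = y := by
    intro f hf hvf x hxf y hyf hx hy
    by_contra hxy
    obtain ⟨hxv, e, he, hve, hxe⟩ := (hmemN x).1 hx
    obtain ⟨hyv, g, hg, hvg, hyg⟩ := (hmemN y).1 hy
    have hef : e ≠ f := fun h => hvf (h ▸ hve)
    have hgf : g ≠ f := fun h => hvf (h ▸ hvg)
    have hle1 : (e ∩ f).card ≤ 1 := hlin e he f hf hef
    have hle2 : (g ∩ f).card ≤ 1 := hlin g hg f hf hgf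
    have hxef : x ∈ e ∩ f := Finset.mem_inter.2 ⟨hxe, hxf⟩
    have hygf : y ∈ g ∩ f := Finset.mem_inter.2 ⟨hyg, hyf⟩
    have hc1 : (e ∩ f).card = 1 := le_antisymm hle1 (Finset.card_pos.2 ⟨x, hxef⟩)
    have hc2 : (g ∩ f).card = 1 := le_antisymm hle2 (Finset.card_pos.2 ⟨y, hygf⟩)
    have heg : e ≠ g := by
      intro h
      subst h
      exact hxy (Finset.card_le_one.1 hle1 x hxef y hygf)
    have hle3 : (e ∩ g).card ≤ 1 := hlin e he g hg heg
    have hveg : v ∈ e ∩ g := Finset.mem_inter.2 ⟨hve, hvg⟩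
    have hc3 : (e ∩ g).card = 1 := le_antisymm hle3 (Finset.card_pos.2 ⟨v, hveg⟩)
    refine htri ⟨e, he, f, hf, g, hg, hef, hgf.symm, heg, hc1, ?_, ?_, ?_⟩
    · rw [Finset.inter_comm]; exact hc2
    · rw [Finset.inter_comm]; exact hc3
    · rw [Finset.eq_empty_iff_forall_notMem]
      intro z hz
      simp only [Finset.mem_inter] at hz
      have : z = v := Finset.card_le_one.1 hle3 z (Finset.mem_inter.2 ⟨hz.1.1, hz.2⟩) v hveg
      exact hvf (this ▸ hz.1.2)
  suffices h : 0 ≤ ∑ Z ∈ Zs, (φ Z - T) by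
    rw [Finset.sum_sub_distrib, Finset.sum_const, nsmul_eq_mul] at h
    linarith
  rw [← Finset.sum_fiberwise_of_maps_to (t := Zs.image (fun Z => Z \ insert v N))
    (g := fun Z => Z \ insert v N) (fun Z hZ => Finset.mem_image_of_mem _ hZ)]
  refine Finset.sum_nonneg fun W hW => ?_
  obtain ⟨Z₀, hZ₀, hWZ⟩ := Finset.mem_image.1 hW
  have hWind : IsIndep H W := by
    refine hmono W Z₀ ?_ ((hZs _).1 hZ₀)
    rw [← hWZ]
    exact Finset.sdiff_subset
  have hvW : v ∉ W := by
    rw [← hWZ]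
    simp
  have hWN : ∀ x ∈ W, x ∉ N := by
    intro x hx
    rw [← hWZ] at hx
    simp only [Finset.mem_sdiff, Finset.mem_insert, not_or] at hx
    exact hx.2.2
  set F : Finset V := N.filter (fun x => IsIndep H (insert x W)) with hF
  have hFN : F ⊆ N := Finset.filter_subset _ _
  set I : Finset (Finset V) :=
    (F.powersetCard r).filter (fun P => insert v P ∈ H) with hI
  have hIm : ∀ P, P ∈ I ↔ (P ⊆ F ∧ P.card = r) ∧ insert v P ∈ H := by
    intro P
    simp [hI, Finset.mem_powersetCard]
  -- independence criteria
  have hind0 : ∀ S ⊆ F, ∀ f ∈ H, v ∉ f → ¬ f ⊆ W ∪ S := by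
    intro S hS f hf hvf hsub
    by_cases hx : ∃ x ∈ f, x ∈ N
    · obtain ⟨x, hxf, hxN⟩ := hx
      have hxS : x ∈ S := by
        rcases Finset.mem_union.1 (hsub hxf) with h | h
        · exact absurd hxN (hWN x h)
        · exact h
      refine (Finset.mem_filter.1 (hS hxS)).2 f hf ?_
      intro y hy
      rcases Finset.mem_union.1 (hsub hy) with h | h
      · exact Finset.mem_insert_of_mem h
      · rw [hone f hf hvf y hy x hxf (hFN (hS h)) hxN]
        exact Finset.mem_insert_self _ _
    · refine hWind f hf ?_
      intro y hy
      rcases Finset.mem_union.1 (hsub hy) with h | h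
      · exact h
      · exact absurd ⟨y, hy, hFN (hS h)⟩ hx
  set A1 : Finset (Finset V) := F.powerset.filter (fun S => ∀ P ∈ I, ¬ P ⊆ S) with hA1
  have hfib : Zs.filter (fun Z => Z \ insert v N = W)
      = F.powerset.image (fun S => W ∪ S) ∪ A1.image (fun S => insert v (W ∪ S)) := by
    ext Z
    simp only [Finset.mem_filter, Finset.mem_union, Finset.mem_image, Finset.mem_powerset, hZs]
    constructor
    · rintro ⟨hZi, hZW⟩
      have hZmem : ∀ x, x ∈ Z → x ≠ v → x ∈ W ∪ (Z ∩ N) := by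
        intro x hx hxv
        by_cases hxN : x ∈ N
        · exact Finset.mem_union_right _ (Finset.mem_inter.2 ⟨hx, hxN⟩)
        · refine Finset.mem_union_left _ ?_
          rw [← hZW]
          simp [hx, hxv, hxN]
      have hWsub : W ⊆ Z := by
        rw [← hZW]
        exact Finset.sdiff_subset
      have hSF : Z ∩ N ⊆ F := by
        intro x hx
        rw [Finset.mem_inter] at hx
        refine Finset.mem_filter.2 ⟨hx.2, hmono _ Z ?_ hZi⟩
        exact Finset.insert_subset hx.1 hWsub
      by_cases hvZ : v ∈ Z
      · right
        refine ⟨Z ∩ N, ?_, ?_⟩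
        · refine Finset.mem_filter.2 ⟨Finset.mem_powerset.2 hSF, fun P hP hPs => ?_⟩
          refine hZi _ ((hIm P).1 hP).2 ?_
          exact Finset.insert_subset hvZ (hPs.trans Finset.inter_subset_left)
        · apply Finset.Subset.antisymm
          · exact Finset.insert_subset hvZ (Finset.union_subset hWsub Finset.inter_subset_left)
          · intro x hx
            by_cases hxv : x = v
            · rw [hxv]; exact Finset.mem_insert_self _ _
            · exact Finset.mem_insert_of_mem (hZmem x hx hxv)
      · left
        refine ⟨Z ∩ N, hSF, ?_⟩
        apply Finset.Subset.antisymm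
        · exact Finset.union_subset hWsub Finset.inter_subset_left
        · intro x hx
          exact hZmem x hx fun h => hvZ (h ▸ hx)
    · have hproj : ∀ S ⊆ F, ∀ x, (x ∈ W ∪ S ∧ ¬ (x = v ∨ x ∈ N)) ↔ x ∈ W := by
        intro S hS x
        constructor
        · rintro ⟨h1, h2⟩
          rcases Finset.mem_union.1 h1 with h | h
          · exact h
          · exact absurd (Or.inr (hFN (hS h))) h2
        · intro hx
          refine ⟨Finset.mem_union_left _ hx, ?_⟩
          rintro (h | h)
          · exact hvW (h ▸ hx)
          · exact hWN x hx h
      rintro (⟨S, hS, rfl⟩ | ⟨S, hS, rfl⟩)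
      · refine ⟨fun f hf hfs => ?_, ?_⟩
        · refine hind0 S hS f hf (fun hvf => ?_) hfs
          rcases Finset.mem_union.1 (hfs hvf) with h | h
          · exact hvW h
          · exact hvN (hFN (hS h))
        · ext x
          rw [← hproj S hS x, Finset.mem_sdiff, Finset.mem_insert]
      · obtain ⟨hS, hSI⟩ := Finset.mem_filter.1 hS
        rw [Finset.mem_powerset] at hS
        refine ⟨fun f hf hfs => ?_, ?_⟩
        · by_cases hvf : v ∈ f
          · have hfe : f.erase v ⊆ S := by
              intro x hx
              obtain ⟨hxv, hxf⟩ := Finset.mem_erase.1 hx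
              have hxN : x ∈ N := (hmemN x).2 ⟨hxv, f, hf, hvf, hxf⟩
              rcases Finset.mem_insert.1 (hfs hxf) with h | h
              · exact absurd h hxv
              · rcases Finset.mem_union.1 h with h | h
                · exact absurd hxN (hWN x h)
                · exact h
            refine hSI (f.erase v) ((hIm _).2 ⟨⟨hfe.trans hS, ?_⟩, ?_⟩) hfe
            · rw [Finset.card_erase_of_mem hvf, hH f hf]
              rfl
            · rw [Finset.insert_erase hvf]
              exact hf
          · refine hind0 S hS f hf hvf fun x hx => ?_
            rcases Finset.mem_insert.1 (hfs hx) with h | h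
            · exact absurd (h ▸ hx) hvf
            · exact h
        · ext x
          rw [← hproj S hS x, Finset.mem_sdiff, Finset.mem_insert, Finset.mem_insert]
          tauto
  have hvnot : ∀ S ⊆ F, v ∉ W ∪ S := by
    intro S hS h
    rcases Finset.mem_union.1 h with h | h
    · exact hvW h
    · exact hvN (hFN (hS h))
  have hdis : Disjoint (F.powerset.image (fun S => W ∪ S))
      (A1.image (fun S => insert v (W ∪ S))) := by
    rw [Finset.disjoint_left]
    intro Z h1 h2
    obtain ⟨S, hS, rfl⟩ := Finset.mem_image.1 h1
    obtain ⟨S', hS', h⟩ := Finset.mem_image.1 h2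
    refine hvnot S (Finset.mem_powerset.1 hS) ?_
    rw [← h]
    exact Finset.mem_insert_self _ _
  have hinter : ∀ S ⊆ F, (W ∪ S) ∩ N = S := by
    intro S hS
    ext x
    simp only [Finset.mem_inter, Finset.mem_union]
    constructor
    · rintro ⟨h | h, h'⟩
      · exact absurd h' (hWN x h)
      · exact h
    · exact fun h => ⟨Or.inr h, hFN (hS h)⟩
  have hinj0 : Set.InjOn (fun S => W ∪ S) (F.powerset : Set (Finset V)) := by
    intro S hS S' hS' h
    have h' : W ∪ S = W ∪ S' := h
    rw [← hinter S (Finset.mem_powerset.1 hS), ← hinter S' (Finset.mem_powerset.1 hS'), h']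
  have hA1F : ∀ S ∈ A1, S ⊆ F := fun S hS => Finset.mem_powerset.1 (Finset.mem_filter.1 hS).1
  have hinj1 : Set.InjOn (fun S => insert v (W ∪ S)) (A1 : Set (Finset V)) := by
    intro S hS S' hS' h
    have h' : insert v (W ∪ S) = insert v (W ∪ S') := h
    have h'' : W ∪ S = W ∪ S' := by
      rw [← Finset.erase_insert (hvnot S (hA1F S hS)), h',
        Finset.erase_insert (hvnot S' (hA1F S' hS'))]
    rw [← hinter S (hA1F S hS), ← hinter S' (hA1F S' hS'), h'']
  rw [hfib, Finset.sum_union hdis, Finset.sum_image hinj0, Finset.sum_image hinj1]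
  have hc := hcore F I (fun P hP => ((hIm P).1 hP).1) (by
    intro P hP Q hQ hPQ
    have hP' := (hIm P).1 hP
    have hQ' := (hIm Q).1 hQ
    have hvP : v ∉ P := fun h => hvN (hFN (hP'.1.1 h))
    have hvQ : v ∉ Q := fun h => hvN (hFN (hQ'.1.1 h))
    rw [Finset.disjoint_left]
    intro x hxP hxQ
    have hne : insert v P ≠ insert v Q := by
      intro h
      apply hPQ
      rw [← Finset.erase_insert hvP, h, Finset.erase_insert hvQ]
    have hle := hlin _ hP'.2 _ hQ'.2 hne
    have hxv : x = v := Finset.card_le_one.1 hle x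
      (Finset.mem_inter.2 ⟨Finset.mem_insert_of_mem hxP, Finset.mem_insert_of_mem hxQ⟩) v
      (Finset.mem_inter.2 ⟨Finset.mem_insert_self _ _, Finset.mem_insert_self _ _⟩)
    exact hvP (hxv ▸ hxP))
  have hs1 : ∑ S ∈ A1, (φ (insert v (W ∪ S)) - T) = A1.card * (Real.exp b - T) := by
    have : ∀ S ∈ A1, (φ (insert v (W ∪ S)) - T) = Real.exp b - T := by
      intro S _
      simp [hφ]
    rw [Finset.sum_congr rfl this, Finset.sum_const, nsmul_eq_mul]
  have hs0 : ∑ S ∈ F.powerset, (min b ((I.filter (fun P => P ⊆ S)).card : ℝ) - T)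
      ≤ ∑ S ∈ F.powerset, (φ (W ∪ S) - T) := by
    refine Finset.sum_le_sum fun S hS => sub_le_sub_right ?_ _
    have hvS := hvnot S (Finset.mem_powerset.1 hS)
    simp only [hφ, if_neg hvS, omegaZ]
    refine min_le_min_left _ ?_
    norm_cast
    refine Finset.card_le_card ?_
    intro P hP
    obtain ⟨hPI, hPS⟩ := Finset.mem_filter.1 hP
    have hP' := (hIm P).1 hPI
    refine Finset.mem_filter.2 ⟨Finset.mem_powersetCard.2 ⟨?_, hP'.1.2⟩, hP'.2⟩
    exact hPS.trans Finset.subset_union_right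
  rw [Finset.sum_sub_distrib, Finset.sum_const, Finset.card_powerset, nsmul_eq_mul] at hs0
  push_cast at hs0
  rw [hs1]
  rw [← hA1] at hc
  linarith


/-- For every `r ≥ 2` and `ε > 0` there is `b₀` such that for all `b ≥ b₀`
and every linear triangle-free `(r+1)`-graph `H` on a vertex set of size `m ≥ 1`,
averaging over all independent sets `Z` of `H` chosen uniformly at random,
`E[h(Z,b)] + e^b·E[|Z|] ≥ (1−ε)·b·m/(2^r·(−log(1−2^{−r})))`. -/
theorem stmt12 (r : ℕ) (hr : 2 ≤ r) (ε : ℝ) (hε : 0 < ε) :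
    ∃ b₀ : ℝ, ∀ b : ℝ, b₀ ≤ b →
      ∀ (V : Type) [Fintype V] [DecidableEq V], ∀ (H : Finset (Finset V)),
        1 ≤ Fintype.card V →
        (∀ e ∈ H, e.card = r + 1) →
        Linear H → TriangleFree H →
        ∀ Zs : Finset (Finset V),
          Zs = (Finset.univ : Finset V).powerset.filter (fun Z => IsIndep H Z) →
          (1 - ε) * b * (Fintype.card V : ℝ) / (2 ^ r * (-Real.log (1 - 1 / 2 ^ r))) ≤
            (∑ Z ∈ Zs, hZb r H Z b) / (Zs.card : ℝ) +
              Real.exp b * ((∑ Z ∈ Zs, (Z.card : ℝ)) / (Zs.card : ℝ)) := by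
  obtain ⟨b₀, hb₀, hcore⟩ := core_bound r (by omega) (min ε 1) (lt_min hε one_pos) (min_le_right _ _)
  refine ⟨b₀, fun b hb V _ _ H hV hH hlin htri Zs hZs => ?_⟩
  set D : ℝ := 2 ^ r * (-Real.log (1 - 1 / 2 ^ r)) with hD
  have hD0 : 0 ≤ D := by
    have h1 : (1 : ℝ) / 2 ^ r ≤ 1 := by
      rw [div_le_one (by positivity)]
      exact one_le_pow₀ (by norm_num)
    have h2 : (0 : ℝ) ≤ 1 / 2 ^ r := by positivity
    have := Real.log_nonpos (x := 1 - 1 / 2 ^ r) (by linarith) (by linarith)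
    have h3 : (0 : ℝ) ≤ 2 ^ r := by positivity
    exact mul_nonneg h3 (by linarith)
  have hmem : ∀ Z, Z ∈ Zs ↔ IsIndep H Z := by
    intro Z
    rw [hZs]
    simp
  by_cases hZ0 : Zs.card = 0
  · -- only possible when some edge is empty, which is excluded
    exfalso
    have : (∅ : Finset V) ∈ Zs := by
      rw [hmem]
      intro e he hs
      have h1 := hH e he
      rw [Finset.subset_empty.1 hs] at h1
      simp at h1
    rw [Finset.card_eq_zero.1 hZ0] at this
    simp at this
  have hpos : (0 : ℝ) < Zs.card := by
    exact_mod_cast Nat.pos_of_ne_zero hZ0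
  set T : ℝ := (1 - min ε 1) * b / D with hT
  have hv : ∀ v : V, T * (Zs.card : ℝ)
      ≤ ∑ Z ∈ Zs, (if v ∈ Z then Real.exp b else omegaZ r H Z b v) := fun v =>
    vertex_bound r H hH hlin htri b T (fun F I h1 h2 => hcore b hb V F I h1 h2) Zs hmem v
  have hsum : (Fintype.card V : ℝ) * (T * (Zs.card : ℝ))
      ≤ ∑ Z ∈ Zs, (hZb r H Z b + Real.exp b * (Z.card : ℝ)) := by
    have h1 := Finset.sum_le_sum (s := (Finset.univ : Finset V)) fun v _ => hv v
    rw [Finset.sum_const, nsmul_eq_mul, Finset.card_univ, Finset.sum_comm] at h1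
    refine h1.trans (le_of_eq (Finset.sum_congr rfl fun Z _ => ?_))
    rw [← Finset.sum_sdiff (Finset.subset_univ Z), hZb]
    congr 1
    · refine Finset.sum_congr rfl fun v hv => if_neg ?_
      exact (Finset.mem_sdiff.1 hv).2
    · rw [Finset.sum_congr rfl fun v hv => if_pos hv, Finset.sum_const, nsmul_eq_mul]
      ring
  rw [Finset.sum_add_distrib, ← Finset.mul_sum] at hsum
  have hle : (1 - ε) * b * (Fintype.card V : ℝ) / D ≤ (Fintype.card V : ℝ) * T := by
    have e : (Fintype.card V : ℝ) * T = (1 - min ε 1) * b * (Fintype.card V : ℝ) / D := by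
      rw [hT]
      ring
    rw [e]
    have hb0 : 0 ≤ b := hb₀.trans hb
    have hm : min ε 1 ≤ ε := min_le_left _ _
    gcongr
  refine hle.trans ?_
  rw [← mul_div_assoc (Real.exp b), ← add_div, le_div_iff₀ hpos]
  linarith
end

section
/- Let r ≥ 2 and let H be an (r+1)-graph on n vertices with maximum r-degree at most d. Then the number of triangles in H, that is, sets {e,f,g} of three distinct edges with |e∩f| = |f∩g| = |g∩e| = 1 and e∩f∩g = ∅, is at most d³·n^{3r−3}. -/
open Finset
open scoped Classical

def triS {V : Type} [DecidableEq V] {k : ℕ} (a c : V) (p : Fin k → V) : Finset V :=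
  insert a (insert c (Finset.univ.image p))

noncomputable def triN {V : Type} [DecidableEq V] (r : ℕ) (H : Finset (Finset V))
    (S : Finset V) : Finset (Finset V) :=
  if S.card = r then H.filter (fun e => S ⊆ e) else ∅

theorem triN_card {V : Type} [DecidableEq V] (r d : ℕ) (H : Finset (Finset V))
    (hdeg : maxDegLe r H d) (S : Finset V) : (triN r H S).card ≤ d := by
  unfold triN
  split_ifs with h
  · exact hdeg S h
  · simp

theorem tri_exists {V : Type} [DecidableEq V] (k : ℕ) (H : Finset (Finset V)) (e : Finset V)
    (he : e ∈ H) (hc : e.card = k + 2 + 1) (a c : V) (ha : a ∈ e) (hc' : c ∈ e) (hac : a ≠ c) :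
    ∃ p : Fin k → V, e ∈ triN (k + 2) H (triS a c p) := by
  have h1 : ((e.erase a).erase c).card = k + 1 := by
    rw [Finset.card_erase_of_mem (by simp [hc', hac.symm]), Finset.card_erase_of_mem ha, hc]
    rfl
  obtain ⟨t, ht, htc⟩ := Finset.exists_subset_card_eq (show k ≤ ((e.erase a).erase c).card by omega)
  let q := t.equivFinOfCardEq htc
  have himg : Finset.univ.image (fun i => (q.symm i : V)) = t := by
    ext x
    simp only [Finset.mem_image, Finset.mem_univ, true_and]
    constructor
    · rintro ⟨i, rfl⟩
      exact (q.symm i).2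
    · intro hx
      exact ⟨q ⟨x, hx⟩, by simp⟩
  refine ⟨fun i => (q.symm i : V), ?_⟩
  have hat : a ∉ t := fun h => by simpa using ht h
  have hct : c ∉ t := fun h => by simpa using ht h
  unfold triN triS
  rw [himg, if_pos]
  · rw [Finset.mem_filter]
    refine ⟨he, ?_⟩
    intro x hx
    simp only [Finset.mem_insert] at hx
    rcases hx with rfl | rfl | hx
    · exact ha
    · exact hc'
    · exact Finset.mem_of_mem_erase (Finset.mem_of_mem_erase (ht hx))
  · rw [Finset.card_insert_of_notMem (by simp [hac, hat]), Finset.card_insert_of_notMem hct, htc]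

/-- In an `(r+1)`-graph on `n` vertices with maximum `r`-degree at most `d`,
the number of triangles — sets `{e,f,g}` of three distinct edges with pairwise
intersections of size 1 and empty triple intersection — is at most `d³·n^{3r−3}`. -/
theorem stmt15 (r n d : ℕ) (hr : 2 ≤ r)
    (V : Type) [Fintype V] [DecidableEq V] (hV : Fintype.card V = n)
    (H : Finset (Finset V)) (hH : ∀ e ∈ H, e.card = r + 1)
    (hdeg : maxDegLe r H d) :
    ((H.powersetCard 3).filter
        (fun T => (∀ e ∈ T, ∀ f ∈ T, e ≠ f → (e ∩ f).card = 1) ∧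
          (∀ e ∈ T, ∀ f ∈ T, ∀ g ∈ T, e ≠ f → f ≠ g → e ≠ g → e ∩ f ∩ g = ∅))).card
      ≤ d ^ 3 * n ^ (3 * r - 3) := by
  obtain ⟨k, rfl⟩ : ∃ k, r = k + 2 := ⟨r - 2, by omega⟩
  let W := (V × V × V) × (Fin k → V) × (Fin k → V) × (Fin k → V)
  let P : W → Finset (Finset V × Finset V × Finset V) := fun w =>
    triN (k + 2) H (triS w.1.1 w.1.2.2 w.2.1) ×ˢ
      (triN (k + 2) H (triS w.1.1 w.1.2.1 w.2.2.1) ×ˢ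
        triN (k + 2) H (triS w.1.2.1 w.1.2.2 w.2.2.2))
  let F : W → Finset (Finset (Finset V)) := fun w =>
    (P w).image (fun x => {x.1, x.2.1, x.2.2})
  have hF : ∀ w ∈ (Finset.univ : Finset W), (F w).card ≤ d ^ 3 := by
    intro w _
    refine Finset.card_image_le.trans ?_
    simp only [P, Finset.card_product]
    calc _ ≤ d * (d * d) := by
          gcongr <;> exact triN_card _ _ _ hdeg _
      _ = d ^ 3 := by ring
  have hcard : (Finset.univ : Finset W).card = n ^ (3 * (k + 2) - 3) := by
    rw [show 3 * (k + 2) - 3 = 3 + 3 * k by omega]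
    simp only [W, Finset.card_univ, Fintype.card_prod, Fintype.card_fun, Fintype.card_fin, hV]
    ring
  rw [mul_comm, ← hcard]
  refine le_trans (Finset.card_le_card ?_) (Finset.card_biUnion_le_card_mul Finset.univ F _ hF)
  intro T hT
  rw [Finset.mem_filter, Finset.mem_powersetCard] at hT
  obtain ⟨⟨hTH, hT3⟩, h1, h2⟩ := hT
  obtain ⟨e, f, g, hef, heg, hfg, rfl⟩ := Finset.card_eq_three.mp hT3
  have me : e ∈ H := hTH (by simp)
  have mf : f ∈ H := hTH (by simp)
  have mg : g ∈ H := hTH (by simp)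
  obtain ⟨a, ha⟩ := Finset.card_pos.mp
    (show 0 < (e ∩ f).card by rw [h1 e (by simp) f (by simp) hef]; exact one_pos)
  obtain ⟨b, hb⟩ := Finset.card_pos.mp
    (show 0 < (f ∩ g).card by rw [h1 f (by simp) g (by simp) hfg]; exact one_pos)
  obtain ⟨c, hc⟩ := Finset.card_pos.mp
    (show 0 < (e ∩ g).card by rw [h1 e (by simp) g (by simp) heg]; exact one_pos)
  have h0 := h2 e (by simp) f (by simp) g (by simp) hef hfg heg
  have hno : ∀ x, x ∈ e → x ∈ f → x ∈ g → False := by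
    intro x he hf hg
    have : x ∈ e ∩ f ∩ g := by simp [he, hf, hg]
    rw [h0] at this
    simp at this
  rw [Finset.mem_inter] at ha hb hc
  obtain ⟨p, hp⟩ := tri_exists k H e me (hH e me) a c ha.1 hc.1
    (fun h => hno a ha.1 ha.2 (h ▸ hc.2))
  obtain ⟨q, hq⟩ := tri_exists k H f mf (hH f mf) a b ha.2 hb.1
    (fun h => hno a ha.1 ha.2 (h ▸ hb.2))
  obtain ⟨s, hs⟩ := tri_exists k H g mg (hH g mg) b c hb.2 hc.2
    (fun h => hno b (h ▸ hc.1) hb.1 hb.2)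
  rw [Finset.mem_biUnion]
  refine ⟨((a, b, c), p, q, s), Finset.mem_univ _, ?_⟩
  refine Finset.mem_image.mpr ⟨(e, f, g), ?_, ?_⟩
  · simp only [P, Finset.mem_product]
    exact ⟨hp, hq, hs⟩
  · simp
end
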